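/- arXiv:1209.2181 — 3 statements merged into one kernel-verified Lean document; each statement's English description precedes it below -/
import Mathlib

section
/- Let Γ↷(B,ν) be a nonsingular Borel action of a countable group on a standard probability space. Let α : Γ×B → (0,∞) be a Borel map satisfying α(g₂,g₁b)·α(g₁,b) = α(g₂g₁,b) for all g₁,g₂ ∈ Γ and all b ∈ B, and such that for each g ∈ Γ, α(g,b) = (dν∘g/dν)(b) for ν-a.e. b. Let ω be a Borel probability measure on the set of ergodic Γ-quasi-invariant Borel probability measures on B such that ν = ∫ η dω(η), and for ω-a.e. η and every g ∈ Γ, α(g,b) = (dη∘g/dη)(b) for η-a.e. b. Then an element t ∈ [0,+∞] lies in the ratio set RS(Γ↷(B,ν)) if and only if t lies in the ratio set RS(Γ↷(B,η)) for ω-almost every η. -/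
/-! Throughout, the Radon–Nikodym derivatives are replaced by the everywhere defined cocycle `α`:
membership of `t` in the ratio set of `η` says that every set of positive `η`-measure has returns
(under some `g ≠ 1`) with cocycle value in every prescribed neighbourhood `N` of `t` (`Returns`).

Returns for almost every component give returns for `ν`: if `A` has no returns in `N` for `ν`, then
each of the countably many sets `A ∩ g⁻¹A ∩ {α_g ∈ N}` is null for almost every component
(`returns_of_ae`).

For the converse, suppose first that `0 < t < ∞`, so that `N ⊆ [c, C]` with `c > 0`. In each set `A`
of a countable generating algebra, choose greedily a maximal partial injection built from group
elements with cocycle values in `N`. What it leaves uncovered has no returns, hence is `ν`-null, and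
so is null for almost every component `η`. If a set `K` with `η K > 0` had no returns in `N`,
approximate it in `η`-measure by `A` in the algebra: almost every point of the domain of the
injection starts or ends in `A \ K`, so the domain and the range are small compared with `K`, while
they cover almost all of `A` (`ae_returns`).

For `t = 0` and `t = ∞` the distortion is unbounded and a different argument is needed. Either
point lies in the ratio set iff no set of positive measure has a bounded cocycle (`HasBddSet`), and
this is equivalent to the Maharam extension on `B × ℝ` having no invariant set of positive finite
measure, for the measure `η × dr` (`exists_mInv_of_hasBddSet`, `hasBddSet_of_mInv`). Consider the
closed subspace of those `f` in `L²(ν × dr)` which, for almost every component `η`, integrate to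
zero over every invariant set of finite `η × dr`-measure (`isClosed_vanishing`). It contains all
coboundaries `1_S α_g - 1_{gS}`. A function orthogonal to it is therefore invariant, and its
superlevel sets are invariant of finite measure; if `ν` has no set of bounded cocycle the function
vanishes, and the subspace is everything. In particular it contains `1_{B × [0,1]}`, while a
component with a set of bounded cocycle has an invariant set of finite measure meeting `B × [0,1]` in
positive measure (`ae_not_hasBddSet`). A single null set of components thus suffices for the
uncountably many invariant sets. Ergodicity of the components plays no role.
-/

open MeasureTheory Filter Set
open scoped ENNReal

/-- The Radon–Nikodym derivative `dν∘g/dν` of the action `a`, where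
`(ν∘g)(A) = ν(g • A)`, i.e. the derivative of the pushforward of `ν` by `a g⁻¹`. -/
noncomputable def rnD {Γ B : Type} [Group Γ] [MeasurableSpace B] (a : Γ → B → B)
    (ν : Measure B) (g : Γ) : B → ℝ≥0∞ :=
  (ν.map (a g⁻¹)).rnDeriv ν

/-- A nonsingular Borel action of `Γ` on `(B,ν)`. -/
def IsNonsingularAction {Γ B : Type} [Group Γ] [MeasurableSpace B] (a : Γ → B → B)
    (ν : Measure B) : Prop :=
  (∀ g : Γ, Measurable (a g)) ∧ (∀ b : B, a 1 b = b) ∧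
    (∀ (g h : Γ) (b : B), a (g * h) b = a g (a h b)) ∧
    (∀ g : Γ, ν.map (a g) ≪ ν ∧ ν ≪ ν.map (a g))

/-- The ratio set `RS(Γ ↷ (B,ν)) ⊆ [0,∞]`. -/
def ratioSet {Γ B : Type} [Group Γ] [MeasurableSpace B] (a : Γ → B → B) (ν : Measure B) :
    Set ℝ≥0∞ :=
  {t | (t ≠ ∞ ∧
      ∀ A : Set B, MeasurableSet A → 0 < ν A → ∀ ε : ℝ, 0 < ε →
        ∃ A' : Set B, A' ⊆ A ∧ MeasurableSet A' ∧ 0 < ν A' ∧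
          ∃ g : Γ, g ≠ 1 ∧ (∀ b ∈ A', a g b ∈ A) ∧
            (∀ᵐ b ∂ν, b ∈ A' → rnD a ν g b ≠ ∞ ∧ |(rnD a ν g b).toReal - t.toReal| < ε)) ∨
    (t = ∞ ∧
      ∀ A : Set B, MeasurableSet A → 0 < ν A → ∀ n : ℝ, 0 < n →
        ∃ A' : Set B, A' ⊆ A ∧ MeasurableSet A' ∧ 0 < ν A' ∧
          ∃ g : Γ, g ≠ 1 ∧ (∀ b ∈ A', a g b ∈ A) ∧
            (∀ᵐ b ∂ν, b ∈ A' → ENNReal.ofReal n < rnD a ν g b))}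


/-! ### Returns and the ratio set -/

/-- `α` is a positive Borel multiplicative cocycle over the Borel action `a`. -/
structure IsBorelCocycle {Γ B : Type} [Group Γ] [MeasurableSpace B] (a : Γ → B → B)
    (α : Γ → B → ℝ) : Prop where
  meas_act : ∀ g, Measurable (a g)
  act_one : ∀ b, a 1 b = b
  act_mul : ∀ g h b, a (g * h) b = a g (a h b)
  pos : ∀ g b, 0 < α g b
  meas : ∀ g, Measurable (α g)
  coc : ∀ g₁ g₂ b, α g₂ (a g₁ b) * α g₁ b = α (g₂ * g₁) b

/-- `η` is a probability measure whose Radon–Nikodym cocycle is `α`, expressed as the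
change-of-variables formula `∫ h(gb) α(g,b) dη(b) = ∫ h dη`. -/
structure HasCocycle {Γ B : Type} [MeasurableSpace B] (a : Γ → B → B)
    (α : Γ → B → ℝ) (η : Measure B) : Prop where
  prob : IsProbabilityMeasure η
  trans : ∀ g (h : B → ℝ≥0∞), Measurable h →
    ∫⁻ b, ENNReal.ofReal (α g b) * h (a g b) ∂η = ∫⁻ b, h b ∂η

/-- Every set of positive measure contains a positive-measure set of points that some
`g ≠ 1` brings back to it with cocycle value in `N`. -/
def Returns {Γ B : Type} [Group Γ] [MeasurableSpace B] (a : Γ → B → B)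
    (α : Γ → B → ℝ) (η : Measure B) (N : Set ℝ) : Prop :=
  ∀ A : Set B, MeasurableSet A → 0 < η A →
    ∃ g : Γ, g ≠ 1 ∧ 0 < η (A ∩ a g ⁻¹' A ∩ α g ⁻¹' N)

section Basic

variable {Γ B : Type} [Group Γ] [MeasurableSpace B] {a : Γ → B → B} {α : Γ → B → ℝ}

lemma IsBorelCocycle.one (H : IsBorelCocycle a α) (b : B) : α 1 b = 1 := by
  have h := H.coc 1 1 b
  rw [H.act_one, mul_one] at h
  exact (mul_eq_right₀ (H.pos 1 b).ne').1 h

lemma IsBorelCocycle.act_inv (H : IsBorelCocycle a α) (g : Γ) (b : B) : a g⁻¹ (a g b) = b := by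
  rw [← H.act_mul, inv_mul_cancel, H.act_one]

lemma IsBorelCocycle.act_inv' (H : IsBorelCocycle a α) (g : Γ) (b : B) : a g (a g⁻¹ b) = b := by
  rw [← H.act_mul, mul_inv_cancel, H.act_one]

lemma IsBorelCocycle.inv (H : IsBorelCocycle a α) (g : Γ) (b : B) :
    α g⁻¹ (a g b) = (α g b)⁻¹ := by
  have h := H.coc g g⁻¹ b
  rw [inv_mul_cancel, H.one] at h
  exact eq_inv_of_mul_eq_one_left h

lemma hasCocycle_of_rnD (H : IsBorelCocycle a α) {η : Measure B} (hp : IsProbabilityMeasure η)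
    (hac : ∀ g : Γ, η.map (a g) ≪ η)
    (hrn : ∀ g : Γ, ∀ᵐ b ∂η, ENNReal.ofReal (α g b) = rnD a η g b) : HasCocycle a α η := by
  refine ⟨hp, fun g h hh => ?_⟩
  have : IsFiniteMeasure (η.map (a g⁻¹)) := inferInstance
  have h1 : η.withDensity (fun b => ENNReal.ofReal (α g b)) = η.map (a g⁻¹) := by
    rw [← Measure.withDensity_rnDeriv_eq _ _ (hac g⁻¹)]
    exact withDensity_congr_ae (hrn g)
  have hm := H.meas g
  have hm' : Measurable fun b => h (a g b) := hh.comp (H.meas_act g)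
  have h2 : ∫⁻ b, h (a g b) ∂(η.map (a g⁻¹)) = ∫⁻ b, h b ∂η := by
    rw [lintegral_map hm' (H.meas_act g⁻¹)]
    simp [H.act_inv']
  rw [← h2, ← h1, lintegral_withDensity_eq_lintegral_mul _ (by fun_prop) hm']
  rfl

lemma IsBorelCocycle.measurableSet_ret (H : IsBorelCocycle a α) {A : Set B} {N : Set ℝ}
    (hA : MeasurableSet A) (hN : MeasurableSet N) (g : Γ) :
    MeasurableSet (A ∩ a g ⁻¹' A ∩ α g ⁻¹' N) :=
  (hA.inter (H.meas_act g hA)).inter (H.meas g hN)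

lemma Returns.mono {η : Measure B} {N N' : Set ℝ} (h : Returns a α η N)
    (hN : N ⊆ N') : Returns a α η N' := fun A hA h0 => by
  obtain ⟨g, hg, h1⟩ := h A hA h0
  exact ⟨g, hg, h1.trans_le (measure_mono (by gcongr))⟩

lemma top_mem_ratioSet_iff (H : IsBorelCocycle a α) {η : Measure B}
    (hrn : ∀ g : Γ, ∀ᵐ b ∂η, ENNReal.ofReal (α g b) = rnD a η g b) :
    ∞ ∈ ratioSet a η ↔ ∀ n : ℝ, 0 < n → Returns a α η (Ioi n) := by
  simp only [ratioSet, mem_ofPred_eq, ne_eq, not_true_eq_false, false_and, true_and, false_or]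
  constructor
  · intro h n hn A hA h0
    obtain ⟨A', hs, hm, hpos, g, hg, hgA, hae⟩ := h A hA h0 n hn
    refine ⟨g, hg, hpos.trans_le (measure_mono_ae ?_)⟩
    filter_upwards [hae, hrn g] with b h1 h2 hb
    refine ⟨⟨hs hb, hgA b hb⟩, ?_⟩
    have h3 := h1 hb
    rw [← h2, ENNReal.ofReal_lt_ofReal_iff (H.pos g b)] at h3
    exact h3
  · intro h A hA h0 n hn
    obtain ⟨g, hg, hpos⟩ := h n hn A hA h0
    refine ⟨_, fun b hb => hb.1.1, H.measurableSet_ret hA measurableSet_Ioi g, hpos, g, hg,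
      fun b hb => hb.1.2, ?_⟩
    filter_upwards [hrn g] with b h2 hb
    rw [← h2, ENNReal.ofReal_lt_ofReal_iff (H.pos g b)]
    exact hb.2

lemma mem_ratioSet_iff (H : IsBorelCocycle a α) {η : Measure B}
    (hrn : ∀ g : Γ, ∀ᵐ b ∂η, ENNReal.ofReal (α g b) = rnD a η g b) {t : ℝ≥0∞} (ht : t ≠ ∞) :
    t ∈ ratioSet a η ↔ ∀ ε : ℝ, 0 < ε → Returns a α η (Metric.ball t.toReal ε) := by
  simp only [ratioSet, mem_ofPred_eq, ne_eq, ht, not_false_eq_true, false_and, true_and, or_false]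
  constructor
  · intro h n hn A hA h0
    obtain ⟨A', hs, hm, hpos, g, hg, hgA, hae⟩ := h A hA h0 n hn
    refine ⟨g, hg, hpos.trans_le (measure_mono_ae ?_)⟩
    filter_upwards [hae, hrn g] with b h1 h2 hb
    refine ⟨⟨hs hb, hgA b hb⟩, ?_⟩
    have h3 := (h1 hb).2
    rw [← h2, ENNReal.toReal_ofReal (H.pos g b).le] at h3
    exact h3
  · intro h A hA h0 n hn
    obtain ⟨g, hg, hpos⟩ := h n hn A hA h0
    refine ⟨_, fun b hb => hb.1.1, H.measurableSet_ret hA Metric.isOpen_ball.measurableSet g,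
      hpos, g, hg, fun b hb => hb.1.2, ?_⟩
    filter_upwards [hrn g] with b h2 hb
    rw [← h2, ENNReal.toReal_ofReal (H.pos g b).le]
    exact ⟨ENNReal.ofReal_ne_top, hb.2⟩

/-- Return properties pass from almost every component to the barycentre. -/
lemma returns_of_ae [Countable Γ] (H : IsBorelCocycle a α) {ν : Measure B} {ω : Measure (Measure B)}
    (hdecomp : ∀ s : Set B, MeasurableSet s → ν s = ∫⁻ η, η s ∂ω) {N : Set ℝ}
    (hN : MeasurableSet N) (h : ∀ᵐ η ∂ω, Returns a α η N) : Returns a α ν N := by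
  intro A hA h0
  by_contra! hc
  have h1 : ∀ g : Γ, g ≠ 1 → ∀ᵐ η ∂ω, η (A ∩ a g ⁻¹' A ∩ α g ⁻¹' N) = 0 := fun g hg => by
    have hS := H.measurableSet_ret hA hN g
    have := nonpos_iff_eq_zero.1 (hc g hg)
    rw [hdecomp _ hS, lintegral_eq_zero_iff (Measure.measurable_coe hS)] at this
    exact this
  have h2 : ∀ᵐ η ∂ω, η A = 0 := by
    filter_upwards [h, ae_all_iff.2 fun g => ae_all_iff.2 (h1 g)] with η h3 h4
    by_contra h5
    obtain ⟨g, hg, h6⟩ := h3 A hA (pos_iff_ne_zero.2 h5)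
    exact h6.ne' (h4 g hg)
  rw [hdecomp A hA, lintegral_congr_ae h2] at h0
  simp at h0

end Basic

/-! ### Ratios away from zero and infinity: greedy partial injections -/

section Greedy

variable {Γ B : Type} [Group Γ] [MeasurableSpace B] {a : Γ → B → B} {α : Γ → B → ℝ}

/-- Points of `A \ W` carried by `g ≠ 1` into `A \ W` with cocycle value in `N`. -/
def greedyStep (a : Γ → B → B) (α : Γ → B → ℝ) (A : Set B) (N : Set ℝ) (W : Set B) (g : Γ) :
    Set B :=
  {b | g ≠ 1 ∧ b ∈ A \ W ∧ a g b ∈ A \ W ∧ α g b ∈ N}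

/-- The part of `A` used up, as a source or as a target, by the first `n` group elements. -/
def greedyUsed (a : Γ → B → B) (α : Γ → B → ℝ) (A : Set B) (N : Set ℝ) (e : ℕ → Γ) : ℕ → Set B
  | 0 => ∅
  | n + 1 => greedyUsed a α A N e n ∪ greedyStep a α A N (greedyUsed a α A N e n) (e n) ∪
      a (e n)⁻¹ ⁻¹' greedyStep a α A N (greedyUsed a α A N e n) (e n)

lemma measurableSet_greedyStep (H : IsBorelCocycle a α) {A W : Set B} {N : Set ℝ}
    (hA : MeasurableSet A) (hN : MeasurableSet N) (hW : MeasurableSet W) (g : Γ) :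
    MeasurableSet (greedyStep a α A N W g) :=
  (MeasurableSet.const _).inter ((hA.diff hW).inter
    ((H.meas_act g (hA.diff hW)).inter (H.meas g hN)))

/-- A maximal partial injection of `A` into itself, made of pieces `D n` on which it is the
action of `e n ≠ 1` with cocycle value in `N`; by maximality, no point outside both its domain and
its range can be moved within that leftover set with cocycle value in `N`. -/
lemma exists_greedy (H : IsBorelCocycle a α) {A : Set B} {N : Set ℝ}
    (hA : MeasurableSet A) (hN : MeasurableSet N) (e : ℕ → Γ) :
    ∃ D : ℕ → Set B, (∀ n, MeasurableSet (D n)) ∧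
      Pairwise (fun i j => Disjoint (D i) (D j)) ∧
      Pairwise (fun i j => Disjoint (a (e i)⁻¹ ⁻¹' D i) (a (e j)⁻¹ ⁻¹' D j)) ∧
      (∀ n, ∀ b ∈ D n, e n ≠ 1 ∧ b ∈ A ∧ a (e n) b ∈ A ∧ α (e n) b ∈ N) ∧
      (∀ n, e n ≠ 1 →
        ∀ b ∈ A \ ((⋃ i, D i) ∪ ⋃ i, a (e i)⁻¹ ⁻¹' D i),
          a (e n) b ∈ A \ ((⋃ i, D i) ∪ ⋃ i, a (e i)⁻¹ ⁻¹' D i) → α (e n) b ∉ N) := by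
  set W := greedyUsed a α A N e with hWdef
  set D : ℕ → Set B := fun n => greedyStep a α A N (W n) (e n) with hD
  have hWs : ∀ n, W (n + 1) = W n ∪ D n ∪ a (e n)⁻¹ ⁻¹' D n := fun n => rfl
  have hWm : ∀ n, MeasurableSet (W n) := by
    intro n
    induction n with
    | zero => exact MeasurableSet.empty
    | succ n ih =>
      have := measurableSet_greedyStep H hA hN ih (e n)
      rw [hWs]
      exact (ih.union this).union (H.meas_act _ this)
  have hmono : Monotone W := monotone_nat_of_le_succ fun n => by
    rw [hWs, union_assoc]; exact subset_union_left
  have hDW : ∀ {i j}, i < j → D i ⊆ W j := fun {i j} hij =>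
    Subset.trans (by rw [hWs]; exact fun b hb => Or.inl (Or.inr hb)) (hmono hij)
  have hIW : ∀ {i j}, i < j → a (e i)⁻¹ ⁻¹' D i ⊆ W j := fun {i j} hij =>
    Subset.trans (by rw [hWs]; exact fun b hb => Or.inr hb) (hmono hij)
  have hIA : ∀ j, ∀ b ∈ a (e j)⁻¹ ⁻¹' D j, b ∉ W j := fun j b hb => by
    have := hb.2.2.1.2
    rwa [H.act_inv'] at this
  refine ⟨D, fun n => measurableSet_greedyStep H hA hN (hWm n) _, ?_, ?_, ?_, ?_⟩
  · refine (pairwise_disjoint_on D).2 fun i j hij => Set.disjoint_left.2 fun b hi hj => ?_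
    exact hj.2.1.2 (hDW hij hi)
  · refine (pairwise_disjoint_on fun i => a (e i)⁻¹ ⁻¹' D i).2 fun i j hij =>
      Set.disjoint_left.2 fun b hi hj => ?_
    exact hIA j b hj (hIW hij hi)
  · exact fun n b hb => ⟨hb.1, hb.2.1.1, hb.2.2.1.1, hb.2.2.2⟩
  · have hWsub : ∀ n, W n ⊆ (⋃ i, D i) ∪ ⋃ i, a (e i)⁻¹ ⁻¹' D i := by
      intro n
      induction n with
      | zero => exact empty_subset _
      | succ n ih =>
        rw [hWs]
        exact union_subset (union_subset ih fun b hb => Or.inl (mem_iUnion.2 ⟨n, hb⟩))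
          fun b hb => Or.inr (mem_iUnion.2 ⟨n, hb⟩)
    intro n hn b hb hgb hα
    refine hb.2 (Or.inl (mem_iUnion.2 ⟨n, hn, ⟨hb.1, fun h => hb.2 (hWsub n h)⟩,
      ⟨hgb.1, fun h => hgb.2 (hWsub n h)⟩, hα⟩))

lemma HasCocycle.measure_image (H : IsBorelCocycle a α) {η : Measure B} (hη : HasCocycle a α η)
    {S : Set B} (hS : MeasurableSet S) (g : Γ) :
    η (a g⁻¹ ⁻¹' S) = ∫⁻ b in S, ENNReal.ofReal (α g b) ∂η := by
  have hS' := H.meas_act g⁻¹ hS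
  have h := hη.trans g ((a g⁻¹ ⁻¹' S).indicator 1) (measurable_one.indicator hS')
  rw [lintegral_indicator_one hS'] at h
  rw [← h, ← lintegral_indicator hS]
  refine lintegral_congr fun b => ?_
  by_cases hb : b ∈ S
  · have : a g b ∈ a g⁻¹ ⁻¹' S := by simpa [H.act_inv] using hb
    simp [hb, indicator_of_mem this]
  · have : a g b ∉ a g⁻¹ ⁻¹' S := by simpa [H.act_inv] using hb
    simp [hb, indicator_of_notMem this]

/-- If `K` has no returns with cocycle value in `N ⊆ [c, C]`, then a set `A` almost covered by the
domain and range of a partial injection with cocycle in `N` cannot be well approximated by `K`: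
almost every point of the domain lies in `A \ K` or is sent there. -/
lemma greedy_bound (H : IsBorelCocycle a α) {η : Measure B} (hη : HasCocycle a α η)
    {A K : Set B} {N : Set ℝ} (hA : MeasurableSet A) (hK : MeasurableSet K)
    {c C : ℝ} (hN : N ⊆ Icc c C) (e : ℕ → Γ) {D : ℕ → Set B} (hDm : ∀ n, MeasurableSet (D n))
    (hD : Pairwise (fun i j => Disjoint (D i) (D j)))
    (hI : Pairwise (fun i j => Disjoint (a (e i)⁻¹ ⁻¹' D i) (a (e j)⁻¹ ⁻¹' D j)))
    (hDA : ∀ n, ∀ b ∈ D n, e n ≠ 1 ∧ b ∈ A ∧ a (e n) b ∈ A ∧ α (e n) b ∈ N)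
    (hZ : η (A \ ((⋃ i, D i) ∪ ⋃ i, a (e i)⁻¹ ⁻¹' D i)) = 0)
    (hret : ∀ g : Γ, g ≠ 1 → η (K ∩ a g ⁻¹' K ∩ α g ⁻¹' N) = 0) :
    ENNReal.ofReal c * η A ≤
      (1 + ENNReal.ofReal C) * ((ENNReal.ofReal c + 1) * η (A \ K)) := by
  set c' := ENNReal.ofReal c
  set C' := ENNReal.ofReal C
  set E := A \ K with hE
  have hEm : MeasurableSet E := hA.diff hK
  have hIm : ∀ n, MeasurableSet (a (e n)⁻¹ ⁻¹' D n) := fun n => H.meas_act _ (hDm n)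
  have h1 : ∀ n, η (a (e n)⁻¹ ⁻¹' D n) ≤ C' * η (D n) := fun n => by
    rw [hη.measure_image H (hDm n), ← setLIntegral_const]
    exact setLIntegral_mono' (hDm n) fun b hb => ENNReal.ofReal_le_ofReal (hN (hDA n b hb).2.2.2).2
  have h2 : ∀ n, c' * η (D n ∩ a (e n) ⁻¹' E) ≤ η (a (e n)⁻¹ ⁻¹' D n ∩ E) := fun n => by
    have hm := (hDm n).inter (H.meas_act (e n) hEm)
    have : a (e n)⁻¹ ⁻¹' D n ∩ E = a (e n)⁻¹ ⁻¹' (D n ∩ a (e n) ⁻¹' E) := by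
      ext b
      simp [H.act_inv']
    rw [this, hη.measure_image H hm, ← setLIntegral_const]
    exact setLIntegral_mono' hm fun b hb => ENNReal.ofReal_le_ofReal (hN (hDA n b hb.1).2.2.2).1
  have h3 : ∀ n, η (D n) ≤ η (D n ∩ E) + η (D n ∩ a (e n) ⁻¹' E) := fun n => by
    by_cases hn : e n = 1
    · have : D n = ∅ := eq_empty_of_forall_notMem fun b hb => (hDA n b hb).1 hn
      simp [this]
    · calc η (D n) ≤ η ((D n ∩ E) ∪ (D n ∩ a (e n) ⁻¹' E) ∪
              (K ∩ a (e n) ⁻¹' K ∩ α (e n) ⁻¹' N)) := by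
            refine measure_mono fun b hb => ?_
            obtain ⟨-, x1, x2, x3⟩ := hDA n b hb
            by_cases y1 : b ∈ K
            · by_cases y2 : a (e n) b ∈ K
              · exact Or.inr ⟨⟨y1, y2⟩, x3⟩
              · exact Or.inl (Or.inr ⟨hb, x2, y2⟩)
            · exact Or.inl (Or.inl ⟨hb, x1, y1⟩)
        _ ≤ _ := (measure_union_le _ _).trans (by
            rw [hret _ hn, add_zero]; exact measure_union_le _ _)
  have h4 : ∑' n, η (D n ∩ E) ≤ η E := by
    rw [← measure_iUnion (fun i j hij => (hD hij).mono inter_subset_left inter_subset_left)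
      fun n => (hDm n).inter hEm]
    exact measure_mono (iUnion_subset fun n => inter_subset_right)
  have h5 : ∑' n, η (a (e n)⁻¹ ⁻¹' D n ∩ E) ≤ η E := by
    rw [← measure_iUnion (fun i j hij => (hI hij).mono inter_subset_left inter_subset_left)
      fun n => (hIm n).inter hEm]
    exact measure_mono (iUnion_subset fun n => inter_subset_right)
  have h6 : c' * ∑' n, η (D n) ≤ (c' + 1) * η E := by
    rw [← ENNReal.tsum_mul_left]
    calc ∑' n, c' * η (D n) ≤ ∑' n, (c' * η (D n ∩ E) + η (a (e n)⁻¹ ⁻¹' D n ∩ E)) := by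
          refine ENNReal.tsum_le_tsum fun n => (mul_le_mul_right (h3 n) c').trans ?_
          rw [mul_add]
          gcongr
          exact h2 n
      _ = c' * ∑' n, η (D n ∩ E) + ∑' n, η (a (e n)⁻¹ ⁻¹' D n ∩ E) := by
          rw [ENNReal.tsum_add, ENNReal.tsum_mul_left]
      _ ≤ c' * η E + η E := by gcongr
      _ = _ := by ring
  have h7 : η A ≤ (1 + C') * ∑' n, η (D n) := by
    calc η A ≤ η ((A \ ((⋃ i, D i) ∪ ⋃ i, a (e i)⁻¹ ⁻¹' D i)) ∪
            ((⋃ i, D i) ∪ ⋃ i, a (e i)⁻¹ ⁻¹' D i)) :=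
          measure_mono (by rw [sdiff_union_self]; exact subset_union_left)
      _ ≤ 0 + (∑' n, η (D n) + ∑' n, η (a (e n)⁻¹ ⁻¹' D n)) := by
          refine (measure_union_le _ _).trans (add_le_add hZ.le ((measure_union_le _ _).trans ?_))
          gcongr <;> exact measure_iUnion_le _
      _ ≤ ∑' n, η (D n) + ∑' n, C' * η (D n) := by
          rw [zero_add]
          gcongr with n
          exact h1 n
      _ = _ := by rw [ENNReal.tsum_mul_left]; ring
  calc c' * η A ≤ c' * ((1 + C') * ∑' n, η (D n)) := by gcongr
    _ = (1 + C') * (c' * ∑' n, η (D n)) := by ring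
    _ ≤ _ := by gcongr

/-- For `N` bounded away from `0` and `∞`, return properties pass from the barycentre to almost
every component. -/
lemma ae_returns [Countable Γ] [MeasurableSpace.CountablyGenerated B]
    (H : IsBorelCocycle a α) {ν : Measure B}
    {ω : Measure (Measure B)} (hdecomp : ∀ s : Set B, MeasurableSet s → ν s = ∫⁻ η, η s ∂ω)
    (hη : ∀ᵐ η ∂ω, HasCocycle a α η) {N : Set ℝ} (hNm : MeasurableSet N)
    {c C : ℝ} (hc : 0 < c) (hC : 0 ≤ C) (hN : N ⊆ Icc c C) (h : Returns a α ν N) :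
    ∀ᵐ η ∂ω, Returns a α η N := by
  obtain ⟨e, he⟩ := exists_surjective_nat Γ
  set 𝒜 := generateSetAlgebra (MeasurableSpace.countableGeneratingSet B) with h𝒜
  have hcount : 𝒜.Countable :=
    countable_generateSetAlgebra MeasurableSpace.countable_countableGeneratingSet
  have hgen : ‹MeasurableSpace B› = MeasurableSpace.generateFrom 𝒜 := by
    rw [generateFrom_generateSetAlgebra_eq, MeasurableSpace.generateFrom_countableGeneratingSet]
  have h𝒜m : ∀ A ∈ 𝒜, MeasurableSet A := fun A hA => by
    rw [hgen]; exact MeasurableSpace.measurableSet_generateFrom hA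
  have key : ∀ A : 𝒜, ∃ D : ℕ → Set B, (∀ n, MeasurableSet (D n)) ∧
      Pairwise (fun i j => Disjoint (D i) (D j)) ∧
      Pairwise (fun i j => Disjoint (a (e i)⁻¹ ⁻¹' D i) (a (e j)⁻¹ ⁻¹' D j)) ∧
      (∀ n, ∀ b ∈ D n, e n ≠ 1 ∧ b ∈ A.1 ∧ a (e n) b ∈ A.1 ∧ α (e n) b ∈ N) ∧
      ∀ᵐ η ∂ω, η (A.1 \ ((⋃ i, D i) ∪ ⋃ i, a (e i)⁻¹ ⁻¹' D i)) = 0 := by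
    rintro ⟨A, hA⟩
    have hAm := h𝒜m A hA
    obtain ⟨D, h1, h2, h3, h4, h5⟩ := exists_greedy H hAm hNm e
    refine ⟨D, h1, h2, h3, h4, ?_⟩
    set Z := A \ ((⋃ i, D i) ∪ ⋃ i, a (e i)⁻¹ ⁻¹' D i) with hZ
    have hZm : MeasurableSet Z := hAm.diff ((MeasurableSet.iUnion h1).union
      (MeasurableSet.iUnion fun i => H.meas_act _ (h1 i)))
    have hν : ν Z = 0 := by
      by_contra hne
      obtain ⟨g, hg, hpos⟩ := h Z hZm (pos_iff_ne_zero.2 hne)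
      obtain ⟨n, rfl⟩ := he g
      obtain ⟨b, ⟨hb1, hb2⟩, hb3⟩ := nonempty_of_measure_ne_zero hpos.ne'
      exact h5 n hg b hb1 hb2 hb3
    rw [hdecomp Z hZm, lintegral_eq_zero_iff (Measure.measurable_coe hZm)] at hν
    exact hν
  choose D hD1 hD2 hD3 hD4 hD5 using key
  have : Countable 𝒜 := hcount.to_subtype
  filter_upwards [hη, ae_all_iff.2 hD5] with η hη hZ K hK hpos
  by_contra! hret
  have hp := hη.prob
  have hdense : η.MeasureDense 𝒜 :=
    Measure.MeasureDense.of_generateFrom_isSetAlgebra_finite η isSetAlgebra_generateSetAlgebra hgen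
  set x := (η K).toReal with hx
  have hxK : η K = ENNReal.ofReal x := (ENNReal.ofReal_toReal (measure_ne_top _ _)).symm
  have hx0 : 0 < x := ENNReal.toReal_pos hpos.ne' (measure_ne_top _ _)
  set M := c + (1 + C) * (c + 1) with hM
  have hM0 : 0 < M := by positivity
  obtain ⟨A, hA, hAK⟩ := hdense.approx K hK (measure_ne_top _ _) (c * x / (2 * M)) (by positivity)
  set δ := c * x / (2 * M) with hδ
  have hδ0 : 0 < δ := by positivity
  have hE : η (A \ K) ≤ ENNReal.ofReal δ :=
    (measure_mono (by rw [Set.symmDiff_def]; exact subset_union_right)).trans hAK.le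
  have hE' : η (K \ A) ≤ ENNReal.ofReal δ :=
    (measure_mono (by rw [Set.symmDiff_def]; exact subset_union_left)).trans hAK.le
  have hKA : η K ≤ η A + ENNReal.ofReal δ :=
    (measure_mono (by rw [union_sdiff_self]; exact subset_union_right)).trans
      ((measure_union_le A (K \ A)).trans (by gcongr))
  have hb := greedy_bound H hη (h𝒜m A hA) hK hN e (hD1 ⟨A, hA⟩) (hD2 ⟨A, hA⟩) (hD3 ⟨A, hA⟩)
    (hD4 ⟨A, hA⟩) (hZ ⟨A, hA⟩) (fun g hg => nonpos_iff_eq_zero.1 (hret g hg))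
  have hfin : ENNReal.ofReal (c * x) ≤ ENNReal.ofReal (M * δ) := by
    calc ENNReal.ofReal (c * x) = ENNReal.ofReal c * η K := by rw [ENNReal.ofReal_mul hc.le, hxK]
      _ ≤ ENNReal.ofReal c * η A + ENNReal.ofReal c * ENNReal.ofReal δ := by
          rw [← mul_add]; gcongr
      _ ≤ (1 + ENNReal.ofReal C) * ((ENNReal.ofReal c + 1) * ENNReal.ofReal δ) +
          ENNReal.ofReal c * ENNReal.ofReal δ := by
          refine add_le_add (hb.trans ?_) le_rfl
          gcongr
      _ = ENNReal.ofReal (M * δ) := by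
          rw [← ENNReal.ofReal_one, ← ENNReal.ofReal_add (by positivity) hC,
            ← ENNReal.ofReal_add hc.le (by positivity), ← ENNReal.ofReal_mul (by positivity),
            ← ENNReal.ofReal_mul (by positivity), ← ENNReal.ofReal_mul hc.le,
            ← ENNReal.ofReal_add (by positivity) (by positivity)]
          congr 1
          ring
  have hMδ : M * δ = c * x / 2 := by rw [hδ]; field_simp
  rw [ENNReal.ofReal_le_ofReal_iff (by positivity), hMδ] at hfin
  nlinarith [mul_pos hc hx0]

end Greedy

/-! ### Sets of bounded cocycle and the Maharam extension -/

section Maharam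

variable {Γ B : Type} [Group Γ] [MeasurableSpace B] {a : Γ → B → B} {α : Γ → B → ℝ}

/-- A set of positive measure on which the cocycle of the returning orbit points is uniformly
bounded. When `α` is the Radon–Nikodym cocycle of `η`, no such set exists iff `0` lies in the ratio
set, iff `∞` does. -/
def HasBddSet (a : Γ → B → B) (α : Γ → B → ℝ) (η : Measure B) : Prop :=
  ∃ A : Set B, MeasurableSet A ∧ 0 < η A ∧
    ∃ L : ℝ, ∀ b ∈ A, ∀ g : Γ, a g b ∈ A → |Real.log (α g b)| ≤ L

/-- If a set `A` had no returns with cocycle value in `N`, then removing a null set from `A` would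
leave a set on which neither the cocycle nor its inverse takes a value in `N`. -/
lemma returns_of_not_hasBddSet [Countable Γ] (H : IsBorelCocycle a α) {η : Measure B}
    {N : Set ℝ} (hNm : MeasurableSet N) {L : ℝ}
    (hN : ∀ x : ℝ, 0 < x → x ∉ N → x⁻¹ ∉ N → |Real.log x| ≤ L)
    (h : ¬ HasBddSet a α η) : Returns a α η N := by
  intro A hA hpos
  by_contra! hret
  set Z := ⋃ g : {g : Γ // g ≠ 1}, A ∩ a g ⁻¹' A ∩ α g ⁻¹' N with hZ
  have hZm : MeasurableSet Z := MeasurableSet.iUnion fun g => H.measurableSet_ret hA hNm _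
  have hZ0 : η Z = 0 := measure_iUnion_null fun g => nonpos_iff_eq_zero.1 (hret g.1 g.2)
  refine h ⟨A \ Z, hA.diff hZm, by rwa [measure_sdiff_null hZ0], max L 0, fun b hb g hgb => ?_⟩
  by_cases hg : g = 1
  · simp [hg, H.one]
  refine (hN _ (H.pos g b) (fun hn => ?_) (fun hn => ?_)).trans (le_max_left _ _)
  · exact hb.2 (mem_iUnion.2 ⟨⟨g, hg⟩, ⟨hb.1, hgb.1⟩, hn⟩)
  · refine hgb.2 (mem_iUnion.2 ⟨⟨g⁻¹, inv_ne_one.2 hg⟩, ⟨hgb.1, ?_⟩, ?_⟩)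
    · simpa [H.act_inv] using hb.1
    · simpa [H.inv] using hn

lemma not_hasBddSet_of_returns {η : Measure B} (N : ℝ → Set ℝ)
    (hN : ∀ L x : ℝ, x ∈ N L → 0 < x → L < |Real.log x|) (hpos : ∀ g b, 0 < α g b)
    (h : ∀ L, Returns a α η (N L)) : ¬ HasBddSet a α η := by
  rintro ⟨A, hA, h0, L, hL⟩
  obtain ⟨g, -, hg⟩ := h L A hA h0
  obtain ⟨b, ⟨hb1, hb2⟩, hb3⟩ := nonempty_of_measure_ne_zero hg.ne'
  exact (hN L _ hb3 (hpos g b)).not_ge (hL b hb1 g hb2)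

/-- The Maharam extension: the action of `Γ` on `B × ℝ`, translating the second coordinate by minus
the logarithm of the cocycle. It is considered with `η × dr`, which it does not preserve (the
invariant measure is `η × exp r dr`), but which has finite mass over bounded windows; the
Radon–Nikodym cocycle of this action is `α(g,b)`. -/
noncomputable def maharam (a : Γ → B → B) (α : Γ → B → ℝ) (g : Γ) (x : B × ℝ) : B × ℝ :=
  (a g x.1, x.2 - Real.log (α g x.1))

/-- Invariance of a set under the Maharam extension. -/
def MInv (a : Γ → B → B) (α : Γ → B → ℝ) (S : Set (B × ℝ)) : Prop :=
  ∀ g x, maharam a α g x ∈ S ↔ x ∈ S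

lemma measurable_maharam (H : IsBorelCocycle a α) (g : Γ) : Measurable (maharam a α g) := by
  have h1 := H.meas_act g
  have h2 := H.meas g
  unfold maharam
  fun_prop

lemma maharam_one (H : IsBorelCocycle a α) (x : B × ℝ) : maharam a α 1 x = x := by
  simp [maharam, H.act_one, H.one]

lemma maharam_mul (H : IsBorelCocycle a α) (g h : Γ) (x : B × ℝ) :
    maharam a α (g * h) x = maharam a α g (maharam a α h x) := by
  simp only [maharam, H.act_mul, ← H.coc h g]
  rw [Real.log_mul (H.pos _ _).ne' (H.pos _ _).ne', sub_sub, add_comm]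

lemma maharam_inv (H : IsBorelCocycle a α) (g : Γ) (x : B × ℝ) :
    maharam a α g⁻¹ (maharam a α g x) = x := by
  rw [← maharam_mul H, inv_mul_cancel, maharam_one H]

lemma maharam_inv' (H : IsBorelCocycle a α) (g : Γ) (x : B × ℝ) :
    maharam a α g (maharam a α g⁻¹ x) = x := by
  rw [← maharam_mul H, mul_inv_cancel, maharam_one H]

lemma maharam_lintegral (H : IsBorelCocycle a α) {η : Measure B} (hη : HasCocycle a α η) (g : Γ)
    {h : B × ℝ → ℝ≥0∞} (hh : Measurable h) :
    ∫⁻ x, ENNReal.ofReal (α g x.1) * h (maharam a α g x) ∂(η.prod volume) =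
      ∫⁻ x, h x ∂(η.prod volume) := by
  have hα := H.meas g
  have hm : Measurable fun x => h (maharam a α g x) := hh.comp (measurable_maharam H g)
  have hH : Measurable fun b => ∫⁻ r, h (b, r) := hh.lintegral_prod_right'
  have hl : AEMeasurable (fun x : B × ℝ => ENNReal.ofReal (α g x.1) * h (maharam a α g x))
      (η.prod volume) :=
    ((hα.comp measurable_fst).ennreal_ofReal.mul hm).aemeasurable
  rw [lintegral_prod _ hl, lintegral_prod _ hh.aemeasurable, ← hη.trans g _ hH]
  refine lintegral_congr fun b => ?_
  have hm2 : Measurable fun r : ℝ => h (maharam a α g (b, r)) := hm.comp measurable_prodMk_left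
  refine (lintegral_const_mul (ENNReal.ofReal (α g b)) hm2).trans ?_
  congr 1
  exact lintegral_sub_right_eq_self (fun r => h (a g b, r)) (Real.log (α g b))

lemma maharam_map (H : IsBorelCocycle a α) {η : Measure B} (hη : HasCocycle a α η) (g : Γ) :
    (((η.prod volume).withDensity fun x => ENNReal.ofReal (α g x.1)).map (maharam a α g)) =
      η.prod volume := by
  have hα := H.meas g
  have hm := measurable_maharam H g
  ext s hs
  have := maharam_lintegral H hη g (measurable_one.indicator hs)
  rw [lintegral_indicator_one hs] at this
  rw [← this, Measure.map_apply hm hs, withDensity_apply _ (hm hs), ← lintegral_indicator (hm hs)]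
  refine lintegral_congr fun x => ?_
  by_cases hx : maharam a α g x ∈ s
  · simp [hx]
  · simp [hx]

lemma maharam_integral (H : IsBorelCocycle a α) {η : Measure B} (hη : HasCocycle a α η) (g : Γ)
    {h : B × ℝ → ℝ} (hh : StronglyMeasurable h) :
    ∫ x, α g x.1 * h (maharam a α g x) ∂(η.prod volume) = ∫ x, h x ∂(η.prod volume) := by
  have hα := H.meas g
  have hm := measurable_maharam H g
  conv_rhs => rw [← maharam_map H hη g]
  rw [integral_map hm.aemeasurable hh.aestronglyMeasurable,
    integral_withDensity_eq_integral_toReal_smul (by fun_prop) (by simp)]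
  refine integral_congr_ae (.of_forall fun x => ?_)
  simp [ENNReal.toReal_ofReal (H.pos g x.1).le]

lemma maharam_integrable (H : IsBorelCocycle a α) {η : Measure B} (hη : HasCocycle a α η) (g : Γ)
    {h : B × ℝ → ℝ} (hh : StronglyMeasurable h) (hi : Integrable h (η.prod volume)) :
    Integrable (fun x => α g x.1 * h (maharam a α g x)) (η.prod volume) := by
  have hα := H.meas g
  have hm := measurable_maharam H g
  rw [← maharam_map H hη g, integrable_map_measure hh.aestronglyMeasurable hm.aemeasurable,
    integrable_withDensity_iff_integrable_smul' (by fun_prop) (by simp)] at hi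
  refine hi.congr (.of_forall fun x => ?_)
  simp [ENNReal.toReal_ofReal (H.pos g x.1).le]

/-- The saturation of `A × [0,1]`, for `A` with bounded cocycle: its fibres are contained in
intervals of bounded length. -/
lemma exists_mInv_of_hasBddSet [Countable Γ] (H : IsBorelCocycle a α) {η : Measure B}
    (hη : HasCocycle a α η) (h : HasBddSet a α η) :
    ∃ S : Set (B × ℝ), MeasurableSet S ∧ MInv a α S ∧ η.prod volume S < ∞ ∧
      0 < η.prod volume (S ∩ univ ×ˢ Icc 0 1) := by
  obtain ⟨A, hA, h0, L, hL⟩ := h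
  have hp := hη.prob
  set S : Set (B × ℝ) := ⋃ g : Γ, maharam a α g ⁻¹' (A ×ˢ Icc 0 1) with hS
  have hSm : MeasurableSet S :=
    MeasurableSet.iUnion fun g => measurable_maharam H g (hA.prod measurableSet_Icc)
  refine ⟨S, hSm, fun g x => ?_, ?_, ?_⟩
  · simp only [hS, mem_iUnion, mem_preimage]
    constructor
    · rintro ⟨k, hk⟩
      exact ⟨k * g, by rwa [maharam_mul H]⟩
    · rintro ⟨k, hk⟩
      exact ⟨k * g⁻¹, by rwa [maharam_mul H, maharam_inv H]⟩
  · rw [Measure.prod_apply hSm]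
    calc ∫⁻ b, volume (Prod.mk b ⁻¹' S) ∂η ≤ ∫⁻ b, ENNReal.ofReal (2 * L + 1) ∂η := by
          refine lintegral_mono fun b => ?_
          by_cases hb : ∃ k : Γ, a k b ∈ A
          · obtain ⟨k, hk⟩ := hb
            have hsub : Prod.mk b ⁻¹' S ⊆
                Icc (Real.log (α k b) - L) (Real.log (α k b) + L + 1) := by
              intro r hr
              simp only [hS, mem_preimage, mem_iUnion, maharam, mem_prod, mem_Icc] at hr
              obtain ⟨g, hg, h1, h2⟩ := hr
              have e1 : a g b = a (g * k⁻¹) (a k b) := by rw [H.act_mul, H.act_inv]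
              have e2 : α (g * k⁻¹) (a k b) * α k b = α g b := by rw [H.coc]; simp
              have e3 := hL (a k b) hk (g * k⁻¹) (e1 ▸ hg)
              rw [← e2, Real.log_mul (H.pos _ _).ne' (H.pos _ _).ne'] at h1 h2
              rw [abs_le] at e3
              constructor <;> linarith
            refine (measure_mono hsub).trans ?_
            rw [Real.volume_Icc]
            exact ENNReal.ofReal_le_ofReal (by linarith)
          · have : Prod.mk b ⁻¹' S = ∅ := eq_empty_of_forall_notMem fun r hr => by
              simp only [hS, mem_preimage, mem_iUnion, maharam, mem_prod] at hr
              exact hb (hr.imp fun g hg => hg.1)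
            simp [this]
      _ < ∞ := by simp
  · have hsub : A ×ˢ Icc (0 : ℝ) 1 ⊆ S ∩ univ ×ˢ Icc 0 1 := fun x hx =>
      ⟨mem_iUnion.2 ⟨1, by rwa [mem_preimage, maharam_one H]⟩, mem_univ _, hx.2⟩
    refine lt_of_lt_of_le ?_ (measure_mono hsub)
    rw [Measure.prod_prod]
    simpa using h0

omit [Group Γ] in
/-- Given an invariant set of finite measure, points `b` for which the window `[-K, K]`
catches more than half of the fibre over `b` have bounded cocycle among themselves: if `b` and `gb`
are such points, the fibre over `gb` is that over `b` translated by `-log α(g,b)`, so the two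
windowed parts meet over `b`, which forces `|log α(g,b)| ≤ 2K`. -/
lemma hasBddSet_of_mInv {η : Measure B} [SFinite η]
    {S : Set (B × ℝ)} (hSm : MeasurableSet S) (hS : MInv a α S)
    (hpos : 0 < η.prod volume S) (hfin : η.prod volume S < ∞) : HasBddSet a α η := by
  set F : B → Set ℝ := fun b => Prod.mk b ⁻¹' S with hF
  have hFm : ∀ b, MeasurableSet (F b) := fun b => measurable_prodMk_left hSm
  set w : ℕ → B → ℝ≥0∞ := fun K b => volume (F b ∩ Icc (-(K : ℝ)) K) with hw
  have hSK : ∀ K : ℕ, MeasurableSet (S ∩ univ ×ˢ Icc (-(K : ℝ)) K) := fun K =>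
    hSm.inter (MeasurableSet.univ.prod measurableSet_Icc)
  have hwm : ∀ K, Measurable (w K) := fun K => by
    have : w K = fun b => volume (Prod.mk b ⁻¹' (S ∩ univ ×ˢ Icc (-(K : ℝ)) K)) := by
      ext b
      simp only [hw]
      congr 1
      ext r
      simp [hF]
    rw [this]
    exact measurable_measure_prodMk_left (hSK K)
  have hvm : Measurable fun b => volume (F b) := measurable_measure_prodMk_left hSm
  set A : ℕ → Set B := fun K => {b | volume (F b) < 2 * w K b ∧ volume (F b) < ∞} with hA
  have hAm : ∀ K, MeasurableSet (A K) := fun K =>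
    (measurableSet_lt hvm ((hwm K).const_mul 2)).inter (measurableSet_lt hvm measurable_const)
  have hex : ∃ K, 0 < η (A K) := by
    by_contra! hc
    have h1 : ∀ᵐ b ∂η, ∀ K, b ∉ A K := ae_all_iff.2 fun K =>
      measure_eq_zero_iff_ae_notMem.1 (nonpos_iff_eq_zero.1 (hc K))
    rw [Measure.prod_apply hSm] at hpos hfin
    have h2 := ae_lt_top hvm hfin.ne
    refine hpos.ne' ((lintegral_eq_zero_iff hvm).2 ?_)
    filter_upwards [h1, h2] with b hb1 hb2
    by_contra hne
    have hun : F b = ⋃ K : ℕ, F b ∩ Icc (-(K : ℝ)) K := by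
      ext r
      simp only [mem_iUnion, mem_inter_iff, mem_Icc, exists_and_left]
      refine ⟨fun hr => ⟨hr, ?_⟩, fun hr => hr.1⟩
      obtain ⟨K, hK⟩ := exists_nat_ge |r|
      exact ⟨K, abs_le.1 hK⟩
    have hmono : Monotone fun K : ℕ => F b ∩ Icc (-(K : ℝ)) K := fun i j hij => by
      have : (i : ℝ) ≤ j := by exact_mod_cast hij
      exact inter_subset_inter_right _ (Icc_subset_Icc (by linarith) this)
    have hlim := tendsto_measure_iUnion_atTop (μ := volume) hmono
    rw [← hun] at hlim
    have hlt : volume (F b) / 2 < volume (F b) := ENNReal.half_lt_self hne hb2.ne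
    obtain ⟨K, hK⟩ := (hlim.eventually (lt_mem_nhds hlt)).exists
    refine hb1 K ⟨?_, hb2⟩
    have := (ENNReal.div_lt_iff (Or.inl two_ne_zero) (Or.inl ENNReal.ofNat_ne_top)).1 hK
    rwa [mul_comm] at this
  obtain ⟨K, hK⟩ := hex
  refine ⟨A K, hAm K, hK, 2 * K, fun b hb g hgb => ?_⟩
  set l := Real.log (α g b) with hl
  have hmem : ∀ r, r ∈ F b ↔ r - l ∈ F (a g b) := fun r => (hS g (b, r)).symm
  have hpre : F b = (fun r => r - l) ⁻¹' F (a g b) := by ext r; exact hmem r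
  have hvol : ∀ s : Set ℝ, volume ((fun r => r - l) ⁻¹' s) = volume s := fun s =>
    by simp [sub_eq_add_neg]
  set P := F b ∩ Icc (-(K : ℝ)) K
  set Q := (fun r => r - l) ⁻¹' (F (a g b) ∩ Icc (-(K : ℝ)) K) with hQ
  have hQm : MeasurableSet Q := (measurable_id.sub_const l) ((hFm _).inter measurableSet_Icc)
  have hQF : Q ⊆ F b := fun r hr => (hmem r).2 hr.1
  have hne : (P ∩ Q).Nonempty := by
    by_contra hemp
    have hdisj : Disjoint P Q := disjoint_iff_inter_eq_empty.2 (not_nonempty_iff_eq_empty.1 hemp)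
    have h1 : volume P + volume Q ≤ volume (F b) := by
      rw [← measure_union hdisj hQm]
      exact measure_mono (union_subset inter_subset_left hQF)
    have h2 : volume (F b) < 2 * volume P := hb.1
    have h3 : volume (F b) < 2 * volume Q := by
      rw [hQ, hvol, hpre, hvol]; exact hgb.1
    have h4 : volume (F b) + volume (F b) < 2 * volume P + 2 * volume Q := ENNReal.add_lt_add h2 h3
    rw [← mul_add, ← two_mul] at h4
    exact h4.not_ge (by gcongr)
  obtain ⟨r, hr1, hr2⟩ := hne
  have h1 := hr1.2
  have h2 := hr2.2
  rw [mem_Icc] at h1 h2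
  rw [abs_le]
  constructor <;> linarith

end Maharam

/-! ### Integration over almost every component -/

section Transfer

variable {Γ B : Type} [Group Γ] [MeasurableSpace B] {a : Γ → B → B} {α : Γ → B → ℝ}
  {ν : Measure B} {ω : Measure (Measure B)}

omit [Group Γ] in
lemma lintegral_disint (hdecomp : ∀ s : Set B, MeasurableSet s → ν s = ∫⁻ η, η s ∂ω)
    {h : B × ℝ → ℝ≥0∞} (hh : Measurable h) :
    Measurable (fun η : Measure B => ∫⁻ x, h x ∂(η.prod volume)) ∧
    ∫⁻ x, h x ∂(ν.prod volume) = ∫⁻ η, ∫⁻ x, h x ∂(η.prod volume) ∂ω := by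
  have hν : ν = Measure.join ω := by
    ext s hs
    rw [hdecomp s hs, Measure.join_apply hs]
  have hm : Measurable fun b => ∫⁻ r : ℝ, h (b, r) := hh.lintegral_prod_right'
  have e : ∀ η : Measure B, ∫⁻ x, h x ∂(η.prod volume) = ∫⁻ b, (∫⁻ r : ℝ, h (b, r)) ∂η := fun η =>
    lintegral_prod _ hh.aemeasurable
  simp only [e]
  refine ⟨Measure.measurable_lintegral hm, ?_⟩
  rw [hν, Measure.lintegral_join hm.aemeasurable]

lemma ae_disint (hdecomp : ∀ s : Set B, MeasurableSet s → ν s = ∫⁻ η, η s ∂ω)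
    {p : B × ℝ → Prop} (hp : ∀ᵐ x ∂(ν.prod volume), p x) :
    ∀ᵐ η ∂ω, ∀ᵐ x ∂(η.prod volume), p x := by
  obtain ⟨s, hs, hsm, hs0⟩ := exists_measurable_superset_of_null (ae_iff.1 hp)
  have h1 := lintegral_disint hdecomp (measurable_one.indicator hsm)
  simp only [lintegral_indicator_one hsm] at h1
  rw [hs0, eq_comm, lintegral_eq_zero_iff h1.1] at h1
  filter_upwards [h1.2] with η hη
  exact ae_iff.2 (measure_mono_null hs hη)

lemma memLp_disint (hdecomp : ∀ s : Set B, MeasurableSet s → ν s = ∫⁻ η, η s ∂ω)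
    (f : Lp ℝ 2 (ν.prod (volume : Measure ℝ))) :
    ∀ᵐ η ∂ω, MemLp f 2 (η.prod volume) := by
  have hf := Lp.stronglyMeasurable f
  have h1 := lintegral_disint hdecomp (h := fun x => ‖f x‖ₑ ^ (2 : ℝ))
    (hf.measurable.enorm.pow_const _)
  have h2 := (eLpNorm_lt_top_iff_lintegral_rpow_enorm_lt_top two_ne_zero ENNReal.ofNat_ne_top).1
    (Lp.memLp f).2
  simp only [ENNReal.toReal_ofNat] at h2
  rw [h1.2] at h2
  filter_upwards [ae_lt_top h1.1 h2.ne] with η hη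
  refine ⟨hf.aestronglyMeasurable, ?_⟩
  rw [eLpNorm_lt_top_iff_lintegral_rpow_enorm_lt_top two_ne_zero ENNReal.ofNat_ne_top]
  simpa using hη

/-- The square-integrable functions on the Maharam extension of `ν` whose integral over every
invariant set of finite measure vanishes, for almost every component. -/
noncomputable def vanishingSubmodule (a : Γ → B → B) (α : Γ → B → ℝ)
    (hdecomp : ∀ s : Set B, MeasurableSet s → ν s = ∫⁻ η, η s ∂ω) :
    Submodule ℝ (Lp ℝ 2 (ν.prod (volume : Measure ℝ))) where
  carrier := {f | ∀ᵐ η ∂ω, ∀ S, MeasurableSet S → MInv a α S → η.prod volume S < ∞ →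
    ∫ x in S, f x ∂(η.prod volume) = 0}
  add_mem' {f f'} hf hf' := by
    filter_upwards [hf, hf', memLp_disint hdecomp f, memLp_disint hdecomp f',
      ae_disint hdecomp (Lp.coeFn_add f f')] with η h1 h2 h3 h4 h5 S hSm hS hfin
    have : IsFiniteMeasure ((η.prod (volume : Measure ℝ)).restrict S) := ⟨by simpa using hfin⟩
    rw [integral_congr_ae (ae_restrict_of_ae h5)]
    simp only [Pi.add_apply]
    rw [integral_add ((h3.restrict S).integrable (by norm_num))
      ((h4.restrict S).integrable (by norm_num)), h1 S hSm hS hfin, h2 S hSm hS hfin, add_zero]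
  zero_mem' := by
    filter_upwards [ae_disint hdecomp (Lp.coeFn_zero ℝ 2 (ν.prod (volume : Measure ℝ)))]
      with η h5 S hSm hS hfin
    rw [integral_congr_ae (ae_restrict_of_ae h5)]
    simp
  smul_mem' c f hf := by
    filter_upwards [hf, ae_disint hdecomp (Lp.coeFn_smul c f)] with η h1 h5 S hSm hS hfin
    rw [integral_congr_ae (ae_restrict_of_ae h5)]
    simp only [Pi.smul_apply]
    rw [integral_smul, h1 S hSm hS hfin, smul_zero]

omit [Group Γ] in
/-- Closedness: an `L²` approximation for `ν` gives, for almost every component, arbitrarily good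
`L²` approximations for that component. -/
lemma isClosed_vanishing (hdecomp : ∀ s : Set B, MeasurableSet s → ν s = ∫⁻ η, η s ∂ω) :
    IsClosed (vanishingSubmodule a α hdecomp : Set (Lp ℝ 2 (ν.prod (volume : Measure ℝ)))) := by
  rw [← isSeqClosed_iff_isClosed]
  intro F f hF hlim
  have hsm : ∀ n, StronglyMeasurable fun x => f x - F n x := fun n =>
    (Lp.stronglyMeasurable f).sub (Lp.stronglyMeasurable (F n))
  set d : ℕ → Measure B → ℝ≥0∞ := fun n η => ∫⁻ x, ‖f x - F n x‖ₑ ^ (2 : ℝ) ∂(η.prod volume)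
    with hd
  have hdis := fun n => lintegral_disint hdecomp (h := fun x => ‖f x - F n x‖ₑ ^ (2 : ℝ))
    ((hsm n).measurable.enorm.pow_const _)
  have hd0 : Tendsto (fun n => ∫⁻ η, d n η ∂ω) atTop (nhds 0) := by
    have h1 : ∀ n, ∫⁻ η, d n η ∂ω = ‖f - F n‖ₑ ^ (2 : ℝ) := fun n => by
      rw [← (hdis n).2, Lp.enorm_def, eLpNorm_congr_ae (Lp.coeFn_sub f (F n)),
        eLpNorm_eq_lintegral_rpow_enorm_toReal two_ne_zero ENNReal.ofNat_ne_top]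
      simp only [ENNReal.toReal_ofNat]
      rw [← ENNReal.rpow_mul]
      norm_num
    simp only [h1]
    have h2 : Tendsto (fun n => f - F n) atTop (nhds 0) := by
      simpa using hlim.const_sub f
    have h3 := ((continuous_enorm.tendsto _).comp h2)
    rw [enorm_zero] at h3
    have h4 := (ENNReal.continuous_rpow_const (y := 2)).tendsto 0 |>.comp h3
    simpa [Function.comp_def] using h4
  have hinf : ∀ᵐ η ∂ω, ⨅ n, d n η = 0 := by
    refine (lintegral_eq_zero_iff (Measurable.iInf fun n => (hdis n).1)).1 ?_
    refine nonpos_iff_eq_zero.1 (ge_of_tendsto hd0 (.of_forall fun n => ?_))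
    exact lintegral_mono fun η => iInf_le _ n
  have hFae : ∀ᵐ η ∂ω, ∀ n, ∀ S, MeasurableSet S → MInv a α S → η.prod volume S < ∞ →
    ∫ x in S, F n x ∂(η.prod volume) = 0 := ae_all_iff.2 hF
  filter_upwards [hinf, hFae, memLp_disint hdecomp f,
    ae_all_iff.2 fun n => memLp_disint hdecomp (F n)] with η hη hFη hfL hFL S hSm hS hfin
  have : IsFiniteMeasure ((η.prod (volume : Measure ℝ)).restrict S) := ⟨by simpa using hfin⟩
  set I := ∫ x in S, f x ∂(η.prod volume) with hI
  set m := ((η.prod (volume : Measure ℝ)).restrict S) univ ^ (1 / (1 : ℝ) - 1 / 2)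
  have hm : m ≠ ∞ := ENNReal.rpow_ne_top_of_nonneg (by norm_num) (measure_ne_top _ _)
  have hbound : ∀ n, ‖I‖ₑ ≤ d n η ^ (1 / (2 : ℝ)) * m := fun n => by
    have e1 : I = ∫ x in S, (f x - F n x) ∂(η.prod volume) := by
      rw [integral_sub ((hfL.restrict S).integrable (by norm_num))
        (((hFL n).restrict S).integrable (by norm_num)), hFη n S hSm hS hfin, sub_zero]
    rw [e1]
    refine (enorm_integral_le_lintegral_enorm _).trans ?_
    rw [← eLpNorm_one_eq_lintegral_enorm]
    refine (eLpNorm_le_eLpNorm_mul_rpow_measure_univ (q := 2) (by norm_num)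
      (hsm n).aestronglyMeasurable).trans ?_
    simp only [ENNReal.toReal_one, ENNReal.toReal_ofNat]
    gcongr
    refine (eLpNorm_restrict_le _ _ _ _).trans ?_
    rw [eLpNorm_eq_lintegral_rpow_enorm_toReal two_ne_zero ENNReal.ofNat_ne_top]
    simp [hd]
  by_contra hne
  have hpos : 0 < ‖I‖ₑ := by simpa [pos_iff_ne_zero] using hne
  have hcont : Tendsto (fun y : ℝ≥0∞ => y ^ (1 / (2 : ℝ)) * m) (nhds 0) (nhds 0) := by
    have h4 := (ENNReal.continuous_rpow_const (y := 1 / 2)).tendsto 0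
    have h5 := ENNReal.Tendsto.mul_const (b := m) h4 (Or.inr hm)
    simpa using h5
  obtain ⟨ε, hε, hlt⟩ : ∃ ε > 0, ∀ y < ε, y ^ (1 / (2 : ℝ)) * m < ‖I‖ₑ :=
    (ENNReal.nhds_zero_basis.eventually_iff).1 (hcont.eventually (gt_mem_nhds hpos))
  obtain ⟨n, hn⟩ := iInf_lt_iff.1 (hη.trans_lt hε)
  exact (hlt _ hn).not_ge (hbound n)

end Transfer

/-! ### Coboundaries and invariant functions -/

section Invariance

variable {Γ B : Type} [Group Γ] [MeasurableSpace B] {a : Γ → B → B} {α : Γ → B → ℝ}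
  {ν : Measure B} {ω : Measure (Measure B)}

/-- The coboundary `1_S · α_g - 1_{gS}` of the indicator of `S` under the Maharam extension. -/
noncomputable def cobdry (a : Γ → B → B) (α : Γ → B → ℝ) (g : Γ) (S : Set (B × ℝ)) (x : B × ℝ) :
    ℝ :=
  S.indicator (fun y => α g y.1) x - S.indicator (fun _ => 1) (maharam a α g⁻¹ x)

lemma cobdry_setIntegral (H : IsBorelCocycle a α) {η : Measure B} (hη : HasCocycle a α η) (g : Γ)
    {S T : Set (B × ℝ)} (hS : MeasurableSet S) (hT : MeasurableSet T) (hTi : MInv a α T)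
    (hfin : η.prod volume T < ∞) : ∫ x in T, cobdry a α g S x ∂(η.prod volume) = 0 := by
  have hm := measurable_maharam H g⁻¹ hS
  set R := T ∩ maharam a α g⁻¹ ⁻¹' S with hR
  have hRm : MeasurableSet R := hT.inter hm
  have hRfin : η.prod volume R < ∞ := (measure_mono inter_subset_left).trans_lt hfin
  have hRs : StronglyMeasurable (R.indicator fun _ => (1 : ℝ)) :=
    stronglyMeasurable_const.indicator hRm
  have hRi : Integrable (R.indicator fun _ => (1 : ℝ)) (η.prod volume) :=
    (integrable_indicator_iff hRm).2 (integrableOn_const hRfin.ne)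
  have e1 : (fun x => α g x.1 * R.indicator (fun _ => (1 : ℝ)) (maharam a α g x)) =
      T.indicator (S.indicator fun y => α g y.1) := by
    ext x
    have hx : maharam a α g x ∈ R ↔ x ∈ T ∧ x ∈ S := by
      rw [hR, mem_inter_iff, hTi, mem_preimage, maharam_inv H]
    by_cases h1 : x ∈ T <;> by_cases h2 : x ∈ S <;> simp [indicator, hx, h1, h2]
  have e2 : R.indicator (fun _ => (1 : ℝ)) =
      T.indicator fun x => S.indicator (fun _ => 1) (maharam a α g⁻¹ x) := by
    ext x
    by_cases h1 : x ∈ T <;> by_cases h2 : maharam a α g⁻¹ x ∈ S <;> simp [indicator, hR, h1, h2]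
  have i1 := maharam_integrable H hη g hRs hRi
  have i2 := maharam_integral H hη g hRs
  rw [e1] at i1 i2
  rw [e2] at i2 hRi
  rw [integral_indicator hT, integral_indicator hT] at i2
  unfold cobdry
  rw [integral_sub ((integrable_indicator_iff hT).1 i1) ((integrable_indicator_iff hT).1 hRi), i2,
    sub_self]

lemma cobdry_memLp (H : IsBorelCocycle a α) (hν : HasCocycle a α ν) (g : Γ) {M : ℕ}
    {S : Set (B × ℝ)} (hS : MeasurableSet S)
    (hSM : S ⊆ {x | α g x.1 ≤ M ∧ x.2 ∈ Icc (-(M : ℝ)) M}) :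
    MemLp (S.indicator fun y => α g y.1) 2 (ν.prod volume) ∧
      MemLp (fun x => S.indicator (fun _ => (1 : ℝ)) (maharam a α g⁻¹ x)) 2 (ν.prod volume) := by
  have hp := hν.prob
  have hα := H.meas g
  have hSfin : ν.prod volume S < ∞ := by
    refine (measure_mono (t := univ ×ˢ Icc (-(M : ℝ)) M) fun x hx =>
      ⟨mem_univ _, (hSM hx).2⟩).trans_lt ?_
    rw [Measure.prod_prod]
    exact ENNReal.mul_lt_top (measure_lt_top _ _) measure_Icc_lt_top
  have hfm : IsFiniteMeasure ((ν.prod (volume : Measure ℝ)).restrict S) := ⟨by simpa using hSfin⟩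
  have hgm := measurable_maharam H g⁻¹ hS
  constructor
  · rw [memLp_indicator_iff_restrict hS]
    refine MemLp.of_bound (hα.comp measurable_fst).aestronglyMeasurable M ?_
    filter_upwards [ae_restrict_mem hS] with x hx
    rw [Real.norm_of_nonneg (H.pos g x.1).le]
    exact (hSM hx).1
  · refine memLp_indicator_const 2 hgm (1 : ℝ) (Or.inr ?_) |>.congr_norm ?_ ?_
    · have h := maharam_lintegral H hν g (measurable_one.indicator hgm)
      rw [lintegral_indicator_one hgm] at h
      rw [← h]
      refine ne_top_of_le_ne_top (b := ∫⁻ x, S.indicator (fun _ => (M : ℝ≥0∞)) x ∂ν.prod volume)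
        ?_ (lintegral_mono fun x => ?_)
      · rw [lintegral_indicator_const hS]
        exact ENNReal.mul_ne_top (by simp) hSfin.ne
      · by_cases hx : x ∈ S
        · have h1 : maharam a α g x ∈ maharam a α g⁻¹ ⁻¹' S := by
            rwa [mem_preimage, maharam_inv H]
          rw [indicator_of_mem h1, indicator_of_mem hx, Pi.one_apply, mul_one]
          exact ENNReal.ofReal_le_natCast.2 (hSM hx).1
        · have h1 : maharam a α g x ∉ maharam a α g⁻¹ ⁻¹' S := by
            rwa [mem_preimage, maharam_inv H]
          rw [indicator_of_notMem h1, mul_zero]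
          exact zero_le
    · exact ((stronglyMeasurable_const.indicator hS).comp_measurable
        (measurable_maharam H g⁻¹)).aestronglyMeasurable
    · exact .of_forall fun x => rfl

/-- A square-integrable function orthogonal to the coboundaries of `g` is almost everywhere invariant
under `g`; sets on which `α_g` and the second coordinate are bounded suffice. -/
lemma ae_invariant (H : IsBorelCocycle a α) (hν : HasCocycle a α ν) (g : Γ)
    {φ : B × ℝ → ℝ} (hφm : StronglyMeasurable φ) (hφ : MemLp φ 2 (ν.prod volume))
    (h0 : ∀ (M : ℕ) (S : Set (B × ℝ)), MeasurableSet S →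
      S ⊆ {x | α g x.1 ≤ M ∧ x.2 ∈ Icc (-(M : ℝ)) M} →
      ∫ x, cobdry a α g S x * φ x ∂(ν.prod volume) = 0) :
    ∀ᵐ x ∂(ν.prod volume), φ (maharam a α g x) = φ x := by
  have hα := H.meas g
  set P : ℕ → Set (B × ℝ) := fun M => {x | α g x.1 ≤ M ∧ x.2 ∈ Icc (-(M : ℝ)) M} with hP
  have hPm : ∀ M, MeasurableSet (P M) := fun M =>
    (measurableSet_le (hα.comp measurable_fst) measurable_const).inter
      (measurable_snd measurableSet_Icc)
  set ψ : B × ℝ → ℝ := fun x => α g x.1 * φ x - α g x.1 * φ (maharam a α g x) with hψ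
  have key : ∀ M (S : Set (B × ℝ)), MeasurableSet S → S ⊆ P M →
      IntegrableOn ψ S (ν.prod volume) ∧ ∫ x in S, ψ x ∂(ν.prod volume) = 0 := by
    intro M S hS hSM
    obtain ⟨m1, m2⟩ := cobdry_memLp H hν g hS hSM
    have i1 := m1.integrable_mul hφ
    have i2 := m2.integrable_mul hφ
    have s2 : StronglyMeasurable
        ((fun x => S.indicator (fun _ => (1 : ℝ)) (maharam a α g⁻¹ x)) * φ) :=
      ((stronglyMeasurable_const.indicator hS).comp_measurable (measurable_maharam H g⁻¹)).mul hφm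
    have i3 := maharam_integrable H hν g s2 i2
    have e3 := maharam_integral H hν g s2
    have f1 : (S.indicator fun y => α g y.1) * φ = S.indicator fun x => α g x.1 * φ x := by
      ext x
      by_cases hx : x ∈ S <;> simp [hx]
    have f3 : (fun x => α g x.1 * ((fun x => S.indicator (fun _ => (1 : ℝ))
        (maharam a α g⁻¹ x)) * φ) (maharam a α g x)) =
        S.indicator fun x => α g x.1 * φ (maharam a α g x) := by
      ext x
      simp only [Pi.mul_apply, maharam_inv H]
      by_cases hx : x ∈ S <;> simp [hx]
    rw [f1] at i1
    rw [f3] at i3 e3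
    have j1 := (integrable_indicator_iff hS).1 i1
    have j3 := (integrable_indicator_iff hS).1 i3
    refine ⟨j1.sub j3, ?_⟩
    simp only [hψ]
    rw [integral_sub j1 j3, ← integral_indicator hS, ← integral_indicator hS, e3, ← f1,
      ← integral_sub (by rwa [f1]) i2, ← h0 M S hS hSM]
    refine integral_congr_ae (.of_forall fun x => ?_)
    simp only [cobdry, Pi.mul_apply]
    ring
  have hz : ∀ᵐ x ∂(ν.prod volume), ∀ M, x ∈ P M → ψ x = 0 := by
    refine ae_all_iff.2 fun M => (ae_restrict_iff' (hPm M)).1 ?_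
    refine Integrable.ae_eq_zero_of_forall_setIntegral_eq_zero (key M _ (hPm M) Subset.rfl).1
      fun S hS _ => ?_
    rw [Measure.restrict_restrict hS]
    exact (key M _ (hS.inter (hPm M)) inter_subset_right).2
  filter_upwards [hz] with x hx
  obtain ⟨M, hM⟩ := exists_nat_ge (max (α g x.1) |x.2|)
  have h1 := hx M ⟨(le_max_left _ _).trans hM, abs_le.1 ((le_max_right _ _).trans hM)⟩
  have h2 : α g x.1 * (φ x - φ (maharam a α g x)) = 0 := by rw [mul_sub]; exact h1
  have h3 := (mul_eq_zero.1 h2).resolve_left (H.pos g x.1).ne'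
  linarith

/-- Without sets of bounded cocycle, the Maharam extension has no nonzero invariant `L²`
function, because its superlevel sets would be invariant of finite measure. -/
lemma ae_zero_of_invariant [Countable Γ] (H : IsBorelCocycle a α) (hν : HasCocycle a α ν)
    (hb : ¬ HasBddSet a α ν) {φ : B × ℝ → ℝ} (hφm : StronglyMeasurable φ)
    (hφ : MemLp φ 2 (ν.prod volume))
    (hinv : ∀ g, ∀ᵐ x ∂(ν.prod volume), φ (maharam a α g x) = φ x) :
    ∀ᵐ x ∂(ν.prod volume), φ x = 0 := by
  have hp := hν.prob
  have hz : ∀ᵐ x ∂(ν.prod volume), ∀ n : ℕ, ¬ ((1 / ((n : ℝ) + 1)) ≤ |φ x|) := by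
    refine ae_all_iff.2 fun n => ?_
    set c : ℝ := 1 / ((n : ℝ) + 1) with hc
    have hc0 : 0 < c := by positivity
    set W : Set (B × ℝ) := ⋂ g : Γ, {x | c ≤ |φ (maharam a α g x)|} with hW
    have hWm : MeasurableSet W := MeasurableSet.iInter fun g => by
      have h1 := hφm.measurable
      have h2 := measurable_maharam H g
      exact measurableSet_le measurable_const (h1.comp h2).abs
    have hWi : MInv a α W := fun g x => by
      simp only [hW, mem_iInter, mem_ofPred_eq]
      constructor
      · intro h k
        have := h (k * g⁻¹)
        rwa [maharam_mul H, maharam_inv H] at this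
      · intro h k
        have := h (k * g)
        rwa [maharam_mul H] at this
    have hWfin : ν.prod volume W < ∞ := by
      refine (measure_mono (t := {x | ENNReal.ofReal c ≤ ‖φ x‖ₑ}) fun x hx => ?_).trans_lt
        (hφ.meas_ge_lt_top' (by norm_num) (by norm_num) (by simpa using hc0))
      have h1 := mem_iInter.1 hx 1
      rw [mem_ofPred_eq, maharam_one H] at h1
      rw [mem_ofPred_eq, ← ofReal_norm]
      exact ENNReal.ofReal_le_ofReal h1
    have hW0 : ν.prod volume W = 0 := by
      by_contra hne
      exact hb (hasBddSet_of_mInv hWm hWi (pos_iff_ne_zero.2 hne) hWfin)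
    filter_upwards [measure_eq_zero_iff_ae_notMem.1 hW0, ae_all_iff.2 hinv] with x h1 h2 h3
    refine h1 (mem_iInter.2 fun g => ?_)
    rw [mem_ofPred_eq, h2 g]
    exact h3
  filter_upwards [hz] with x hx
  by_contra hne
  obtain ⟨n, hn⟩ := exists_nat_one_div_lt (abs_pos.2 hne)
  exact hx n hn.le

/-- If `ν` has no set of bounded cocycle, coboundaries are dense in `L²` of the
Maharam extension, so the vanishing of their integrals over invariant sets of finite measure
extends to `1_{B × [0,1]}`; this excludes such sets for almost every component. -/
lemma ae_not_hasBddSet [Countable Γ] (H : IsBorelCocycle a α) (hν : HasCocycle a α ν)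
    (hdecomp : ∀ s : Set B, MeasurableSet s → ν s = ∫⁻ η, η s ∂ω)
    (hη : ∀ᵐ η ∂ω, HasCocycle a α η) (hb : ¬ HasBddSet a α ν) :
    ∀ᵐ η ∂ω, ¬ HasBddSet a α η := by
  have hp := hν.prob
  set V := vanishingSubmodule a α hdecomp with hV
  have hVc : IsClosed (V : Set (Lp ℝ 2 (ν.prod (volume : Measure ℝ)))) :=
    isClosed_vanishing hdecomp
  have : CompleteSpace V := hVc.completeSpace_coe
  have hcob : ∀ (g : Γ) (M : ℕ) (S : Set (B × ℝ)) (hS : MeasurableSet S)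
      (hSM : S ⊆ {x | α g x.1 ≤ M ∧ x.2 ∈ Icc (-(M : ℝ)) M}),
      ∃ hL : MemLp (cobdry a α g S) 2 (ν.prod volume), hL.toLp ∈ V := by
    intro g M S hS hSM
    obtain ⟨m1, m2⟩ := cobdry_memLp H hν g hS hSM
    have hL : MemLp (cobdry a α g S) 2 (ν.prod volume) := m1.sub m2
    refine ⟨hL, ?_⟩
    change ∀ᵐ η ∂ω, _
    filter_upwards [hη, ae_disint hdecomp hL.coeFn_toLp] with η h1 h2 T hT hTi hfin
    rw [integral_congr_ae (ae_restrict_of_ae h2)]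
    exact cobdry_setIntegral H h1 g hS hT hTi hfin
  have hVtop : V = ⊤ := by
    rw [← Submodule.orthogonal_eq_bot_iff, Submodule.eq_bot_iff]
    intro φ hφ
    refine (Lp.eq_zero_iff_ae_eq_zero).2 ?_
    refine ae_zero_of_invariant H hν hb (Lp.stronglyMeasurable φ) (Lp.memLp φ) fun g => ?_
    refine ae_invariant H hν g (Lp.stronglyMeasurable φ) (Lp.memLp φ) fun M S hS hSM => ?_
    obtain ⟨hL, hLV⟩ := hcob g M S hS hSM
    have h1 := (Submodule.mem_orthogonal V φ).1 hφ _ hLV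
    rw [L2.inner_def] at h1
    rw [← h1]
    refine integral_congr_ae ?_
    filter_upwards [hL.coeFn_toLp] with x hx
    rw [hx]
    simp [mul_comm]
  have hIm : MeasurableSet ((univ : Set B) ×ˢ Icc (0 : ℝ) 1) :=
    MeasurableSet.univ.prod measurableSet_Icc
  have hIfin : (ν.prod volume) ((univ : Set B) ×ˢ Icc (0 : ℝ) 1) ≠ ∞ := by
    rw [Measure.prod_prod]; simp
  have hu : indicatorConstLp 2 hIm hIfin (1 : ℝ) ∈ V := hVtop ▸ Submodule.mem_top
  have hu' : ∀ᵐ η ∂ω, ∀ S, MeasurableSet S → MInv a α S → η.prod volume S < ∞ →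
    ∫ x in S, indicatorConstLp 2 hIm hIfin (1 : ℝ) x ∂(η.prod volume) = 0 := hu
  filter_upwards [hu', hη, ae_disint hdecomp
    (indicatorConstLp_coeFn (p := 2) (hs := hIm) (hμs := hIfin) (c := (1 : ℝ)))]
    with η h1 h2 h3 h4
  obtain ⟨S, hSm, hSi, hSfin, hSpos⟩ := exists_mInv_of_hasBddSet H h2 h4
  have h5 := h1 S hSm hSi hSfin
  rw [integral_congr_ae (ae_restrict_of_ae h3), setIntegral_indicator hIm, setIntegral_const,
    smul_eq_mul, mul_one, measureReal_eq_zero_iff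
      ((measure_mono inter_subset_left).trans_lt hSfin).ne] at h5
  exact hSpos.ne' h5

end Invariance

/-! ### The ratios zero and infinity, and the theorem -/

section Ends

variable {Γ B : Type} [Group Γ] [Countable Γ] [MeasurableSpace B] {a : Γ → B → B} {α : Γ → B → ℝ}

lemma returns_Ioi_iff (H : IsBorelCocycle a α) (η : Measure B) :
    (∀ n : ℝ, 0 < n → Returns a α η (Ioi n)) ↔ ¬ HasBddSet a α η := by
  constructor
  · intro h
    refine not_hasBddSet_of_returns (fun L => Ioi (Real.exp L)) (fun L x hx hx0 => ?_) H.pos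
      fun L => h _ (Real.exp_pos L)
    exact ((Real.lt_log_iff_exp_lt hx0).2 hx).trans_le (le_abs_self _)
  · intro h n hn
    refine returns_of_not_hasBddSet (L := |Real.log n|) H measurableSet_Ioi
      (fun x hx0 hx hx' => ?_) h
    have h1 := Real.log_le_log hx0 (not_lt.1 hx)
    have h2 := Real.log_le_log (inv_pos.2 hx0) (not_lt.1 hx')
    rw [Real.log_inv] at h2
    have h3 := le_abs_self (Real.log n)
    exact abs_le.2 ⟨by linarith, by linarith⟩

lemma returns_ball_zero_iff (H : IsBorelCocycle a α) (η : Measure B) :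
    (∀ ε : ℝ, 0 < ε → Returns a α η (Metric.ball 0 ε)) ↔ ¬ HasBddSet a α η := by
  have hball : ∀ {x ε : ℝ}, 0 < x → (x ∈ Metric.ball (0 : ℝ) ε ↔ x < ε) := fun hx => by
    rw [mem_ball_zero_iff, Real.norm_of_nonneg hx.le]
  constructor
  · intro h
    refine not_hasBddSet_of_returns (fun L => Metric.ball 0 (Real.exp (-L)))
      (fun L x hx hx0 => ?_) H.pos fun L => h _ (Real.exp_pos _)
    have h1 := (Real.log_lt_iff_lt_exp hx0).2 ((hball hx0).1 hx)
    have h2 := neg_abs_le (Real.log x)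
    linarith
  · intro h ε hε
    refine returns_of_not_hasBddSet (L := |Real.log ε|) H Metric.isOpen_ball.measurableSet
      (fun x hx0 hx hx' => ?_) h
    rw [hball hx0, not_lt] at hx
    rw [hball (inv_pos.2 hx0), not_lt] at hx'
    have h1 := Real.log_le_log hε hx
    have h2 := Real.log_le_log hε hx'
    rw [Real.log_inv] at h2
    have h3 := neg_abs_le (Real.log ε)
    exact abs_le.2 ⟨by linarith, by linarith⟩

end Ends

/-- Theorem 2.1 of the paper: for a nonsingular Borel action of a countable
group on a standard probability space, with a Borel cocycle `α` agreeing a.e. with the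
Radon–Nikodym derivatives and an ergodic decomposition `ω` of `ν`, an element
`t ∈ [0,∞]` lies in the ratio set of `(B,ν)` iff it lies in the ratio set of `ω`-a.e.
ergodic component. -/
theorem stmt0 {Γ B : Type} [Group Γ] [Countable Γ] [MeasurableSpace B] [StandardBorelSpace B]
    (ν : Measure B) [IsProbabilityMeasure ν] (a : Γ → B → B)
    (hact : IsNonsingularAction a ν)
    (α : Γ → B → ℝ) (hαpos : ∀ (g : Γ) (b : B), 0 < α g b)
    (hαmeas : ∀ g : Γ, Measurable (α g))
    (hcoc : ∀ (g₁ g₂ : Γ) (b : B), α g₂ (a g₁ b) * α g₁ b = α (g₂ * g₁) b)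
    (hαrn : ∀ g : Γ, ∀ᵐ b ∂ν, ENNReal.ofReal (α g b) = rnD a ν g b)
    (ω : Measure (Measure B)) [IsProbabilityMeasure ω]
    (hdecomp : ∀ s : Set B, MeasurableSet s → ν s = ∫⁻ η, η s ∂ω)
    (hcomp : ∀ᵐ η ∂ω, IsProbabilityMeasure η ∧
      (∀ g : Γ, η.map (a g) ≪ η ∧ η ≪ η.map (a g)) ∧
      (∀ A : Set B, MeasurableSet A → (∀ g : Γ, a g ⁻¹' A = A) → η A = 0 ∨ η A = 1))
    (hαrn' : ∀ᵐ η ∂ω, ∀ g : Γ, ∀ᵐ b ∂η, ENNReal.ofReal (α g b) = rnD a η g b)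
    (t : ℝ≥0∞) :
    t ∈ ratioSet a ν ↔ ∀ᵐ η ∂ω, t ∈ ratioSet a η := by
  have H : IsBorelCocycle a α :=
    ⟨hact.1, hact.2.1, hact.2.2.1, hαpos, hαmeas, hcoc⟩
  have hν : HasCocycle a α ν := hasCocycle_of_rnD H inferInstance (fun g => (hact.2.2.2 g).1) hαrn
  have hη : ∀ᵐ η ∂ω, HasCocycle a α η := by
    filter_upwards [hcomp, hαrn'] with η h1 h2
    exact hasCocycle_of_rnD H h1.1 (fun g => (h1.2.1 g).1) h2
  rcases eq_or_ne t ∞ with rfl | ht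
  · constructor
    · intro h
      have h1 := (returns_Ioi_iff H ν).1 ((top_mem_ratioSet_iff H hαrn).1 h)
      filter_upwards [ae_not_hasBddSet H hν hdecomp hη h1, hαrn'] with η h2 h3
      exact (top_mem_ratioSet_iff H h3).2 ((returns_Ioi_iff H η).2 h2)
    · intro h
      refine (top_mem_ratioSet_iff H hαrn).2 fun n hn =>
        returns_of_ae H hdecomp measurableSet_Ioi ?_
      filter_upwards [h, hαrn'] with η h2 h3
      exact (top_mem_ratioSet_iff H h3).1 h2 n hn
  constructor
  · intro h
    have h1 := (mem_ratioSet_iff H hαrn ht).1 h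
    rcases (ENNReal.toReal_nonneg (a := t)).eq_or_lt with h0 | h0
    · rw [← h0] at h1
      filter_upwards [ae_not_hasBddSet H hν hdecomp hη ((returns_ball_zero_iff H ν).1 h1), hαrn']
        with η h2 h3
      rw [mem_ratioSet_iff H h3 ht, ← h0]
      exact (returns_ball_zero_iff H η).2 h2
    · set τ := t.toReal with hτ
      -- radii at most `τ / 2` keep the balls inside `[τ / 2, 2 * τ]`
      have h2 : ∀ n : ℕ, ∀ᵐ η ∂ω, Returns a α η (Metric.ball τ (τ / 2 * (1 / ((n : ℝ) + 1)))) := by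
        intro n
        have hn : (1 : ℝ) / ((n : ℝ) + 1) ≤ 1 := by
          rw [div_le_one (by positivity)]
          linarith [n.cast_nonneg (α := ℝ)]
        have hn' : τ / 2 * (1 / ((n : ℝ) + 1)) ≤ τ / 2 := mul_le_of_le_one_right (by linarith) hn
        refine ae_returns (c := τ / 2) (C := 2 * τ) H hdecomp hη Metric.isOpen_ball.measurableSet
          (by linarith) (by linarith) (fun x hx => ?_) (h1 _ (by positivity))
        rw [Metric.mem_ball, Real.dist_eq, abs_lt] at hx
        exact ⟨by linarith [hx.1], by linarith [hx.2]⟩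
      filter_upwards [ae_all_iff.2 h2, hαrn'] with η h3 h4
      refine (mem_ratioSet_iff H h4 ht).2 fun ε hε => ?_
      obtain ⟨n, hn⟩ := exists_nat_one_div_lt (div_pos hε (half_pos h0))
      refine (h3 n).mono (Metric.ball_subset_ball ?_)
      rw [lt_div_iff₀ (half_pos h0)] at hn
      linarith
  · intro h
    refine (mem_ratioSet_iff H hαrn ht).2 fun ε hε =>
      returns_of_ae H hdecomp Metric.isOpen_ball.measurableSet ?_
    filter_upwards [h, hαrn'] with η h2 h3
    exact (mem_ratioSet_iff H h3 ht).1 h2 ε hε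
end

section
/- Let (B,ν) be a standard probability space, Γ↷(B,ν) a nonsingular Borel action of a countable group with (B,d_B) compact metric, R a Borel cocycle version of the logarithmic Radon–Nikodym derivatives, {Υ_n} an admissible family, ζ_n the associated probability measures on ℝ, and ζ_∞ a weak* limit point of {ζ_n}. Suppose there is a nonzero T in the topological support of ζ_∞. If Γ↷(B,ν) is ergodic, then RS(Γ↷(B,ν)) ≠ {0,1,+∞}, i.e. the action is not of type III₀. If Γ↷(B,ν) is weakly mixing, then SRS(Γ↷(B,ν)) ≠ {0,1,+∞}, i.e. the action is not of stable type III₀. -/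
/-!
The claim reduces to showing that `exp T`, which is different from `0`, `1` and `∞`, belongs to the
ratio set of every product of the action with a measure-preserving action on `(X,μ)`. By
`mem_ratioSet_of_exists_return` it is enough that every set `A ⊆ B × X` of positive measure has
returns whose cocycle value is arbitrarily close to `T`; this is `exists_return`. It uses only
ergodicity on `B`, which in the weakly mixing case follows from the product with a point.

Suppose that no return to `A` has cocycle value within `ε` of `T`, after removal of a null set. Let
`L k` be the set of points of `B × X` that some group element sends into `A` with cocycle value in
the `k`-th interval of length `ε / 4`. The union `V` of the `L k` is invariant, so by ergodicity it
meets almost every fibre in measure at least `κ₁ > 0` (`exists_slice_lower_bound`). Draw `(g,b,b')`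
from the kernel `Υ n` and `x` independently from `μ`. With probability at least `κ₁ κ₂`, for
infinitely many `n`, one has `(b,x) ∈ V` and `R(g⁻¹,b') - R(g⁻¹,b)` within `ε / 2` of `T`
(`exists_frequently_le_ball`).

On the other hand, the points `(b,x)` and `(b',x)` become close, as do `g⁻¹(b,x)` and `g⁻¹(b',x)`,
and by condition (4) all of them have laws dominated by a multiple of `ν × μ`. Hence, by
`tendsto_measure_separated`, with probability tending to `1` neither pair is separated by any of
finitely many sets `L k`. When neither pair is separated, the cocycle values of arrivals in `A` from
the four points produce a return to `A` with cocycle value within `ε` of `T`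
(`false_of_levelSet_agree`), which is a contradiction. The bound of condition (3) on the cocycle
ensures that finitely many of the `L k` suffice, up to small probability.
-/

open MeasureTheory Filter Set
open scoped ENNReal

/-- A measure-preserving Borel action of `Γ` on `(X,μ)`. -/
def IsPmpAction {Γ X : Type} [Group Γ] [MeasurableSpace X] (c : Γ → X → X)
    (μ : Measure X) : Prop :=
  (∀ g : Γ, Measurable (c g)) ∧ (∀ x : X, c 1 x = x) ∧
    (∀ (g h : Γ) (x : X), c (g * h) x = c g (c h x)) ∧ (∀ g : Γ, μ.map (c g) = μ)

/-- The stable ratio set: the intersection of the ratio sets of all products of the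
given action with measure-preserving actions on standard probability spaces. -/
def stableRatioSet {Γ B : Type} [Group Γ] [MeasurableSpace B] (a : Γ → B → B)
    (ν : Measure B) : Set ℝ≥0∞ :=
  {t | ∀ (X : Type) (_ : MeasurableSpace X) (μ : Measure X) (c : Γ → X → X)
        (_ : StandardBorelSpace X) (_ : IsProbabilityMeasure μ) (_ : IsPmpAction c μ),
        t ∈ ratioSet (fun g p => (a g p.1, c g p.2)) (ν.prod μ)}

/-- An admissible family of integral kernels for the nonsingular action `a` of `Γ`
on `(B,ν)`, with logarithmic Radon–Nikodym cocycle `R`; `C` is the uniform bound of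
condition (3). -/
def IsAdmissibleFamily {Γ B : Type} [Group Γ] [MetricSpace B] [MeasurableSpace B]
    (a : Γ → B → B) (ν : Measure B) (R : Γ → B → ℝ)
    (Υ : ℕ → Γ → B → B → ℝ) (C : ℝ) : Prop :=
  0 < C ∧
  (∀ (n : ℕ) (g : Γ) (b b' : B), 0 ≤ Υ n g b b') ∧
  (∀ (n : ℕ) (g : Γ), Measurable (fun p : B × B => Υ n g p.1 p.2)) ∧
  -- (1) each `Υ n (·, b, ·)` is a probability density
  (∀ (n : ℕ) (b : B), ∑' g : Γ, ∫⁻ b', ENNReal.ofReal (Υ n g b b') ∂ν = 1) ∧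
  -- (2) supports shrink
  (∃ β : ℕ → ℝ, Tendsto β atTop (nhds 0) ∧
    ∀ (n : ℕ) (g : Γ) (b b' : B), 0 < Υ n g b b' →
      dist b b' ≤ β n ∧ dist (a g⁻¹ b) (a g⁻¹ b') ≤ β n) ∧
  -- (3) uniform bound on the cocycle on the support
  (∀ (n : ℕ) (g : Γ), ∀ᵐ b ∂ν, ∀ᵐ b' ∂ν, 0 < Υ n g b b' →
      |R g⁻¹ b| + |R g⁻¹ b'| ≤ C) ∧
  -- (4) uniform integral bounds
  (∃ C₄ : ℝ, 0 < C₄ ∧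
    (∀ n : ℕ, ∀ᵐ b' ∂ν,
      ∫⁻ b, ∑' g : Γ, ENNReal.ofReal (Υ n g b b') ∂ν ≤ ENNReal.ofReal C₄) ∧
    (∀ n : ℕ, ∀ᵐ b' ∂ν,
      ∫⁻ b, ∑' g : Γ, ENNReal.ofReal (Υ n g b (a g b')) * rnD a ν g b' ∂ν
        ≤ ENNReal.ofReal C₄) ∧
    (∀ n : ℕ, ∀ᵐ b ∂ν,
      ∫⁻ b', ∑' g : Γ, ENNReal.ofReal (Υ n g (a g b) b') * rnD a ν g b ∂ν
        ≤ ENNReal.ofReal C₄))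

/-- Ergodicity of an action: every strictly invariant Borel set is null or conull. -/
def IsErgodicAction {Γ X : Type} [MeasurableSpace X] (c : Γ → X → X) (μ : Measure X) : Prop :=
  ∀ A : Set X, MeasurableSet A → (∀ g : Γ, c g ⁻¹' A = A) → μ A = 0 ∨ μ Aᶜ = 0

/-- Weak mixing: the product with every ergodic pmp action on a standard probability
space is ergodic. -/
def IsWeaklyMixing {Γ B : Type} [Group Γ] [MeasurableSpace B] (a : Γ → B → B)
    (ν : Measure B) : Prop :=
  ∀ (X : Type) (_ : MeasurableSpace X) (μ : Measure X) (c : Γ → X → X)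
    (_ : StandardBorelSpace X) (_ : IsProbabilityMeasure μ) (_ : IsPmpAction c μ)
    (_ : IsErgodicAction c μ),
    IsErgodicAction (fun (g : Γ) (p : B × X) => (a g p.1, c g p.2)) (ν.prod μ)

/-! ### Points that become close are asymptotically not separated by a Borel set -/

/-- The part of an open set lying within distance `r` of its complement decreases to the
empty set as `r → 0`, so the cylinder over it has small measure. -/
theorem exists_collar_small {B X : Type} [MetricSpace B] [MeasurableSpace B]
    [BorelSpace B] [MeasurableSpace X] (m : Measure (B × X)) [IsFiniteMeasure m]
    (O : Set B) (hO : IsOpen O) (ε : ℝ≥0∞) (hε : 0 < ε) :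
    ∃ r : ℝ, 0 < r ∧
      m (Prod.fst ⁻¹' {b | b ∈ O ∧ Metric.infEDist b Oᶜ ≤ ENNReal.ofReal r}) ≤ ε := by
  have hmeas : ∀ r : ℝ, MeasurableSet (Prod.fst ⁻¹'
      {b | b ∈ O ∧ Metric.infEDist b Oᶜ ≤ ENNReal.ofReal r} : Set (B × X)) := by
    intro r
    apply measurable_fst
    exact hO.measurableSet.inter (measurableSet_le measurable_infEDist measurable_const)
  have h := tendsto_measure_iInter_atTop (μ := m) (s := fun n : ℕ => (Prod.fst ⁻¹'
      {b | b ∈ O ∧ Metric.infEDist b Oᶜ ≤ ENNReal.ofReal (1 / ((n : ℝ) + 1))} : Set (B × X)))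
      (fun n => (hmeas _).nullMeasurableSet)
      (fun i j hij p hp => ⟨hp.1, hp.2.trans (ENNReal.ofReal_le_ofReal
        (one_div_le_one_div_of_le (by positivity) (by exact_mod_cast Nat.succ_le_succ hij)))⟩)
      ⟨0, measure_ne_top _ _⟩
  have he : (⋂ n : ℕ, (Prod.fst ⁻¹'
      {b | b ∈ O ∧ Metric.infEDist b Oᶜ ≤ ENNReal.ofReal (1 / ((n : ℝ) + 1))} : Set (B × X)))
      = ∅ := by
    rw [eq_empty_iff_forall_notMem]
    rintro p hp
    rw [mem_iInter] at hp
    have h0 : Metric.infEDist p.1 Oᶜ = 0 := by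
      have ht : Tendsto (fun n : ℕ => ENNReal.ofReal (1 / ((n : ℝ) + 1))) atTop (nhds 0) := by
        have := ENNReal.tendsto_ofReal (tendsto_one_div_add_atTop_nhds_zero_nat (𝕜 := ℝ))
        simpa using this
      exact le_antisymm (ge_of_tendsto' ht fun n => (hp n).2) zero_le
    have := Metric.mem_closure_iff_infEDist_zero.2 h0
    rw [hO.isClosed_compl.closure_eq] at this
    exact this (hp 0).1
  rw [he, measure_empty] at h
  obtain ⟨n, hn⟩ := (h.eventually (ge_mem_nhds hε)).exists
  exact ⟨_, by positivity, hn⟩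

/-- If the laws of two random points `p`, `q` of `B × X` are dominated by a fixed measure, the
points share their `X`-coordinate and their `B`-coordinates become uniformly close, then a fixed
Borel set eventually fails to separate them, up to vanishing probability. Open boxes are handled
by a collar of the boundary; the general case is a Dynkin-class argument. -/
theorem tendsto_measure_separated {Ω B X : Type} [MeasurableSpace Ω] [MetricSpace B]
    [MeasurableSpace B] [BorelSpace B] [MeasurableSpace X]
    (m : Measure (B × X)) [IsFiniteMeasure m] (P : ℕ → Measure Ω) (p q : Ω → B × X)
    (K : ℝ≥0∞) (hK : K ≠ ∞)
    (hpb : ∀ n S, MeasurableSet S → P n (p ⁻¹' S) ≤ K * m S)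
    (hqb : ∀ n S, MeasurableSet S → P n (q ⁻¹' S) ≤ K * m S)
    (hsnd : ∀ ω, (p ω).2 = (q ω).2) (β : ℕ → ℝ) (hβ : Tendsto β atTop (nhds 0))
    (hd : ∀ n, ∀ᵐ ω ∂P n, dist (p ω).1 (q ω).1 ≤ β n)
    (S : Set (B × X)) (hS : MeasurableSet S) :
    Tendsto (fun n => P n {ω | ¬ (p ω ∈ S ↔ q ω ∈ S)}) atTop (nhds 0) := by
  have hdiv : ∀ ε : ℝ≥0∞, 0 < ε → ∃ η : ℝ≥0∞, 0 < η ∧ K * η + K * η ≤ ε := by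
    intro ε hε
    refine ⟨ε / 2 / (K + 1), ENNReal.div_pos (ENNReal.half_pos hε.ne').ne' (by simp [hK]), ?_⟩
    have : K * (ε / 2 / (K + 1)) ≤ ε / 2 :=
      (mul_le_mul' (le_self_add (b := 1)) le_rfl).trans ENNReal.mul_div_le
    exact (add_le_add this this).trans (ENNReal.add_halves ε).le
  have hgen : (Prod.instMeasurableSpace : MeasurableSpace (B × X)) =
      MeasurableSpace.generateFrom (image2 (· ×ˢ ·) {s : Set B | IsOpen s}
        {t : Set X | MeasurableSet t}) :=
    (generateFrom_eq_prod (BorelSpace.measurable_eq (α := B)).symm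
      MeasurableSpace.generateFrom_measurableSet
      ⟨fun _ => univ, fun _ => isOpen_univ, iUnion_const _⟩
      isCountablySpanning_measurableSet).symm
  induction S, hS using MeasurableSpace.induction_on_inter hgen
    (isPiSystem_isOpen.prod MeasurableSpace.isPiSystem_measurableSet) with
  | empty => simp
  | basic t ht =>
    obtain ⟨O, hO, t, ht, rfl⟩ := ht
    rw [ENNReal.tendsto_nhds_zero]
    intro ε hε
    obtain ⟨η, hη, hηε⟩ := hdiv ε hε
    obtain ⟨r, hr, hrη⟩ := exists_collar_small m O hO η hη
    have hDm : MeasurableSet (Prod.fst ⁻¹'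
      {b | b ∈ O ∧ Metric.infEDist b Oᶜ ≤ ENNReal.ofReal r} : Set (B × X)) :=
      measurable_fst (hO.measurableSet.inter
        (measurableSet_le measurable_infEDist measurable_const))
    set D : Set (B × X) := Prod.fst ⁻¹'
      {b | b ∈ O ∧ Metric.infEDist b Oᶜ ≤ ENNReal.ofReal r}
    filter_upwards [hβ.eventually (ge_mem_nhds hr)] with n hn
    calc P n {ω | ¬ (p ω ∈ O ×ˢ t ↔ q ω ∈ O ×ˢ t)}
        ≤ P n (p ⁻¹' D ∪ q ⁻¹' D) := by
          apply measure_mono_ae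
          filter_upwards [hd n] with ω hω hsep
          change ¬ (p ω ∈ O ×ˢ t ↔ q ω ∈ O ×ˢ t) at hsep
          have hclose : ∀ b b' : B, dist b b' ≤ r → b ∈ O → b' ∉ O →
              Metric.infEDist b Oᶜ ≤ ENNReal.ofReal r := by
            intro b b' hbb _ hb'
            refine (Metric.infEDist_le_edist_of_mem (show b' ∈ Oᶜ from hb')).trans ?_
            rw [edist_dist]
            exact ENNReal.ofReal_le_ofReal hbb
          have hs := hsnd ω
          by_cases h1 : (p ω).1 ∈ O <;> by_cases h2 : (q ω).1 ∈ O
          · exact absurd hsep (by simp [mem_prod, h1, h2, hs])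
          · exact Or.inl ⟨h1, hclose _ _ (hω.trans hn) h1 h2⟩
          · exact Or.inr ⟨h2, hclose _ _ (by rw [dist_comm]; exact hω.trans hn) h2 h1⟩
          · exact absurd hsep (by simp [mem_prod, h1, h2])
      _ ≤ P n (p ⁻¹' D) + P n (q ⁻¹' D) := measure_union_le _ _
      _ ≤ K * η + K * η := add_le_add
          ((hpb n D hDm).trans (mul_le_mul' le_rfl hrη))
          ((hqb n D hDm).trans (mul_le_mul' le_rfl hrη))
      _ ≤ ε := hηε
  | compl t htm ih => simpa only [mem_compl_iff, not_iff_not] using ih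
  | iUnion f hdisj hfm ih =>
    rw [ENNReal.tendsto_nhds_zero]
    intro ε hε
    obtain ⟨η, hη, hηε⟩ := hdiv (ε / 2) (ENNReal.half_pos hε.ne')
    have htail := tendsto_measure_biUnion_Ici_zero_of_pairwise_disjoint (μ := m)
      (fun i => (hfm i).nullMeasurableSet) hdisj
    obtain ⟨N, hN⟩ := (htail.eventually (ge_mem_nhds hη)).exists
    set D : Set (B × X) := ⋃ i ≥ N, f i
    have hDm : MeasurableSet D :=
      MeasurableSet.iUnion fun i => MeasurableSet.iUnion fun _ => hfm i
    have hsum : Tendsto (fun n => ∑ i ∈ Finset.range N, P n {ω | ¬ (p ω ∈ f i ↔ q ω ∈ f i)})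
        atTop (nhds 0) := by
      simpa using tendsto_finsetSum (Finset.range N) fun i _ => ih i
    filter_upwards [hsum.eventually (ge_mem_nhds (ENNReal.half_pos hε.ne'))] with n hn
    calc P n {ω | ¬ (p ω ∈ ⋃ i, f i ↔ q ω ∈ ⋃ i, f i)}
        ≤ P n ((⋃ i ∈ Finset.range N, {ω | ¬ (p ω ∈ f i ↔ q ω ∈ f i)}) ∪
            (p ⁻¹' D ∪ q ⁻¹' D)) := by
          apply measure_mono
          intro ω hω
          by_contra hcon
          simp only [mem_union, mem_iUnion, mem_preimage, Finset.mem_range, not_or, not_exists,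
            D, mem_ofPred_eq, not_not] at hcon hω
          obtain ⟨h1, h2, h3⟩ := hcon
          apply hω
          constructor
          · rintro ⟨i, hi⟩
            rcases lt_or_ge i N with h | h
            · exact ⟨i, (h1 i h).1 hi⟩
            · exact absurd hi (h2 i h)
          · rintro ⟨i, hi⟩
            rcases lt_or_ge i N with h | h
            · exact ⟨i, (h1 i h).2 hi⟩
            · exact absurd hi (h3 i h)
      _ ≤ ∑ i ∈ Finset.range N, P n {ω | ¬ (p ω ∈ f i ↔ q ω ∈ f i)} +
            (P n (p ⁻¹' D) + P n (q ⁻¹' D)) :=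
          (measure_union_le _ _).trans
            (add_le_add (measure_biUnion_finset_le _ _) (measure_union_le _ _))
      _ ≤ ε / 2 + (K * η + K * η) := add_le_add hn (add_le_add
          ((hpb n D hDm).trans (mul_le_mul' le_rfl hN))
          ((hqb n D hDm).trans (mul_le_mul' le_rfl hN)))
      _ ≤ ε / 2 + ε / 2 := add_le_add le_rfl hηε
      _ = ε := ENNReal.add_halves ε

/-! ### Marginals of the kernels and the associated measure on `Γ × B × B × X` -/

/-- Change of variables under the nonsingular map `a g`. -/
theorem lintegral_eq_lintegral_mul_rnD {Γ B : Type} [Group Γ] [MeasurableSpace B]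
    (a : Γ → B → B) (ν : Measure B) [IsFiniteMeasure ν] (hact : IsNonsingularAction a ν) (g : Γ)
    (f : B → ℝ≥0∞) (hf : Measurable f) :
    ∫⁻ b, f b ∂ν = ∫⁻ b, f (a g b) * rnD a ν g b ∂ν := by
  obtain ⟨hm, h1, hmul, hns⟩ := hact
  have hfg : Measurable fun b => f (a g b) := hf.comp (hm g)
  calc ∫⁻ b, f b ∂ν = ∫⁻ b, f (a g (a g⁻¹ b)) ∂ν := by simp [← hmul, h1]
    _ = ∫⁻ b, f (a g b) ∂(ν.map (a g⁻¹)) := (lintegral_map hfg (hm _)).symm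
    _ = ∫⁻ b, f (a g b) ∂(ν.withDensity (rnD a ν g)) := by
        rw [rnD, Measure.withDensity_rnDeriv_eq _ _ (hns g⁻¹).1]
    _ = ∫⁻ b, f (a g b) * rnD a ν g b ∂ν := by
        rw [lintegral_withDensity_eq_lintegral_mul _
          (show Measurable (rnD a ν g) from Measure.measurable_rnDeriv _ _) hfg]
        simp [mul_comm]

/-- The law of `b`, for `(g,b,b')` drawn from a normalized kernel `U`, is `ν`. -/
theorem tsum_lintegral_mul_fst {Γ B : Type} [Countable Γ] [MeasurableSpace B]
    (ν : Measure B) [IsFiniteMeasure ν] (U : Γ → B → B → ℝ≥0∞)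
    (hU : ∀ g, Measurable fun p : B × B => U g p.1 p.2)
    (h : ∀ b, ∑' g, ∫⁻ b', U g b b' ∂ν = 1) (w : B → ℝ≥0∞) (hw : Measurable w) :
    ∑' g, ∫⁻ b, ∫⁻ b', U g b b' * w b ∂ν ∂ν = ∫⁻ b, w b ∂ν := by
  have hU' : ∀ g, Measurable fun b => ∫⁻ b', U g b b' ∂ν := fun g => (hU g).lintegral_prod_right'
  have e : ∀ g b, ∫⁻ b', U g b b' * w b ∂ν = (∫⁻ b', U g b b' ∂ν) * w b := fun g b =>
    lintegral_mul_const _ ((hU g).comp measurable_prodMk_left)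
  simp_rw [e]
  have hm : ∀ g, Measurable fun b => (∫⁻ b', U g b b' ∂ν) * w b := fun g => (hU' g).mul hw
  rw [← lintegral_tsum fun g => (hm g).aemeasurable]
  simp_rw [ENNReal.tsum_mul_right, h, one_mul]

/-- The first bound of condition (4) says that the law of `b'` is at most `K • ν`. -/
theorem tsum_lintegral_mul_snd_le {Γ B : Type} [Countable Γ] [MeasurableSpace B]
    (ν : Measure B) [IsFiniteMeasure ν] (U : Γ → B → B → ℝ≥0∞)
    (hU : ∀ g, Measurable fun p : B × B => U g p.1 p.2) (K : ℝ≥0∞)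
    (h : ∀ᵐ b' ∂ν, ∫⁻ b, ∑' g, U g b b' ∂ν ≤ K) (w : B → ℝ≥0∞) (hw : Measurable w) :
    ∑' g, ∫⁻ b, ∫⁻ b', U g b b' * w b' ∂ν ∂ν ≤ K * ∫⁻ b, w b ∂ν := by
  have hs : ∀ g b', Measurable fun b => U g b b' := fun g b' =>
    (hU g).comp measurable_prodMk_right
  have hU' : ∀ g, Measurable fun b' => ∫⁻ b, U g b b' ∂ν := fun g => (hU g).lintegral_prod_left'
  have e : ∀ g, ∫⁻ b, ∫⁻ b', U g b b' * w b' ∂ν ∂ν = ∫⁻ b', (∫⁻ b, U g b b' ∂ν) * w b' ∂ν := by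
    intro g
    rw [lintegral_lintegral_swap
      (((hU g).mul (hw.comp measurable_snd)).aemeasurable)]
    exact lintegral_congr fun b' => lintegral_mul_const _ (hs g b')
  simp_rw [e]
  have hm : ∀ g, Measurable fun b' => (∫⁻ b, U g b b' ∂ν) * w b' := fun g => (hU' g).mul hw
  rw [← lintegral_tsum fun g => (hm g).aemeasurable, ← lintegral_const_mul _ hw]
  apply lintegral_mono_ae
  filter_upwards [h] with b' hb'
  rw [ENNReal.tsum_mul_right, ← lintegral_tsum fun g => (hs g b').aemeasurable]
  gcongr

/-- The second bound of condition (4) says that the law of `g⁻¹b'` is at most `K • ν`. -/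
theorem tsum_lintegral_mul_act_snd_le {Γ B : Type} [Group Γ] [Countable Γ] [MeasurableSpace B]
    (a : Γ → B → B) (ν : Measure B) [IsFiniteMeasure ν] (hact : IsNonsingularAction a ν)
    (U : Γ → B → B → ℝ≥0∞) (hU : ∀ g, Measurable fun p : B × B => U g p.1 p.2) (K : ℝ≥0∞)
    (h : ∀ᵐ b' ∂ν, ∫⁻ b, ∑' g, U g b (a g b') * rnD a ν g b' ∂ν ≤ K)
    (w : B → ℝ≥0∞) (hw : Measurable w) :
    ∑' g, ∫⁻ b, ∫⁻ b', U g b b' * w (a g⁻¹ b') ∂ν ∂ν ≤ K * ∫⁻ b, w b ∂ν := by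
  have hm := hact.1
  have hinv : ∀ g b, a g⁻¹ (a g b) = b := fun g b => by rw [← hact.2.2.1]; simp [hact.2.1]
  refine le_trans (le_of_eq ?_) (tsum_lintegral_mul_snd_le ν
    (fun g b b' => U g b (a g b') * rnD a ν g b') (fun g => ?_) K h w hw)
  · refine tsum_congr fun g => lintegral_congr fun b => ?_
    rw [lintegral_eq_lintegral_mul_rnD a ν hact g]
    · refine lintegral_congr fun b' => ?_
      rw [hinv, mul_right_comm]
    · exact ((hU g).comp measurable_prodMk_left).mul (hw.comp (hm _))
  · exact ((hU g).comp (measurable_fst.prodMk ((hm g).comp measurable_snd))).mul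
      ((Measure.measurable_rnDeriv _ _).comp measurable_snd)

/-- The third bound of condition (4) says that the law of `g⁻¹b` is at most `K • ν`. -/
theorem tsum_lintegral_mul_act_fst_le {Γ B : Type} [Group Γ] [Countable Γ] [MeasurableSpace B]
    (a : Γ → B → B) (ν : Measure B) [IsFiniteMeasure ν] (hact : IsNonsingularAction a ν)
    (U : Γ → B → B → ℝ≥0∞) (hU : ∀ g, Measurable fun p : B × B => U g p.1 p.2) (K : ℝ≥0∞)
    (h : ∀ᵐ b ∂ν, ∫⁻ b', ∑' g, U g (a g b) b' * rnD a ν g b ∂ν ≤ K)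
    (w : B → ℝ≥0∞) (hw : Measurable w) :
    ∑' g, ∫⁻ b, ∫⁻ b', U g b b' * w (a g⁻¹ b) ∂ν ∂ν ≤ K * ∫⁻ b, w b ∂ν := by
  refine le_trans (le_of_eq ?_) (tsum_lintegral_mul_act_snd_le a ν hact
    (fun g b' b => U g b b') (fun g => (hU g).comp measurable_swap) K h w hw)
  refine tsum_congr fun g => ?_
  exact lintegral_lintegral_swap
    (((hU g).mul ((hw.comp (hact.1 _)).comp measurable_fst)).aemeasurable)

/-- The measure `Υ(g,b,b') dg dν(b) dν(b') dμ(x)` on `Γ × B × B × X`: a random triple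
`(g,b,b')` drawn from the kernel `u`, together with an independent point `x`. -/
noncomputable def kernelMeasure {Γ B X : Type} [MeasurableSpace Γ] [MeasurableSpace B]
    [MeasurableSpace X] (ν : Measure B) (μ : Measure X) (u : Γ → B → B → ℝ) :
    Measure (Γ × B × B × X) :=
  (Measure.count.prod (ν.prod (ν.prod μ))).withDensity
    fun ω => ENNReal.ofReal (u ω.1 ω.2.1 ω.2.2.1)

theorem measurable_density {Γ B X : Type} [Countable Γ] [MeasurableSpace Γ]
    [DiscreteMeasurableSpace Γ] [MeasurableSpace B] [MeasurableSpace X] (u : Γ → B → B → ℝ)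
    (hu : ∀ g, Measurable fun p : B × B => u g p.1 p.2) :
    Measurable fun ω : Γ × B × B × X => ENNReal.ofReal (u ω.1 ω.2.1 ω.2.2.1) := by
  refine measurable_from_prod_countable_right fun g => ?_
  exact ENNReal.measurable_ofReal.comp ((hu g).comp
    (measurable_fst.prodMk (measurable_fst.comp measurable_snd)))

theorem kernelMeasure_apply {Γ B X : Type} [Countable Γ] [MeasurableSpace Γ]
    [DiscreteMeasurableSpace Γ] [MeasurableSpace B] [MeasurableSpace X] (ν : Measure B)
    [IsFiniteMeasure ν] (μ : Measure X) [IsFiniteMeasure μ] (u : Γ → B → B → ℝ)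
    (hu : ∀ g, Measurable fun p : B × B => u g p.1 p.2)
    (E : Set (Γ × B × B × X)) (hE : MeasurableSet E) :
    kernelMeasure ν μ u E =
      ∑' g, ∫⁻ b, ∫⁻ b', ENNReal.ofReal (u g b b') * μ {x | (g, b, b', x) ∈ E} ∂ν ∂ν := by
  have hd := measurable_density (X := X) u hu
  have hi := hd.indicator hE
  rw [kernelMeasure, withDensity_apply _ hE, ← lintegral_indicator hE,
    lintegral_prod _ hi.aemeasurable, lintegral_count]
  refine tsum_congr fun g => ?_
  have hig : Measurable fun y => E.indicator
      (fun ω : Γ × B × B × X => ENNReal.ofReal (u ω.1 ω.2.1 ω.2.2.1)) (g, y) :=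
    hi.comp measurable_prodMk_left
  rw [lintegral_prod _ hig.aemeasurable]
  refine lintegral_congr fun b => ?_
  have hib : Measurable fun y => E.indicator
      (fun ω : Γ × B × B × X => ENNReal.ofReal (u ω.1 ω.2.1 ω.2.2.1)) (g, b, y) :=
    hig.comp measurable_prodMk_left
  rw [lintegral_prod _ hib.aemeasurable]
  refine lintegral_congr fun b' => ?_
  have hEm : MeasurableSet {x | (g, b, b', x) ∈ E} :=
    (measurable_prodMk_left.comp (measurable_prodMk_left.comp measurable_prodMk_left)) hE
  rw [← lintegral_indicator_const hEm]
  refine lintegral_congr fun x => ?_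
  by_cases hx : (g, b, b', x) ∈ E <;> simp [indicator, hx]

/-- A property that holds almost everywhere on the support of the kernel holds almost surely for
`kernelMeasure`. -/
theorem ae_kernelMeasure {Γ B X : Type} [Countable Γ] [MeasurableSpace Γ]
    [DiscreteMeasurableSpace Γ] [MeasurableSpace B] [MeasurableSpace X] (ν : Measure B)
    [IsFiniteMeasure ν] (μ : Measure X) [IsFiniteMeasure μ] (u : Γ → B → B → ℝ)
    (hu : ∀ g, Measurable fun p : B × B => u g p.1 p.2)
    (Q : Γ → B → B → Prop) (hQ : ∀ g, MeasurableSet {p : B × B | Q g p.1 p.2})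
    (h : ∀ g, ∀ᵐ b ∂ν, ∀ᵐ b' ∂ν, 0 < u g b b' → Q g b b') :
    ∀ᵐ ω ∂kernelMeasure (X := X) ν μ u, Q ω.1 ω.2.1 ω.2.2.1 := by
  have hE : MeasurableSet {ω : Γ × B × B × X | ¬ Q ω.1 ω.2.1 ω.2.2.1} := by
    have : Measurable fun ω : Γ × B × B × X => ¬ Q ω.1 ω.2.1 ω.2.2.1 := by
      refine measurable_from_prod_countable_right fun g => ?_
      exact (measurableSet_setOfPred.1 (hQ g).compl).comp
        (measurable_fst.prodMk (measurable_fst.comp measurable_snd))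
    exact measurableSet_setOfPred.2 this
  rw [ae_iff, kernelMeasure_apply ν μ u hu _ hE, ENNReal.tsum_eq_zero]
  intro g
  rw [← lintegral_zero (μ := ν)]
  refine lintegral_congr_ae ?_
  filter_upwards [h g] with b hb
  rw [← lintegral_zero (μ := ν)]
  refine lintegral_congr_ae ?_
  filter_upwards [hb] with b' hb'
  by_cases hp : 0 < u g b b'
  · simp [hb' hp]
  · simp [ENNReal.ofReal_of_nonpos (not_lt.1 hp)]

/-! ### Lower bounds, and level sets of the cocycle -/

/-- By ergodicity on `B` alone, an invariant set of positive measure in `B × X` meets almost every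
fibre `{b} × X` in measure bounded below: the fibre measure is an invariant function of `b`. -/
theorem exists_slice_lower_bound {Γ B X : Type} [Group Γ] [MeasurableSpace B]
    [MeasurableSpace X] (a : Γ → B → B) (ν : Measure B) [IsFiniteMeasure ν]
    (herg : IsErgodicAction a ν) (c : Γ → X → X) (μ : Measure X) [IsFiniteMeasure μ]
    (hc : IsPmpAction c μ) (V : Set (B × X)) (hV : MeasurableSet V)
    (hinv : ∀ g b x, (a g b, c g x) ∈ V ↔ (b, x) ∈ V) (hpos : 0 < (ν.prod μ) V) :
    ∃ κ : ℝ≥0∞, κ ≠ 0 ∧ κ ≠ ∞ ∧ ∀ᵐ b ∂ν, κ ≤ μ {x | (b, x) ∈ V} := by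
  have hv : Measurable fun b => μ {x | (b, x) ∈ V} := measurable_measure_prodMk_left hV
  have hsec : ∀ b, MeasurableSet {x | (b, x) ∈ V} := fun b => measurable_prodMk_left hV
  have hvinv : ∀ g b, μ {x | (a g b, x) ∈ V} = μ {x | (b, x) ∈ V} := by
    intro g b
    conv_lhs => rw [← hc.2.2.2 g, Measure.map_apply (hc.1 g) (hsec _)]
    congr 1
    ext x
    exact hinv g b x
  have hne : ¬ ν (⋃ n : ℕ, {b | ((n : ℝ≥0∞) + 1)⁻¹ ≤ μ {x | (b, x) ∈ V}}) = 0 := by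
    intro h0
    apply hpos.ne'
    rw [Measure.measure_prod_null hV]
    refine measure_mono_null (fun b hb => ?_) h0
    have hb' : μ {x | (b, x) ∈ V} ≠ 0 := hb
    obtain ⟨n, hn⟩ := ENNReal.exists_inv_nat_lt hb'
    exact mem_iUnion.2 ⟨n, (ENNReal.inv_le_inv.2 le_self_add).trans hn.le⟩
  obtain ⟨n, hn⟩ := exists_measure_pos_of_not_measure_iUnion_null hne
  refine ⟨((n : ℝ≥0∞) + 1)⁻¹, by simp, by simp, ?_⟩
  rcases herg {b | ((n : ℝ≥0∞) + 1)⁻¹ ≤ μ {x | (b, x) ∈ V}}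
    (measurableSet_le measurable_const hv) (fun g => by ext b; simp [hvinv]) with h | h
  · exact absurd h hn.ne'
  · exact h

/-- Since `T` is in the support of a weak limit point, balls around `T` carry mass bounded below
along a subsequence; this is tested on a tent function. -/
theorem exists_frequently_le_ball (ζ : ℕ → Measure ℝ) (hfin : ∀ n, IsFiniteMeasure (ζ n))
    (ζlim : Measure ℝ) [IsProbabilityMeasure ζlim]
    (hweak : ∃ φ : ℕ → ℕ, StrictMono φ ∧ ∀ f : ℝ → ℝ, Continuous f →
      (∃ M : ℝ, ∀ x, |f x| ≤ M) →
      Tendsto (fun k => ∫ x, f x ∂(ζ (φ k))) atTop (nhds (∫ x, f x ∂ζlim)))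
    (T : ℝ) (hT : ∀ ε : ℝ, 0 < ε → 0 < ζlim (Metric.ball T ε)) (r : ℝ) (hr : 0 < r) :
    ∃ κ : ℝ≥0∞, κ ≠ 0 ∧ κ ≠ ∞ ∧ ∃ᶠ n in atTop, κ ≤ ζ n (Metric.ball T r) := by
  obtain ⟨φ, hφ, hlim⟩ := hweak
  set f : ℝ → ℝ := fun x => max 0 (1 - |x - T| / r)
  have hf0 : ∀ x, 0 ≤ f x := fun x => le_max_left _ _
  have hf1 : ∀ x, f x ≤ 1 := fun x => max_le zero_le_one (by
    have : 0 ≤ |x - T| / r := by positivity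
    linarith)
  have hfc : Continuous f := by fun_prop
  have hfb : ∀ x, ‖f x‖ ≤ 1 := fun x => by
    rw [Real.norm_eq_abs, abs_of_nonneg (hf0 x)]
    exact hf1 x
  have hfint : ∀ m : Measure ℝ, IsFiniteMeasure m → Integrable f m := fun m _ =>
    Integrable.of_bound hfc.aestronglyMeasurable 1 (ae_of_all _ hfb)
  have hpos : 0 < ∫ x, f x ∂ζlim := by
    rw [integral_pos_iff_support_of_nonneg hf0 (hfint _ inferInstance)]
    refine (hT r hr).trans_le (measure_mono fun x hx => ?_)
    rw [Metric.mem_ball, Real.dist_eq] at hx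
    have : |x - T| / r < 1 := (div_lt_one hr).2 hx
    exact (lt_max_of_lt_right (by linarith : (0 : ℝ) < 1 - |x - T| / r)).ne'
  have hle : ∀ n, ∫ x, f x ∂(ζ n) ≤ (ζ n).real (Metric.ball T r) := by
    intro n
    have := hfin n
    rw [← integral_indicator_one (Metric.isOpen_ball.measurableSet)]
    refine integral_mono (hfint _ inferInstance) ((integrable_const (1 : ℝ)).indicator
      Metric.isOpen_ball.measurableSet) fun x => ?_
    by_cases hx : x ∈ Metric.ball T r
    · simpa [hx] using hf1 x
    · rw [indicator_of_notMem hx]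
      rw [Metric.mem_ball, Real.dist_eq, not_lt] at hx
      have : 1 ≤ |x - T| / r := (one_le_div hr).2 hx
      exact max_le le_rfl (by linarith)
  refine ⟨ENNReal.ofReal ((∫ x, f x ∂ζlim) / 2), by simpa using hpos, ENNReal.ofReal_ne_top, ?_⟩
  have hev := (hlim f hfc ⟨1, hfb⟩).eventually (lt_mem_nhds (half_lt_self hpos))
  refine hφ.tendsto_atTop.frequently (hev.frequently.mono fun k hk => ?_)
  have := hfin (φ k)
  exact ENNReal.ofReal_le_of_le_toReal (hk.le.trans (hle _))

/-- The points of `B × X` from which some `g` leads into `A` with a cocycle value in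
`[kδ, (k+1)δ)`. -/
def levelSet {Γ B X : Type} (a : Γ → B → B) (c : Γ → X → X) (R : Γ → B → ℝ)
    (A : Set (B × X)) (δ : ℝ) (k : ℤ) : Set (B × X) :=
  {p | ∃ g, (a g p.1, c g p.2) ∈ A ∧ ⌊R g p.1 / δ⌋ = k}

/-- If no return to `A` has a cocycle value near `T`, then two points `(b,x)`, `(b',x)` which
lie in the same level sets, and whose images under `h` lie in the same level sets, cannot have
`R h b' - R h b` near `T`: following `(b,x) → (b',x) → h(b',x) → h(b,x) → (b,x)` would shift the
set of cocycle values of arrivals in `A` by this difference. -/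
theorem false_of_levelSet_agree {Γ B X : Type} [Group Γ] (a : Γ → B → B)
    (c : Γ → X → X) (ham : ∀ g h b, a (g * h) b = a g (a h b))
    (hcm : ∀ g h x, c (g * h) x = c g (c h x))
    (R : Γ → B → ℝ) (hR : ∀ g₁ g₂ b, R (g₂ * g₁) b = R g₂ (a g₁ b) + R g₁ b)
    (A : Set (B × X)) (T ε : ℝ) (hε : 0 < ε)
    (hsep : ∀ g b x, (b, x) ∈ A → (a g b, c g x) ∈ A → ε ≤ |R g b - T|)
    (C : ℝ) (K N : ℕ) (hN : (K : ℝ) + 2 + C / (ε / 4) ≤ N)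
    (h : Γ) (b b' : B) (x : X) (k : ℤ) (hk : |k| ≤ K)
    (hb : (b, x) ∈ levelSet a c R A (ε / 4) k)
    (h1 : ∀ l : ℤ, |l| ≤ N →
      ((b, x) ∈ levelSet a c R A (ε / 4) l ↔ (b', x) ∈ levelSet a c R A (ε / 4) l))
    (h2 : ∀ l : ℤ, |l| ≤ N → ((a h b, c h x) ∈ levelSet a c R A (ε / 4) l ↔
      (a h b', c h x) ∈ levelSet a c R A (ε / 4) l))
    (hC : |R h b| + |R h b'| ≤ C) (hs : |R h b' - R h b - T| < ε / 2) : False := by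
  have hδ : 0 < ε / 4 := by positivity
  have hC0 : 0 ≤ C := le_trans (by positivity) hC
  have hCδ : 0 ≤ C / (ε / 4) := by positivity
  have hfl : ∀ (t : ℝ) (j : ℤ), ⌊t / (ε / 4)⌋ = j → j * (ε / 4) ≤ t ∧ t < (j + 1) * (ε / 4) := by
    intro t j hj
    rw [Int.floor_eq_iff] at hj
    exact ⟨(le_div_iff₀ hδ).1 hj.1, (div_lt_iff₀ hδ).1 hj.2⟩
  have hkN : |k| ≤ N := by
    have : (K : ℝ) ≤ N := by linarith
    exact hk.trans (by exact_mod_cast this)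
  obtain ⟨g₁, hg₁A, hg₁⟩ := hb
  obtain ⟨g₂, hg₂A, hg₂⟩ := (h1 k hkN).1 ⟨g₁, hg₁A, hg₁⟩
  simp only at hg₁A hg₂A hg₁ hg₂
  have hact : ∀ g b, a (g * h⁻¹) (a h b) = a g b := fun g b => by
    rw [← ham, inv_mul_cancel_right]
  have hcct : ∀ g x, c (g * h⁻¹) (c h x) = c g x := fun g x => by
    rw [← hcm, inv_mul_cancel_right]
  have hval : R (g₂ * h⁻¹) (a h b') = R g₂ b' - R h b' := by
    have := hR h (g₂ * h⁻¹) b'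
    rw [inv_mul_cancel_right] at this
    linarith
  have e1 := hfl _ _ hg₁
  have e2 := hfl _ _ hg₂
  set l : ℤ := ⌊R (g₂ * h⁻¹) (a h b') / (ε / 4)⌋ with hl
  have e3 := hfl _ _ hl.symm
  have hlN : |l| ≤ N := by
    have hkR : |(k : ℝ)| ≤ K := by exact_mod_cast hk
    obtain ⟨hk1, hk2⟩ := abs_le.1 hkR
    have hb' : |R h b'| ≤ C := by linarith [abs_nonneg (R h b)]
    obtain ⟨hb1, hb2⟩ := abs_le.1 hb'
    have hCe : C = C / (ε / 4) * (ε / 4) := by field_simp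
    rw [hval] at e3
    have hlR : |(l : ℝ)| ≤ N := by
      rw [abs_le]
      constructor
      · have : (-(K : ℝ) - C / (ε / 4)) * (ε / 4) < (l + 1) * (ε / 4) := by nlinarith
        have := lt_of_mul_lt_mul_right this hδ.le
        linarith
      · have : (l : ℝ) * (ε / 4) < (K + 1 + C / (ε / 4)) * (ε / 4) := by nlinarith
        have := lt_of_mul_lt_mul_right this hδ.le
        linarith
    exact_mod_cast hlR
  obtain ⟨g₃, hg₃A, hg₃⟩ := (h2 l hlN).2 ⟨g₂ * h⁻¹, by simpa only [hact, hcct] using hg₂A, rfl⟩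
  simp only at hg₃A hg₃
  have e4 := hfl _ _ hg₃
  have hret := hsep (g₁ * (g₃ * h)⁻¹) (a g₃ (a h b)) (c g₃ (c h x)) hg₃A (by
    rw [← ham g₃, ← hcm g₃, ← ham, ← hcm, inv_mul_cancel_right]
    exact hg₁A)
  have hval' : R (g₁ * (g₃ * h)⁻¹) (a g₃ (a h b)) = R g₁ b - R g₃ (a h b) - R h b := by
    have := hR (g₃ * h) (g₁ * (g₃ * h)⁻¹) b
    rw [inv_mul_cancel_right, ham, hR h g₃] at this
    linarith
  rw [hval'] at hret
  rw [hval] at e3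
  obtain ⟨hs1, hs2⟩ := abs_lt.1 hs
  refine absurd hret (not_le.2 (abs_lt.2 ⟨?_, ?_⟩)) <;> nlinarith

/-! ### Returns with prescribed cocycle value, and the ratio set -/

theorem measurableSet_levelSet {Γ B X : Type} [Countable Γ] [MeasurableSpace B]
    [MeasurableSpace X] (a : Γ → B → B) (ha : ∀ g, Measurable (a g)) (c : Γ → X → X)
    (hc : ∀ g, Measurable (c g)) (R : Γ → B → ℝ) (hR : ∀ g, Measurable (R g))
    (A : Set (B × X)) (hA : MeasurableSet A) (δ : ℝ) (k : ℤ) :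
    MeasurableSet (levelSet a c R A δ k) := by
  have : levelSet a c R A δ k = ⋃ g, ({p | (a g p.1, c g p.2) ∈ A} ∩
      {p | ⌊R g p.1 / δ⌋ = k}) := by
    ext p
    simp [levelSet]
  rw [this]
  refine MeasurableSet.iUnion fun g => MeasurableSet.inter ?_ ?_
  · exact (((ha g).comp measurable_fst).prodMk ((hc g).comp measurable_snd)) hA
  · have hm : Measurable fun p : B × X => ⌊R g p.1 / δ⌋ :=
      (((hR g).comp measurable_fst).div_const δ).floor
    exact hm (measurableSet_singleton k)

/-- The core of the argument: in every product of the action with a measure-preserving action,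
every set of positive measure has returns with cocycle value arbitrarily close to `T`. Only
ergodicity of the action on `B` is needed. -/
theorem exists_return {Γ B : Type} [Group Γ] [Countable Γ] [MetricSpace B] [CompactSpace B]
    [MeasurableSpace B] [BorelSpace B]
    (ν : Measure B) [IsProbabilityMeasure ν] (a : Γ → B → B)
    (hact : IsNonsingularAction a ν)
    (R : Γ → B → ℝ) (hRmeas : ∀ g : Γ, Measurable (R g))
    (hRcoc : ∀ (g₁ g₂ : Γ) (b : B), R (g₂ * g₁) b = R g₂ (a g₁ b) + R g₁ b)
    (Υ : ℕ → Γ → B → B → ℝ) (C : ℝ) (hadm : IsAdmissibleFamily a ν R Υ C)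
    (ζ : ℕ → Measure ℝ)
    (hζ : ∀ (n : ℕ) (E : Set ℝ), MeasurableSet E →
      ζ n E = ∑' g : Γ, ∫⁻ b, ∫⁻ b',
        E.indicator (fun _ => (1 : ℝ≥0∞)) (R g⁻¹ b' - R g⁻¹ b) *
          ENNReal.ofReal (Υ n g b b') ∂ν ∂ν)
    (ζlim : Measure ℝ) (hζlim : IsProbabilityMeasure ζlim)
    (hweak : ∃ φ : ℕ → ℕ, StrictMono φ ∧ ∀ f : ℝ → ℝ, Continuous f →
      (∃ M : ℝ, ∀ x, |f x| ≤ M) →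
      Tendsto (fun k => ∫ x, f x ∂(ζ (φ k))) atTop (nhds (∫ x, f x ∂ζlim)))
    (T : ℝ) (hT : ∀ ε : ℝ, 0 < ε → 0 < ζlim (Metric.ball T ε))
    (herg : IsErgodicAction a ν)
    {X : Type} [MeasurableSpace X] (μ : Measure X) [IsProbabilityMeasure μ] (c : Γ → X → X)
    (hc : IsPmpAction c μ) (A : Set (B × X)) (hA : MeasurableSet A) (hApos : 0 < (ν.prod μ) A)
    (ε : ℝ) (hε : 0 < ε) :
    ∃ g : Γ, 0 < (ν.prod μ) {p | p ∈ A ∧ (a g p.1, c g p.2) ∈ A ∧ |R g p.1 - T| < ε} := by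
  by_contra hcon
  simp only [not_exists, not_lt, nonpos_iff_eq_zero] at hcon
  obtain ⟨hC0, hΥ0, hΥm, hΥ1, ⟨β, hβ, hΥβ⟩, hΥR, C₄, hC₄, hb1, hb2, hb3⟩ := hadm
  obtain ⟨hcm, hc1, hcmul, hcμ⟩ := id hc
  obtain ⟨ham, ha1, hamul, -⟩ := id hact
  let U : ℕ → Γ → B → B → ℝ≥0∞ := fun n g b b' => ENNReal.ofReal (Υ n g b b')
  have hU : ∀ n g, Measurable fun p : B × B => U n g p.1 p.2 := fun n g =>
    ENNReal.measurable_ofReal.comp (hΥm n g)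
  let _ : MeasurableSpace Γ := ⊤
  have : DiscreteMeasurableSpace Γ := ⟨fun _ => trivial⟩
  -- The part of `A` from which no return has a cocycle value near `T`.
  have hdm : ∀ g, Measurable fun p : B × X => (a g p.1, c g p.2) := fun g =>
    ((ham g).comp measurable_fst).prodMk ((hcm g).comp measurable_snd)
  have hRm : ∀ g, Measurable fun p : B × X => |R g p.1 - T| := fun g =>
    (((hRmeas g).comp measurable_fst).sub_const T).abs
  set A₀ : Set (B × X) :=
    A \ ⋃ g, {p | p ∈ A ∧ (a g p.1, c g p.2) ∈ A ∧ |R g p.1 - T| < ε}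
  have hA₀ : MeasurableSet A₀ := hA.diff (MeasurableSet.iUnion fun g =>
    hA.inter ((hdm g hA).inter (measurableSet_lt (hRm g) measurable_const)))
  have hA₀pos : 0 < (ν.prod μ) A₀ := by
    rwa [measure_sdiff_null (measure_iUnion_null hcon)]
  have hsep : ∀ g b x, (b, x) ∈ A₀ → (a g b, c g x) ∈ A₀ → ε ≤ |R g b - T| := by
    intro g b x hp hq
    by_contra hlt
    exact hp.2 (mem_iUnion.2 ⟨g, hp.1, hq.1, not_le.1 hlt⟩)
  let L : ℤ → Set (B × X) := levelSet a c R A₀ (ε / 4)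
  have hL : ∀ k, MeasurableSet (L k) := fun k =>
    measurableSet_levelSet a ham c hcm R hRmeas A₀ hA₀ _ k
  -- The saturation `V` of `A₀`, which is exhausted by the level sets.
  set V : Set (B × X) := ⋃ k, L k
  have hV : MeasurableSet V := MeasurableSet.iUnion hL
  have hVmem : ∀ p : B × X, p ∈ V ↔ ∃ g, (a g p.1, c g p.2) ∈ A₀ := by
    intro p
    simp only [V, L, levelSet, mem_iUnion]
    exact ⟨fun ⟨k, g, hg, _⟩ => ⟨g, hg⟩, fun ⟨g, hg⟩ => ⟨_, g, hg, rfl⟩⟩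
  have hVinv : ∀ g b x, (a g b, c g x) ∈ V ↔ (b, x) ∈ V := by
    intro g b x
    rw [hVmem, hVmem]
    constructor
    · rintro ⟨h, hh⟩
      exact ⟨h * g, by simpa only [hamul, hcmul] using hh⟩
    · rintro ⟨h, hh⟩
      refine ⟨h * g⁻¹, ?_⟩
      simp only at hh ⊢
      rwa [← hamul, ← hcmul, inv_mul_cancel_right]
  have hVpos : 0 < (ν.prod μ) V := hA₀pos.trans_le (measure_mono fun p hp =>
    (hVmem p).2 ⟨1, by rwa [ha1, hc1]⟩)
  obtain ⟨κ₁, hκ₁, hκ₁t, hVκ⟩ := exists_slice_lower_bound a ν herg c μ hc V hV hVinv hVpos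
  have hfin : ∀ n, IsFiniteMeasure (ζ n) := by
    intro n
    refine ⟨?_⟩
    rw [hζ n univ MeasurableSet.univ]
    have := tsum_lintegral_mul_fst ν (U n) (hU n) (hΥ1 n) (fun _ => 1) measurable_const
    simp only [mul_one, lintegral_const, measure_univ] at this
    simp only [indicator_univ, one_mul]
    exact this.trans_lt ENNReal.one_lt_top
  obtain ⟨κ₂, hκ₂, hκ₂t, hζκ⟩ := exists_frequently_le_ball ζ hfin ζlim hweak T hT (ε / 2)
    (half_pos hε)
  let P : ℕ → Measure (Γ × B × B × X) := fun n => kernelMeasure ν μ (Υ n)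
  have hPa : ∀ n E, MeasurableSet E → P n E = ∑' g, ∫⁻ b, ∫⁻ b',
      U n g b b' * μ {x | (g, b, b', x) ∈ E} ∂ν ∂ν := fun n E hE =>
    kernelMeasure_apply ν μ (Υ n) (hΥm n) E hE
  -- The four random points `(b,x)`, `(b',x)`, `g⁻¹(b,x)`, `g⁻¹(b',x)`.
  let p₁ : Γ × B × B × X → B × X := fun ω => (ω.2.1, ω.2.2.2)
  let q₁ : Γ × B × B × X → B × X := fun ω => (ω.2.2.1, ω.2.2.2)
  let p₂ : Γ × B × B × X → B × X := fun ω => (a ω.1⁻¹ ω.2.1, c ω.1⁻¹ ω.2.2.2)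
  let q₂ : Γ × B × B × X → B × X := fun ω => (a ω.1⁻¹ ω.2.2.1, c ω.1⁻¹ ω.2.2.2)
  have hp₁ : Measurable p₁ := by fun_prop
  have hq₁ : Measurable q₁ := by fun_prop
  have hp₂ : Measurable p₂ := measurable_from_prod_countable_right fun g =>
    ((ham g⁻¹).comp measurable_fst).prodMk
      ((hcm g⁻¹).comp (measurable_snd.comp measurable_snd))
  have hq₂ : Measurable q₂ := measurable_from_prod_countable_right fun g =>
    ((ham g⁻¹).comp (measurable_fst.comp measurable_snd)).prodMk
      ((hcm g⁻¹).comp (measurable_snd.comp measurable_snd))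
  have hw : ∀ S : Set (B × X), MeasurableSet S → Measurable fun b => μ {x | (b, x) ∈ S} :=
    fun S hS => measurable_measure_prodMk_left hS
  have hwS : ∀ S : Set (B × X), MeasurableSet S →
      ∫⁻ b, μ {x | (b, x) ∈ S} ∂ν = (ν.prod μ) S :=
    fun S hS => (Measure.prod_apply hS).symm
  have hpmp : ∀ S : Set (B × X), MeasurableSet S → ∀ g b,
      μ {x | (b, c g x) ∈ S} = μ {x | (b, x) ∈ S} := by
    intro S hS g b
    conv_rhs => rw [← hcμ g, Measure.map_apply (hcm g)
      (show MeasurableSet {x | (b, x) ∈ S} from measurable_prodMk_left hS)]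
    rfl
  have hPp₁ : ∀ n S, MeasurableSet S → P n (p₁ ⁻¹' S) = (ν.prod μ) S := by
    intro n S hS
    rw [hPa n _ (hp₁ hS), ← hwS S hS]
    exact tsum_lintegral_mul_fst ν (U n) (hU n) (hΥ1 n) _ (hw S hS)
  have hPq₁ : ∀ n S, MeasurableSet S → P n (q₁ ⁻¹' S) ≤ ENNReal.ofReal C₄ * (ν.prod μ) S := by
    intro n S hS
    rw [hPa n _ (hq₁ hS), ← hwS S hS]
    exact tsum_lintegral_mul_snd_le ν (U n) (hU n) _ (hb1 n) _ (hw S hS)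
  have hPp₂ : ∀ n S, MeasurableSet S → P n (p₂ ⁻¹' S) ≤ ENNReal.ofReal C₄ * (ν.prod μ) S := by
    intro n S hS
    rw [hPa n _ (hp₂ hS), ← hwS S hS]
    simp only [p₂, mem_preimage, hpmp S hS]
    exact tsum_lintegral_mul_act_fst_le a ν hact (U n) (hU n) _ (hb3 n) _ (hw S hS)
  have hPq₂ : ∀ n S, MeasurableSet S → P n (q₂ ⁻¹' S) ≤ ENNReal.ofReal C₄ * (ν.prod μ) S := by
    intro n S hS
    rw [hPa n _ (hq₂ hS), ← hwS S hS]
    simp only [q₂, mem_preimage, hpmp S hS]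
    exact tsum_lintegral_mul_act_snd_le a ν hact (U n) (hU n) _ (hb2 n) _ (hw S hS)
  have hd₁ : ∀ n, ∀ᵐ ω ∂P n, dist (p₁ ω).1 (q₁ ω).1 ≤ β n := fun n =>
    ae_kernelMeasure ν μ (Υ n) (hΥm n) (fun _ b b' => dist b b' ≤ β n)
      (fun g => measurableSet_le measurable_dist measurable_const)
      (fun g => ae_of_all _ fun b => ae_of_all _ fun b' h => (hΥβ n g b b' h).1)
  have hd₂ : ∀ n, ∀ᵐ ω ∂P n, dist (p₂ ω).1 (q₂ ω).1 ≤ β n := fun n =>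
    ae_kernelMeasure ν μ (Υ n) (hΥm n) (fun g b b' => dist (a g⁻¹ b) (a g⁻¹ b') ≤ β n)
      (fun g => measurableSet_le (((ham g⁻¹).comp measurable_fst).dist
        ((ham g⁻¹).comp measurable_snd)) measurable_const)
      (fun g => ae_of_all _ fun b => ae_of_all _ fun b' h => (hΥβ n g b b' h).2)
  have hRC : ∀ n, ∀ᵐ ω ∂P n, |R ω.1⁻¹ ω.2.1| + |R ω.1⁻¹ ω.2.2.1| ≤ C := fun n =>
    ae_kernelMeasure ν μ (Υ n) (hΥm n) (fun g b b' => |R g⁻¹ b| + |R g⁻¹ b'| ≤ C)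
      (fun g => measurableSet_le (((hRmeas g⁻¹).comp measurable_fst).abs.add
        ((hRmeas g⁻¹).comp measurable_snd).abs) measurable_const)
      (hΥR n)
  have hsep₁ : ∀ k, Tendsto (fun n => P n {ω | ¬ (p₁ ω ∈ L k ↔ q₁ ω ∈ L k)}) atTop (nhds 0) :=
    fun k => tendsto_measure_separated (ν.prod μ) P p₁ q₁ (max 1 (ENNReal.ofReal C₄))
      (by simp) (fun n S hS => (hPp₁ n S hS).le.trans
        (le_mul_of_one_le_left zero_le (le_max_left _ _)))
      (fun n S hS => (hPq₁ n S hS).trans (mul_le_mul' (le_max_right _ _) le_rfl))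
      (fun _ => rfl) β hβ hd₁ (L k) (hL k)
  have hsep₂ : ∀ k, Tendsto (fun n => P n {ω | ¬ (p₂ ω ∈ L k ↔ q₂ ω ∈ L k)}) atTop (nhds 0) :=
    fun k => tendsto_measure_separated (ν.prod μ) P p₂ q₂ (ENNReal.ofReal C₄)
      (by simp) hPp₂ hPq₂ (fun _ => rfl) β hβ hd₂ (L k) (hL k)
  -- The event that `(b,x) ∈ V` and the cocycle difference is near `T`.
  let G : Set (Γ × B × B × X) :=
    {ω | p₁ ω ∈ V ∧ R ω.1⁻¹ ω.2.2.1 - R ω.1⁻¹ ω.2.1 ∈ Metric.ball T (ε / 2)}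
  have hdiff : Measurable fun ω : Γ × B × B × X => R ω.1⁻¹ ω.2.2.1 - R ω.1⁻¹ ω.2.1 :=
    measurable_from_prod_countable_right fun g =>
      ((hRmeas g⁻¹).comp (measurable_fst.comp measurable_snd)).sub
        ((hRmeas g⁻¹).comp measurable_fst)
  have hG : MeasurableSet G := (hp₁ hV).inter (hdiff Metric.isOpen_ball.measurableSet)
  have hGlow : ∀ n, κ₁ * ζ n (Metric.ball T (ε / 2)) ≤ P n G := by
    intro n
    rw [hPa n G hG, hζ n _ Metric.isOpen_ball.measurableSet, ← ENNReal.tsum_mul_left]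
    refine ENNReal.tsum_le_tsum fun g => ?_
    rw [← lintegral_const_mul' _ _ hκ₁t]
    refine lintegral_mono_ae ?_
    filter_upwards [hVκ] with b hb
    rw [← lintegral_const_mul' _ _ hκ₁t]
    refine lintegral_mono fun b' => ?_
    by_cases hs : R g⁻¹ b' - R g⁻¹ b ∈ Metric.ball T (ε / 2)
    · rw [indicator_of_mem hs, one_mul, mul_comm]
      refine mul_le_mul' le_rfl (hb.trans (measure_mono fun x hx => ⟨hx, hs⟩))
    · rw [indicator_of_notMem hs, zero_mul, mul_zero]
      exact zero_le
  -- Truncation of the level sets at a large height.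
  set η : ℝ≥0∞ := κ₁ * κ₂ / 2 / 2
  have hκ : κ₁ * κ₂ ≠ 0 := mul_ne_zero hκ₁ hκ₂
  have hκt : κ₁ * κ₂ ≠ ∞ := ENNReal.mul_ne_top hκ₁t hκ₂t
  have hη : 0 < η := ENNReal.div_pos (ENNReal.half_pos hκ).ne' (by simp)
  let W : ℕ → Set (B × X) := fun K => V \ ⋃ k : ℤ, ⋃ _ : |k| ≤ K, L k
  have hWm : ∀ K, MeasurableSet (W K) := fun K => hV.diff
    (MeasurableSet.iUnion fun k => MeasurableSet.iUnion fun _ => hL k)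
  obtain ⟨K, hK⟩ : ∃ K, (ν.prod μ) (W K) ≤ η := by
    have h := tendsto_measure_iInter_atTop (μ := ν.prod μ) (s := W)
      (fun K => (hWm K).nullMeasurableSet)
      (fun i j hij => sdiff_subset_sdiff_right (iUnion_mono fun k => iUnion_mono' fun hk =>
        ⟨hk.trans (by exact_mod_cast hij), subset_rfl⟩))
      ⟨0, measure_ne_top _ _⟩
    have he : (⋂ K, W K) = ∅ := by
      rw [eq_empty_iff_forall_notMem]
      intro p hp
      rw [mem_iInter] at hp
      obtain ⟨k, hk⟩ := mem_iUnion.1 (hp 0).1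
      exact (hp k.natAbs).2 (mem_iUnion.2 ⟨k, mem_iUnion.2 ⟨by simp, hk⟩⟩)
    rw [he, measure_empty] at h
    exact (h.eventually (ge_mem_nhds hη)).exists
  obtain ⟨N, hN⟩ := exists_nat_ge ((K : ℝ) + 2 + C / (ε / 4))
  have hGsub : ∀ n, P n G ≤ P n (p₁ ⁻¹' W K ∪ ⋃ k ∈ Finset.Icc (-(N : ℤ)) N,
      ({ω | ¬ (p₁ ω ∈ L k ↔ q₁ ω ∈ L k)} ∪ {ω | ¬ (p₂ ω ∈ L k ↔ q₂ ω ∈ L k)})) := by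
    intro n
    apply measure_mono_ae
    filter_upwards [hRC n] with ω hω hωG
    obtain ⟨g, b, b', x⟩ := ω
    obtain ⟨hbV, hs⟩ := hωG
    by_contra hnot
    have hn1 : (b, x) ∉ W K := fun h => hnot (Or.inl h)
    have hn2 : ∀ l : ℤ, |l| ≤ N → ((b, x) ∈ L l ↔ (b', x) ∈ L l) ∧
        ((a g⁻¹ b, c g⁻¹ x) ∈ L l ↔ (a g⁻¹ b', c g⁻¹ x) ∈ L l) := by
      intro l hl
      by_contra hl'
      refine hnot (Or.inr (mem_biUnion (Finset.mem_coe.2 (Finset.mem_Icc.2 (abs_le.1 hl))) ?_))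
      rw [not_and_or] at hl'
      exact hl'
    obtain ⟨k, hk, hkL⟩ : ∃ k : ℤ, |k| ≤ K ∧ (b, x) ∈ L k := by
      by_contra h
      refine hn1 ⟨hbV, fun hmem => h ?_⟩
      simpa only [mem_iUnion, exists_prop] using hmem
    rw [Metric.mem_ball, Real.dist_eq] at hs
    exact false_of_levelSet_agree a c hamul hcmul R hRcoc A₀ T ε hε hsep C K N hN g⁻¹ b b' x k
      hk hkL (fun l hl => (hn2 l hl).1) (fun l hl => (hn2 l hl).2) hω hs
  have hsum : Tendsto (fun n => ∑ k ∈ Finset.Icc (-(N : ℤ)) N,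
      (P n {ω | ¬ (p₁ ω ∈ L k ↔ q₁ ω ∈ L k)} + P n {ω | ¬ (p₂ ω ∈ L k ↔ q₂ ω ∈ L k)}))
      atTop (nhds 0) := by
    simpa using tendsto_finsetSum (Finset.Icc (-(N : ℤ)) N)
      fun k _ => (hsep₁ k).add (hsep₂ k)
  obtain ⟨n, hn1, hn2⟩ := (hζκ.and_eventually (hsum.eventually (ge_mem_nhds hη))).exists
  have hfinal : κ₁ * κ₂ ≤ η + η := by
    calc κ₁ * κ₂ ≤ κ₁ * ζ n (Metric.ball T (ε / 2)) := mul_le_mul' le_rfl hn1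
      _ ≤ P n G := hGlow n
      _ ≤ _ := hGsub n
      _ ≤ P n (p₁ ⁻¹' W K) + ∑ k ∈ Finset.Icc (-(N : ℤ)) N,
          (P n {ω | ¬ (p₁ ω ∈ L k ↔ q₁ ω ∈ L k)} +
            P n {ω | ¬ (p₂ ω ∈ L k ↔ q₂ ω ∈ L k)}) :=
          (measure_union_le _ _).trans (add_le_add le_rfl
            ((measure_biUnion_finset_le _ _).trans
              (Finset.sum_le_sum fun k _ => measure_union_le _ _)))
      _ ≤ η + η := add_le_add ((hPp₁ n _ (hWm K)).le.trans hK) hn2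
  have hηκ : η + η = κ₁ * κ₂ / 2 := ENNReal.add_halves _
  rw [hηκ] at hfinal
  exact absurd hfinal (not_le.2 (ENNReal.half_lt_self hκ hκt))

/-- A measure-preserving factor does not contribute to the Radon–Nikodym derivative. -/
theorem rnD_prod {Γ B X : Type} [Group Γ] [MeasurableSpace B] [MeasurableSpace X]
    (a : Γ → B → B) (ν : Measure B) [IsFiniteMeasure ν] (hact : IsNonsingularAction a ν)
    (c : Γ → X → X) (μ : Measure X) [IsFiniteMeasure μ] (hc : IsPmpAction c μ) (g : Γ) :
    rnD (fun g (p : B × X) => (a g p.1, c g p.2)) (ν.prod μ) g =ᵐ[ν.prod μ]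
      fun p => rnD a ν g p.1 := by
  have hmeas : Measurable (rnD a ν g) := Measure.measurable_rnDeriv _ _
  have h : (ν.prod μ).map (fun p : B × X => (a g⁻¹ p.1, c g⁻¹ p.2)) =
      (ν.prod μ).withDensity fun p => rnD a ν g p.1 := by
    calc (ν.prod μ).map (fun p : B × X => (a g⁻¹ p.1, c g⁻¹ p.2))
        = (ν.map (a g⁻¹)).prod (μ.map (c g⁻¹)) :=
          (Measure.map_prod_map ν μ (hact.1 _) (hc.1 _)).symm
      _ = (ν.withDensity (rnD a ν g)).prod μ := by
          rw [hc.2.2.2, rnD, Measure.withDensity_rnDeriv_eq _ _ (hact.2.2.2 g⁻¹).1]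
      _ = _ := prod_withDensity_left hmeas
  rw [rnD, h]
  exact Measure.rnDeriv_withDensity _ (hmeas.comp measurable_fst)

/-- Returns with cocycle value near `T` to every set of positive measure put `exp T` in the ratio
set. The group element is nontrivial because its cocycle value is within `|T|` of `T ≠ 0`, while
the identity has cocycle value `0`. -/
theorem mem_ratioSet_of_exists_return {Γ Y : Type} [Group Γ] [MeasurableSpace Y]
    (d : Γ → Y → Y) (m : Measure Y) (hd : ∀ g, Measurable (d g)) (ρ : Γ → Y → ℝ)
    (hρ : ∀ g, Measurable (ρ g)) (hρ1 : ∀ y, ρ 1 y = 0)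
    (hrn : ∀ g, ∀ᵐ y ∂m, ENNReal.ofReal (Real.exp (ρ g y)) = rnD d m g y)
    (T : ℝ) (hT0 : T ≠ 0)
    (hret : ∀ A : Set Y, MeasurableSet A → 0 < m A → ∀ ε : ℝ, 0 < ε →
      ∃ g, 0 < m {y | y ∈ A ∧ d g y ∈ A ∧ |ρ g y - T| < ε}) :
    ENNReal.ofReal (Real.exp T) ∈ ratioSet d m := by
  refine Or.inl ⟨ENNReal.ofReal_ne_top, fun A hA hApos ε hε => ?_⟩
  obtain ⟨δ, hδ, hexp⟩ := Metric.continuousAt_iff.1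
    (Real.continuous_exp.continuousAt (x := T)) ε hε
  obtain ⟨g, hg⟩ := hret A hA hApos (min δ |T|) (lt_min hδ (abs_pos.2 hT0))
  refine ⟨_, fun y hy => hy.1, hA.inter ((hd g hA).inter (measurableSet_lt
    ((hρ g).sub_const T).abs measurable_const)), hg, g, ?_, fun y hy => hy.2.1, ?_⟩
  · rintro rfl
    obtain ⟨y, -, -, hy⟩ := nonempty_of_measure_ne_zero hg.ne'
    rw [hρ1, zero_sub, abs_neg] at hy
    exact absurd hy (not_lt.2 (min_le_right _ _))
  · filter_upwards [hrn g] with y hy hyA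
    rw [← hy, ENNReal.toReal_ofReal (Real.exp_pos _).le, ENNReal.toReal_ofReal (Real.exp_pos _).le]
    refine ⟨ENNReal.ofReal_ne_top, ?_⟩
    exact hexp (lt_of_lt_of_le hyA.2.2 (min_le_left _ _))

/-- Corollary 3.3 of the paper: in the setting of Theorem 3.2, if some
nonzero `T` lies in the support of the weak* limit `ζlim`, then the action is not of type
`III₀` when ergodic, and not of stable type `III₀` when weakly mixing. -/
theorem stmt4 {Γ B : Type} [Group Γ] [Countable Γ] [MetricSpace B] [CompactSpace B]
    [MeasurableSpace B] [BorelSpace B]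
    (ν : Measure B) [IsProbabilityMeasure ν] (a : Γ → B → B)
    (hact : IsNonsingularAction a ν)
    (R : Γ → B → ℝ) (hRmeas : ∀ g : Γ, Measurable (R g))
    (hRcoc : ∀ (g₁ g₂ : Γ) (b : B), R (g₂ * g₁) b = R g₂ (a g₁ b) + R g₁ b)
    (hRrn : ∀ g : Γ, ∀ᵐ b ∂ν, ENNReal.ofReal (Real.exp (R g b)) = rnD a ν g b)
    (Υ : ℕ → Γ → B → B → ℝ) (C : ℝ) (hadm : IsAdmissibleFamily a ν R Υ C)
    (ζ : ℕ → Measure ℝ)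
    (hζ : ∀ (n : ℕ) (E : Set ℝ), MeasurableSet E →
      ζ n E = ∑' g : Γ, ∫⁻ b, ∫⁻ b',
        E.indicator (fun _ => (1 : ℝ≥0∞)) (R g⁻¹ b' - R g⁻¹ b) *
          ENNReal.ofReal (Υ n g b b') ∂ν ∂ν)
    (ζlim : Measure ℝ) (hζlim : IsProbabilityMeasure ζlim)
    (hweak : ∃ φ : ℕ → ℕ, StrictMono φ ∧ ∀ f : ℝ → ℝ, Continuous f →
      (∃ M : ℝ, ∀ x, |f x| ≤ M) →
      Tendsto (fun k => ∫ x, f x ∂(ζ (φ k))) atTop (nhds (∫ x, f x ∂ζlim)))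
    (T : ℝ) (hT0 : T ≠ 0) (hT : ∀ ε : ℝ, 0 < ε → 0 < ζlim (Metric.ball T ε)) :
    (IsErgodicAction a ν → ratioSet a ν ≠ {0, 1, ∞}) ∧
    (IsWeaklyMixing a ν → stableRatioSet a ν ≠ {0, 1, ∞}) := by
  have hR1 : ∀ b, R 1 b = 0 := fun b => by
    have := hRcoc 1 1 b
    rw [mul_one, hact.2.1] at this
    linarith
  have hne : ENNReal.ofReal (Real.exp T) ∉ ({0, 1, ∞} : Set ℝ≥0∞) := by
    simp only [mem_insert_iff, mem_singleton_iff, ENNReal.ofReal_eq_zero, not_le,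
      ENNReal.ofReal_eq_one, Real.exp_eq_one_iff, ENNReal.ofReal_ne_top, or_false, not_or]
    exact ⟨Real.exp_pos T, hT0⟩
  constructor
  · intro herg heq
    apply hne
    rw [← heq]
    refine mem_ratioSet_of_exists_return a ν hact.1 R hRmeas hR1 hRrn T hT0 ?_
    intro A hA hApos ε hε
    -- The action itself is treated as its product with the trivial action on a point.
    obtain ⟨g, hg⟩ := exists_return ν a hact R hRmeas hRcoc Υ C hadm ζ hζ ζlim hζlim hweak T hT
      herg (Measure.dirac ()) (fun _ x => x)
      ⟨fun _ => measurable_id, fun _ => rfl, fun _ _ _ => rfl, fun _ => Measure.map_id⟩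
      (A ×ˢ univ) (hA.prod MeasurableSet.univ) (by simpa using hApos) ε hε
    refine ⟨g, ?_⟩
    have hset : {p : B × Unit | p ∈ A ×ˢ (univ : Set Unit) ∧
        (a g p.1, p.2) ∈ A ×ˢ (univ : Set Unit) ∧ |R g p.1 - T| < ε} =
        {b | b ∈ A ∧ a g b ∈ A ∧ |R g b - T| < ε} ×ˢ univ := by
      ext p
      simp
      tauto
    rw [hset, Measure.prod_prod, measure_univ, mul_one] at hg
    exact hg
  · intro hwm heq
    have herg : IsErgodicAction a ν := by
      intro A hA hinv
      have h := hwm Unit _ (Measure.dirac ()) (fun _ x => x) inferInstance inferInstance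
        ⟨fun _ => measurable_id, fun _ => rfl, fun _ _ _ => rfl, fun _ => Measure.map_id⟩
        (fun E _ _ => by
          rcases eq_empty_or_nonempty E with h | ⟨⟨⟩, h⟩
          · simp [h]
          · right
            have : Eᶜ = ∅ := by
              ext ⟨⟩
              simpa using h
            simp [this])
        (A ×ˢ univ) (hA.prod MeasurableSet.univ) (fun g => by
          ext p
          have := Set.ext_iff.1 (hinv g) p.1
          simpa using this)
      have hcompl : (A ×ˢ (univ : Set Unit))ᶜ = Aᶜ ×ˢ univ := by
        ext p
        simp
      rw [hcompl] at h
      simpa using h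
    apply hne
    rw [← heq]
    intro X _ μ c _ _ hc
    refine mem_ratioSet_of_exists_return
      (fun (g : Γ) (p : B × X) => (a g p.1, c g p.2)) (ν.prod μ)
      (fun g => ((hact.1 g).comp measurable_fst).prodMk ((hc.1 g).comp measurable_snd))
      (fun g p => R g p.1) (fun g => (hRmeas g).comp measurable_fst) (fun p => hR1 p.1)
      (fun g => ?_) T hT0 ?_
    · filter_upwards [rnD_prod a ν hact c μ hc g,
        Measure.quasiMeasurePreserving_fst.ae (hRrn g)] with p hp hp'
      rw [hp]
      exact hp'
    · intro A hA hApos ε hε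
      exact exists_return ν a hact R hRmeas hRcoc Υ C hadm ζ hζ ζlim hζlim hweak T hT herg μ c hc
        A hA hApos ε hε
end

section
/- In the admissible-family setting, for every f ∈ L¹(ν×θ) one has lim_{n→∞} ‖f − W_n f‖₁ = 0 and lim_{n→∞} ‖X_n f − Y_n f‖₁ = 0. -/
/-!
All four functions in the statement (`f` included, since the kernels have total mass one) are
instances of one averaging operator: for `X = B × ℝ` with `μ = ν × θ` and a placement map
`φ g : X × B → X`, put
`(T^φ f)(p) = ∑' g, ∫ f (φ g (p, b')) * Υ n g p.1 b' ∂ν`.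
The placement map is `p` for `f`, `(b', t)` for `W_n`, `(g⁻¹b', t + R(g⁻¹, b'))` for `X_n` and
`(g⁻¹b, t + R(g⁻¹, b'))` for `Y_n`.

Conditions (3) and (4), together with the bound on the translates of `θ`, say that the weighted
measure `∑ g, Υ n g · (μ × ν)` is pushed by each `φ` to at most a constant multiple of `μ`,
uniformly in `n`; this makes `T^φ` bounded on `L¹(μ)`, uniformly in `n`. The translation is removed
by `lintegral_fiber_le`, and the maps `b ↦ g⁻¹b` by the change of variables
`lintegral_smul_mul_rnD`. Condition (2) says that the two maps being compared are within `β n` of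
each other where the weight is positive. Approximating `f` in `L¹(μ)` by a continuous function of
compact support, which is uniformly continuous, gives the limit (`tendsto_kernelOp_sub`).
-/

open MeasureTheory Filter Set
open scoped ENNReal

/-- The operator `W_n`: `(W_n f)(b,t) = Σ_g ∫ f(b',t) Υ_n(g,b,b') dν(b')`. -/
noncomputable def Wop {Γ B : Type} [MeasurableSpace B] (ν : Measure B)
    (Υ : ℕ → Γ → B → B → ℝ) (n : ℕ) (f : B × ℝ → ℝ) (p : B × ℝ) : ℝ :=
  ∑' g : Γ, ∫ b', f (b', p.2) * Υ n g p.1 b' ∂ν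

/-- The operator `X_n`: `(X_n f)(b,t) = Σ_g ∫ f(g⁻¹b', t + R(g⁻¹,b')) Υ_n(g,b,b') dν(b')`. -/
noncomputable def Xop {Γ B : Type} [Group Γ] [MeasurableSpace B] (a : Γ → B → B)
    (ν : Measure B) (R : Γ → B → ℝ) (Υ : ℕ → Γ → B → B → ℝ) (n : ℕ)
    (f : B × ℝ → ℝ) (p : B × ℝ) : ℝ :=
  ∑' g : Γ, ∫ b', f (a g⁻¹ b', p.2 + R g⁻¹ b') * Υ n g p.1 b' ∂ν

/-- The operator `Y_n`: `(Y_n f)(b,t) = Σ_g ∫ f(g⁻¹b, t + R(g⁻¹,b')) Υ_n(g,b,b') dν(b')`. -/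
noncomputable def Yop {Γ B : Type} [Group Γ] [MeasurableSpace B] (a : Γ → B → B)
    (ν : Measure B) (R : Γ → B → ℝ) (Υ : ℕ → Γ → B → B → ℝ) (n : ℕ)
    (f : B × ℝ → ℝ) (p : B × ℝ) : ℝ :=
  ∑' g : Γ, ∫ b', f (a g⁻¹ p.1, p.2 + R g⁻¹ b') * Υ n g p.1 b' ∂ν

/-- The operator `Z_n`:
`(Z_n f)(b,t) = Σ_g ∫ f(b, t + R(g⁻¹,b') − R(g⁻¹,b)) Υ_n(g,b,b') dν(b')`. -/
noncomputable def Zop {Γ B : Type} [Group Γ] [MeasurableSpace B] (a : Γ → B → B)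
    (ν : Measure B) (R : Γ → B → ℝ) (Υ : ℕ → Γ → B → B → ℝ) (n : ℕ)
    (f : B × ℝ → ℝ) (p : B × ℝ) : ℝ :=
  ∑' g : Γ, ∫ b', f (p.1, p.2 + R g⁻¹ b' - R g⁻¹ p.1) * Υ n g p.1 b' ∂ν

/-! ### Averaging operators of weighted families -/

theorem enorm_mul_weight (x : ℝ) {w : ℝ} (hw : 0 ≤ w) :
    ‖x * w‖ₑ = ‖x‖ₑ * ENNReal.ofReal w := by
  rw [enorm_mul, Real.enorm_of_nonneg hw]

/-- The averaging operator respects a.e. equality: by `H`, the weighted sum of the pullbacks of a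
null set along `φ` has measure zero. -/
theorem kernelOp_congr_ae {Γ X Y : Type} [Countable Γ] [MeasurableSpace X] [MeasurableSpace Y]
    (μ : Measure X) (ν : Measure Y) [SFinite ν]
    (w : Γ → X × Y → ℝ) (hwm : ∀ g, Measurable (w g))
    (φ : Γ → X × Y → X) (hφ : ∀ g, Measurable (φ g)) (K : ℝ≥0∞)
    (H : ∀ F : X → ℝ≥0∞, Measurable F →
      ∑' g, ∫⁻ q, F (φ g q) * ENNReal.ofReal (w g q) ∂(μ.prod ν) ≤ K * ∫⁻ x, F x ∂μ)
    (hw : ∀ g q, 0 ≤ w g q)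
    (f f' : X → ℝ) (hff : f =ᵐ[μ] f') :
    (fun p => ∑' g, ∫ y, f (φ g (p, y)) * w g (p, y) ∂ν) =ᵐ[μ]
      (fun p => ∑' g, ∫ y, f' (φ g (p, y)) * w g (p, y) ∂ν) := by
  set N := toMeasurable μ {x | f x ≠ f' x} with hN
  have hNm : MeasurableSet N := measurableSet_toMeasurable _ _
  have hN0 : μ N = 0 := by rw [hN, measure_toMeasurable]; exact hff
  have hmem : ∀ x, x ∉ N → f x = f' x := by
    intro x hx
    by_contra h
    exact hx (subset_toMeasurable _ _ h)
  have hFm : Measurable (N.indicator (1 : X → ℝ≥0∞)) := measurable_one.indicator hNm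
  have h0 := H _ hFm
  rw [lintegral_indicator_one hNm, hN0, mul_zero, nonpos_iff_eq_zero, ENNReal.tsum_eq_zero] at h0
  have key : ∀ g, ∀ᵐ p ∂μ, ∀ᵐ y ∂ν, f (φ g (p, y)) * w g (p, y) = f' (φ g (p, y)) * w g (p, y) := by
    intro g
    apply Measure.ae_ae_of_ae_prod (p := fun q => f (φ g q) * w g q = f' (φ g q) * w g q)
    have := (lintegral_eq_zero_iff ((hFm.comp (hφ g)).mul (hwm g).ennreal_ofReal)).1 (h0 g)
    filter_upwards [this] with q hq
    by_cases hqN : φ g q ∈ N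
    · have : w g q = 0 := by
        simp [hqN] at hq
        exact le_antisymm hq (hw g q)
      simp [this]
    · rw [hmem _ hqN]
  filter_upwards [ae_all_iff.2 key] with p hp
  exact tsum_congr fun g => integral_congr_ae (hp g)

/-- For a.e. `p`, the integrals and the sum defining the operator converge absolutely, so its
value is not a junk value. -/
theorem kernelOp_summable {Γ X Y : Type} [Countable Γ] [MeasurableSpace X] [MeasurableSpace Y]
    (μ : Measure X) (ν : Measure Y) [SFinite ν]
    (w : Γ → X × Y → ℝ) (hwm : ∀ g, Measurable (w g))
    (φ : Γ → X × Y → X) (hφ : ∀ g, Measurable (φ g)) (K : ℝ≥0∞) (hK : K ≠ ∞)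
    (H : ∀ F : X → ℝ≥0∞, Measurable F →
      ∑' g, ∫⁻ q, F (φ g q) * ENNReal.ofReal (w g q) ∂(μ.prod ν) ≤ K * ∫⁻ x, F x ∂μ)
    (hw : ∀ g q, 0 ≤ w g q)
    (f : X → ℝ) (hfm : Measurable f) (hf : Integrable f μ) :
    ∀ᵐ p ∂μ, (∀ g, Integrable (fun y => f (φ g (p, y)) * w g (p, y)) ν) ∧
      Summable fun g => ∫ y, f (φ g (p, y)) * w g (p, y) ∂ν := by
  have hm : ∀ g, Measurable fun q => ‖f (φ g q)‖ₑ * ENNReal.ofReal (w g q) := fun g =>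
    (hfm.comp (hφ g)).enorm.mul (hwm g).ennreal_ofReal
  have hlt : ∫⁻ p, ∑' g, ∫⁻ y, ‖f (φ g (p, y))‖ₑ * ENNReal.ofReal (w g (p, y)) ∂ν ∂μ ≠ ∞ := by
    rw [lintegral_tsum fun g => ((hm g).lintegral_prod_right').aemeasurable]
    have h1 := H (fun x => ‖f x‖ₑ) hfm.enorm
    simp_rw [fun g => lintegral_prod (μ := μ) (ν := ν) _ (hm g).aemeasurable] at h1
    exact ne_top_of_le_ne_top (ENNReal.mul_ne_top hK hf.2.ne) h1
  have := ae_lt_top (Measurable.tsum fun g => (hm g).lintegral_prod_right') hlt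
  filter_upwards [this] with p hp
  refine ⟨fun g => ⟨?_, ?_⟩, ?_⟩
  · exact (((hfm.comp (hφ g)).mul (hwm g)).comp measurable_prodMk_left).aestronglyMeasurable
  · rw [hasFiniteIntegral_iff_enorm]
    simp_rw [enorm_mul_weight _ (hw _ _)]
    exact (ENNReal.le_tsum g).trans_lt hp
  · have : ∑' g, ‖∫ y, f (φ g (p, y)) * w g (p, y) ∂ν‖ₑ ≠ ∞ := by
      refine ne_top_of_le_ne_top hp.ne (ENNReal.tsum_le_tsum fun g => ?_)
      refine (enorm_integral_le_lintegral_enorm _).trans_eq ?_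
      simp_rw [enorm_mul_weight _ (hw _ _)]
    exact (tsum_enorm_ne_top_iff_summable_norm.1 this).of_norm

theorem kernelOp_sub_le {Γ X Y : Type} [Countable Γ] [MeasurableSpace X] [MeasurableSpace Y]
    (μ : Measure X) (ν : Measure Y) [SFinite ν]
    (w : Γ → X × Y → ℝ) (hwm : ∀ g, Measurable (w g))
    (φ ψ : Γ → X × Y → X) (hφ : ∀ g, Measurable (φ g)) (hψ : ∀ g, Measurable (ψ g))
    (K L : ℝ≥0∞) (hK : K ≠ ∞) (hL : L ≠ ∞)
    (Hφ : ∀ F : X → ℝ≥0∞, Measurable F →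
      ∑' g, ∫⁻ q, F (φ g q) * ENNReal.ofReal (w g q) ∂(μ.prod ν) ≤ K * ∫⁻ x, F x ∂μ)
    (Hψ : ∀ F : X → ℝ≥0∞, Measurable F →
      ∑' g, ∫⁻ q, F (ψ g q) * ENNReal.ofReal (w g q) ∂(μ.prod ν) ≤ L * ∫⁻ x, F x ∂μ)
    (hw : ∀ g q, 0 ≤ w g q)
    (f : X → ℝ) (hfm : Measurable f) (hf : Integrable f μ) :
    ∫⁻ p, ‖(∑' g, ∫ y, f (φ g (p, y)) * w g (p, y) ∂ν) -
        ∑' g, ∫ y, f (ψ g (p, y)) * w g (p, y) ∂ν‖ₑ ∂μ ≤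
      ∑' g, ∫⁻ q, ‖f (φ g q) - f (ψ g q)‖ₑ * ENNReal.ofReal (w g q) ∂(μ.prod ν) := by
  have hm : ∀ g, Measurable fun q => ‖f (φ g q) - f (ψ g q)‖ₑ * ENNReal.ofReal (w g q) := fun g =>
    ((hfm.comp (hφ g)).sub (hfm.comp (hψ g))).enorm.mul (hwm g).ennreal_ofReal
  simp_rw [fun g => lintegral_prod (μ := μ) (ν := ν) _ (hm g).aemeasurable]
  rw [← lintegral_tsum fun g => ((hm g).lintegral_prod_right').aemeasurable]
  apply lintegral_mono_ae
  filter_upwards [kernelOp_summable μ ν w hwm φ hφ K hK Hφ hw f hfm hf,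
    kernelOp_summable μ ν w hwm ψ hψ L hL Hψ hw f hfm hf] with p h1 h2
  rw [← h1.2.tsum_sub h2.2]
  refine enorm_tsum_le_tsum_enorm.trans (ENNReal.tsum_le_tsum fun g => ?_)
  rw [← integral_sub (h1.1 g) (h2.1 g)]
  refine (enorm_integral_le_lintegral_enorm _).trans_eq ?_
  simp_rw [← sub_mul, enorm_mul_weight _ (hw _ _)]

/-- If the placement maps `φ`, `ψ` push the weighted measures to at most `K μ` and `L μ`, and
`φ`, `ψ` are uniformly close on the supports of the weights, then the two averaging operators
differ by `o(1)` in `L¹`. The function is approximated by a uniformly continuous `h`. -/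
theorem tendsto_kernelOp_sub {Γ X Y : Type} [Countable Γ] [MetricSpace X] [LocallyCompactSpace X]
    [MeasurableSpace X] [BorelSpace X] [MeasurableSpace Y]
    (μ : Measure X) [μ.Regular] (ν : Measure Y) [SFinite ν]
    (w : ℕ → Γ → X × Y → ℝ) (hwm : ∀ n g, Measurable (w n g)) (hw : ∀ n g q, 0 ≤ w n g q)
    (hmass : ∀ n, ∑' g, ∫⁻ q, ENNReal.ofReal (w n g q) ∂(μ.prod ν) ≤ 1)
    (φ ψ : Γ → X × Y → X) (hφ : ∀ g, Measurable (φ g)) (hψ : ∀ g, Measurable (ψ g))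
    (K L : ℝ≥0∞) (hK : K ≠ ∞) (hL : L ≠ ∞)
    (Hφ : ∀ n, ∀ F : X → ℝ≥0∞, Measurable F →
      ∑' g, ∫⁻ q, F (φ g q) * ENNReal.ofReal (w n g q) ∂(μ.prod ν) ≤ K * ∫⁻ x, F x ∂μ)
    (Hψ : ∀ n, ∀ F : X → ℝ≥0∞, Measurable F →
      ∑' g, ∫⁻ q, F (ψ g q) * ENNReal.ofReal (w n g q) ∂(μ.prod ν) ≤ L * ∫⁻ x, F x ∂μ)
    (β : ℕ → ℝ) (hβ : Tendsto β atTop (nhds 0))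
    (hdist : ∀ n g q, 0 < w n g q → dist (φ g q) (ψ g q) ≤ β n)
    (f : X → ℝ) (hf : Integrable f μ) :
    Tendsto (fun n => eLpNorm (fun p => (∑' g, ∫ y, f (φ g (p, y)) * w n g (p, y) ∂ν) -
        ∑' g, ∫ y, f (ψ g (p, y)) * w n g (p, y) ∂ν) 1 μ) atTop (nhds 0) := by
  obtain ⟨f', hf'sm, hff'⟩ := hf.1
  have hf'm := hf'sm.measurable
  have hf' : Integrable f' μ := hf.congr hff'
  have hle : ∀ n, eLpNorm (fun p => (∑' g, ∫ y, f (φ g (p, y)) * w n g (p, y) ∂ν) -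
        ∑' g, ∫ y, f (ψ g (p, y)) * w n g (p, y) ∂ν) 1 μ ≤
      ∑' g, ∫⁻ q, ‖f' (φ g q) - f' (ψ g q)‖ₑ * ENNReal.ofReal (w n g q) ∂(μ.prod ν) := by
    intro n
    rw [eLpNorm_one_eq_lintegral_enorm]
    refine le_trans (le_of_eq (lintegral_congr_ae ?_))
      (kernelOp_sub_le μ ν (w n) (hwm n) φ ψ hφ hψ K L hK hL (Hφ n) (Hψ n) (hw n) f' hf'm hf')
    filter_upwards [kernelOp_congr_ae μ ν (w n) (hwm n) φ hφ K (Hφ n) (hw n) f f' hff',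
      kernelOp_congr_ae μ ν (w n) (hwm n) ψ hψ L (Hψ n) (hw n) f f' hff'] with p h1 h2
    rw [h1, h2]
  rw [ENNReal.tendsto_nhds_zero]
  intro ε hε
  -- three error terms: approximation along `φ`, along `ψ`, and the modulus of continuity
  obtain ⟨δ, hδ0, hδ⟩ : ∃ δ : ℝ≥0∞, δ ≠ 0 ∧ K * δ + δ + L * δ ≤ ε := by
    rcases eq_or_ne ε ∞ with rfl | hεt
    · exact ⟨1, one_ne_zero, le_top⟩
    have hs : K + 1 + L ≠ ∞ := by finiteness
    have hs0 : K + 1 + L ≠ 0 := by simp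
    refine ⟨ε / (K + 1 + L), (ENNReal.div_pos hε.ne' hs).ne', ?_⟩
    have : K * (ε / (K + 1 + L)) + ε / (K + 1 + L) + L * (ε / (K + 1 + L))
      = (K + 1 + L) * (ε / (K + 1 + L)) := by ring
    rw [this, ENNReal.mul_div_cancel hs0 hs]
  obtain ⟨h, hcomp, hclose, hcont, -⟩ := hf'.exists_hasCompactSupport_lintegral_sub_le hδ0
  have hunif := hcomp.uniformContinuous_of_continuous hcont
  obtain ⟨r, hr, hrδ⟩ := EMetric.uniformContinuous_iff.1 hunif δ (pos_iff_ne_zero.2 hδ0)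
  have hev : ∀ᶠ n in atTop, ENNReal.ofReal (β n) < r := by
    have := (ENNReal.continuous_ofReal.tendsto 0).comp hβ
    rw [ENNReal.ofReal_zero] at this
    exact this.eventually_lt_const hr
  filter_upwards [hev] with n hn
  refine (hle n).trans (le_trans ?_ hδ)
  have hFm : Measurable fun x => ‖f' x - h x‖ₑ := (hf'm.sub hcont.measurable).enorm
  have hpt : ∀ g q, ‖f' (φ g q) - f' (ψ g q)‖ₑ * ENNReal.ofReal (w n g q) ≤
      ‖f' (φ g q) - h (φ g q)‖ₑ * ENNReal.ofReal (w n g q) + δ * ENNReal.ofReal (w n g q) +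
        ‖f' (ψ g q) - h (ψ g q)‖ₑ * ENNReal.ofReal (w n g q) := by
    intro g q
    rcases (hw n g q).eq_or_lt with h0 | hpos
    · simp [← h0]
    have h1 : edist (h (φ g q)) (h (ψ g q)) ≤ δ := by
      refine (hrδ ?_).le
      rw [edist_dist]
      exact (ENNReal.ofReal_le_ofReal (hdist n g q hpos)).trans_lt hn
    rw [← add_mul, ← add_mul]
    gcongr
    rw [← edist_eq_enorm_sub, ← edist_eq_enorm_sub, ← edist_eq_enorm_sub]
    calc edist (f' (φ g q)) (f' (ψ g q))
        ≤ edist (f' (φ g q)) (h (φ g q)) + edist (h (φ g q)) (h (ψ g q))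
          + edist (h (ψ g q)) (f' (ψ g q)) := edist_triangle4 _ _ _ _
      _ ≤ _ := by rw [edist_comm (h (ψ g q))]; gcongr
  have hwm' : ∀ g, Measurable fun q => ENNReal.ofReal (w n g q) := fun g =>
    (hwm n g).ennreal_ofReal
  calc ∑' g, ∫⁻ q, ‖f' (φ g q) - f' (ψ g q)‖ₑ * ENNReal.ofReal (w n g q) ∂(μ.prod ν)
      ≤ ∑' g, ∫⁻ q, (‖f' (φ g q) - h (φ g q)‖ₑ * ENNReal.ofReal (w n g q) +
          δ * ENNReal.ofReal (w n g q) +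
          ‖f' (ψ g q) - h (ψ g q)‖ₑ * ENNReal.ofReal (w n g q)) ∂(μ.prod ν) :=
        ENNReal.tsum_le_tsum fun g => lintegral_mono (hpt g)
    _ = (∑' g, ∫⁻ q, ‖f' (φ g q) - h (φ g q)‖ₑ * ENNReal.ofReal (w n g q) ∂(μ.prod ν)) +
          δ * (∑' g, ∫⁻ q, ENNReal.ofReal (w n g q) ∂(μ.prod ν)) +
          ∑' g, ∫⁻ q, ‖f' (ψ g q) - h (ψ g q)‖ₑ * ENNReal.ofReal (w n g q) ∂(μ.prod ν) := by
        rw [← ENNReal.tsum_mul_left, ← ENNReal.tsum_add, ← ENNReal.tsum_add]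
        refine tsum_congr fun g => ?_
        have hψm : Measurable fun q => ‖f' (ψ g q) - h (ψ g q)‖ₑ * ENNReal.ofReal (w n g q) :=
          (hFm.comp (hψ g)).mul (hwm' g)
        rw [lintegral_add_right _ hψm,
          lintegral_add_right _ ((hwm' g).const_mul δ), lintegral_const_mul _ (hwm' g)]
    _ ≤ K * δ + δ * 1 + L * δ := by
        gcongr
        · exact (Hφ n _ hFm).trans (by gcongr)
        · exact hmass n
        · exact (Hψ n _ hFm).trans (by gcongr)
    _ = _ := by rw [mul_one]

/-! ### Translations, the action, and the mass bounds -/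

/-- Since `θ` is equivalent to Lebesgue measure, its translates are absolutely continuous with
respect to `θ`, so the bound on the Radon–Nikodym derivatives bounds the translates themselves. -/
theorem lintegral_add_le_of_shift (θ : Measure ℝ) [IsProbabilityMeasure θ]
    (hθeq : θ ≪ (volume : Measure ℝ) ∧ (volume : Measure ℝ) ≪ θ) (C C' : ℝ)
    (hθshift : ∀ t₀ : ℝ, |t₀| ≤ C →
      ∀ᵐ r ∂θ, (θ.map (fun s => s - t₀)).rnDeriv θ r ≤ ENNReal.ofReal C')
    (G : ℝ → ℝ≥0∞) (hG : Measurable G) (s : ℝ) (hs : |s| ≤ C) :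
    ∫⁻ t, G (t + s) ∂θ ≤ ENNReal.ofReal C' * ∫⁻ t, G t ∂θ := by
  have hmeas : Measurable fun t : ℝ => t - -s := measurable_id.sub_const _
  have hac : θ.map (fun t => t - -s) ≪ θ := by
    have h1 : (volume : Measure ℝ).map (fun t => t - -s) = volume :=
      (measurePreserving_sub_right volume (-s)).map_eq
    have h2 := hθeq.1.map hmeas
    rw [h1] at h2
    exact h2.trans hθeq.2
  have : IsProbabilityMeasure (θ.map fun t => t - -s) :=
    Measure.isProbabilityMeasure_map hmeas.aemeasurable
  calc ∫⁻ t, G (t + s) ∂θ = ∫⁻ t, G t ∂(θ.map fun t => t - -s) := by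
        rw [lintegral_map hG hmeas]; simp
    _ = ∫⁻ t, (θ.map fun t => t - -s).rnDeriv θ t * G t ∂θ :=
        (lintegral_rnDeriv_mul hac hG.aemeasurable).symm
    _ ≤ ∫⁻ t, ENNReal.ofReal C' * G t ∂θ := by
        apply lintegral_mono_ae
        filter_upwards [hθshift (-s) (by rwa [abs_neg])] with t ht
        gcongr
    _ = _ := lintegral_const_mul _ hG

/-- Change of variables `b ↦ g • b` for a nonsingular action. -/
theorem lintegral_smul_mul_rnD {Γ B : Type} [Group Γ] [MeasurableSpace B]
    (ν : Measure B) [IsProbabilityMeasure ν] (a : Γ → B → B)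
    (hact : IsNonsingularAction a ν) (g : Γ) (G : B → ℝ≥0∞) (hG : Measurable G) :
    ∫⁻ b, G (a g b) * rnD a ν g b ∂ν = ∫⁻ b, G b ∂ν := by
  obtain ⟨hm, h1, hmul, hac⟩ := hact
  have : IsProbabilityMeasure (ν.map (a g⁻¹)) :=
    Measure.isProbabilityMeasure_map (hm _).aemeasurable
  have hGm : Measurable fun b => G (a g b) := hG.comp (hm g)
  unfold rnD
  rw [lintegral_congr fun b => mul_comm (G (a g b)) ((ν.map (a g⁻¹)).rnDeriv ν b),
    lintegral_rnDeriv_mul (hac g⁻¹).1 hGm.aemeasurable, lintegral_map hGm (hm _)]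
  simp_rw [← hmul, mul_inv_cancel, h1]

/-- The form in which each of the three bounds of condition (4) is used. -/
theorem tsum_lintegral_mul_le {Γ B D : Type} [Countable Γ] [MeasurableSpace B] [MeasurableSpace D]
    (ν : Measure B) (ν' : Measure D) [SFinite ν'] (c : ℝ≥0∞) (Φ : B → ℝ≥0∞) (hΦ : Measurable Φ)
    (k : Γ → B → D → ℝ≥0∞) (hk : ∀ g, Measurable fun p : B × D => k g p.1 p.2)
    (hkc : ∀ᵐ x ∂ν, ∫⁻ y, ∑' g, k g x y ∂ν' ≤ c) :
    ∑' g, ∫⁻ x, Φ x * ∫⁻ y, k g x y ∂ν' ∂ν ≤ c * ∫⁻ x, Φ x ∂ν := by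
  have hm : ∀ g, Measurable fun x => Φ x * ∫⁻ y, k g x y ∂ν' := fun g =>
    hΦ.mul (hk g).lintegral_prod_right'
  rw [← lintegral_tsum fun g => (hm g).aemeasurable, ← lintegral_const_mul _ hΦ]
  apply lintegral_mono_ae
  filter_upwards [hkc] with x hx
  have hkx : ∀ g, Measurable fun y => k g x y := fun g => (hk g).comp measurable_prodMk_left
  rw [ENNReal.tsum_mul_left, ← lintegral_tsum fun g => (hkx g).aemeasurable, mul_comm]
  gcongr

/-- Integrates out the fibre coordinate `t ∈ ℝ`: where the kernel `u` is positive, the translation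
`s` is bounded by `C`, so it costs at most the factor `C'`. -/
theorem lintegral_fiber_le {B : Type} [MeasurableSpace B] (ν : Measure B) [IsProbabilityMeasure ν]
    (θ : Measure ℝ) [IsProbabilityMeasure θ]
    (hθeq : θ ≪ (volume : Measure ℝ) ∧ (volume : Measure ℝ) ≪ θ) (C C' : ℝ)
    (hθshift : ∀ t₀ : ℝ, |t₀| ≤ C →
      ∀ᵐ r ∂θ, (θ.map (fun s => s - t₀)).rnDeriv θ r ≤ ENNReal.ofReal C')
    (u : B → B → ℝ) (hu : Measurable fun p : B × B => u p.1 p.2) (hu0 : ∀ b b', 0 ≤ u b b')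
    (c : B → B → B) (hc : Measurable fun p : B × B => c p.1 p.2)
    (s : B → ℝ) (hs : Measurable s)
    (hsC : ∀ᵐ b ∂ν, ∀ᵐ b' ∂ν, 0 < u b b' → |s b'| ≤ C)
    (F : B × ℝ → ℝ≥0∞) (hF : Measurable F) :
    ∫⁻ q : (B × ℝ) × B, F (c q.1.1 q.2, q.1.2 + s q.2) * ENNReal.ofReal (u q.1.1 q.2)
        ∂((ν.prod θ).prod ν) ≤
      ENNReal.ofReal C' *
        ∫⁻ b, ∫⁻ b', (∫⁻ t, F (c b b', t) ∂θ) * ENNReal.ofReal (u b b') ∂ν ∂ν := by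
  have hcm : Measurable fun q : (B × ℝ) × B => c q.1.1 q.2 :=
    hc.comp ((measurable_fst.comp measurable_fst).prodMk measurable_snd)
  have hum : Measurable fun q : (B × ℝ) × B => u q.1.1 q.2 :=
    hu.comp ((measurable_fst.comp measurable_fst).prodMk measurable_snd)
  have hGm : Measurable fun q : (B × ℝ) × B =>
      F (c q.1.1 q.2, q.1.2 + s q.2) * ENNReal.ofReal (u q.1.1 q.2) :=
    (hF.comp (hcm.prodMk ((measurable_snd.comp measurable_fst).add
      (hs.comp measurable_snd)))).mul hum.ennreal_ofReal
  rw [lintegral_prod _ hGm.aemeasurable, lintegral_prod _ hGm.lintegral_prod_right'.aemeasurable]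
  have hFbar : Measurable fun b => ∫⁻ t, F (b, t) ∂θ := hF.lintegral_prod_right'
  have hIm : Measurable fun p : B × B =>
      (∫⁻ t, F (c p.1 p.2, t) ∂θ) * ENNReal.ofReal (u p.1 p.2) :=
    (hFbar.comp hc).mul hu.ennreal_ofReal
  rw [← lintegral_const_mul _ hIm.lintegral_prod_right']
  apply lintegral_mono_ae
  filter_upwards [hsC] with b hb
  rw [lintegral_lintegral_swap, ← lintegral_const_mul]
  · apply lintegral_mono_ae
    filter_upwards [hb] with b' hb'
    have hFt : Measurable fun t => F (c b b', t) := hF.comp measurable_prodMk_left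
    rcases (hu0 b b').eq_or_lt with h0 | hpos
    · simp [← h0]
    · have hFs : Measurable fun t => F (c b b', t + s b') :=
        hFt.comp (measurable_id.add_const (s b'))
      rw [lintegral_mul_const _ hFs, ← mul_assoc]
      gcongr
      exact lintegral_add_le_of_shift θ hθeq C C' hθshift (fun t => F (c b b', t)) hFt _ (hb' hpos)
  · exact hIm.comp measurable_prodMk_left
  · apply Measurable.aemeasurable
    exact hGm.comp ((measurable_const.prodMk measurable_fst).prodMk measurable_snd)

/-! ### The operators of the admissible family -/

/-- Lemma 3.6 of the paper: for every `f ∈ L¹(ν × θ)`,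
`‖f − W_n f‖₁ → 0` and `‖X_n f − Y_n f‖₁ → 0`. -/
theorem stmt6 {Γ B : Type} [Group Γ] [Countable Γ] [MetricSpace B] [CompactSpace B]
    [MeasurableSpace B] [BorelSpace B]
    (ν : Measure B) [IsProbabilityMeasure ν] (a : Γ → B → B)
    (hact : IsNonsingularAction a ν)
    (R : Γ → B → ℝ) (hRmeas : ∀ g : Γ, Measurable (R g))
    (hRcoc : ∀ (g₁ g₂ : Γ) (b : B), R (g₂ * g₁) b = R g₂ (a g₁ b) + R g₁ b)
    (hRrn : ∀ g : Γ, ∀ᵐ b ∂ν, ENNReal.ofReal (Real.exp (R g b)) = rnD a ν g b)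
    (Υ : ℕ → Γ → B → B → ℝ) (C : ℝ) (hadm : IsAdmissibleFamily a ν R Υ C)
    (θ : Measure ℝ) (hθprob : IsProbabilityMeasure θ)
    (hθeq : θ ≪ (volume : Measure ℝ) ∧ (volume : Measure ℝ) ≪ θ)
    (C' : ℝ) (hC' : 0 < C')
    (hθshift : ∀ t₀ : ℝ, |t₀| ≤ C →
      ∀ᵐ r ∂θ, (θ.map (fun s => s - t₀)).rnDeriv θ r ≤ ENNReal.ofReal C')
    (f : B × ℝ → ℝ) (hf : Integrable f (ν.prod θ)) :
    Tendsto (fun n => eLpNorm (fun p => f p - Wop ν Υ n f p) 1 (ν.prod θ))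
      atTop (nhds 0) ∧
    Tendsto (fun n => eLpNorm (fun p => Xop a ν R Υ n f p - Yop a ν R Υ n f p) 1 (ν.prod θ))
      atTop (nhds 0) := by
  obtain ⟨hC0, hΥ0, hΥm, hmass, ⟨β, hβ, hdist⟩, hRC, C₄, hC₄, h4a, h4b, h4c⟩ := hadm
  have hact' := hact
  obtain ⟨ham, ha1, hamul, -⟩ := hact'
  have : SecondCountableTopology B := inferInstance
  let w : ℕ → Γ → (B × ℝ) × B → ℝ := fun n g q => Υ n g q.1.1 q.2
  have hfstm : Measurable fun q : (B × ℝ) × B => q.1.1 := measurable_fst.comp measurable_fst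
  have htm : Measurable fun q : (B × ℝ) × B => q.1.2 := measurable_snd.comp measurable_fst
  have hsndm : Measurable fun q : (B × ℝ) × B => q.2 := measurable_snd
  have hwm : ∀ n g, Measurable (w n g) := fun n g => (hΥm n g).comp (hfstm.prodMk hsndm)
  have hw0 : ∀ n g q, 0 ≤ w n g q := fun n g q => hΥ0 _ _ _ _
  have hΥe : ∀ n g, Measurable fun p : B × B => ENNReal.ofReal (Υ n g p.1 p.2) := fun n g =>
    (hΥm n g).ennreal_ofReal
  have hRb : ∀ n g, ∀ᵐ b ∂ν, ∀ᵐ b' ∂ν, 0 < Υ n g b b' → |R g⁻¹ b'| ≤ C := by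
    intro n g
    filter_upwards [hRC n g] with b hb
    filter_upwards [hb] with b' hb' hpos
    linarith [hb' hpos, abs_nonneg (R g⁻¹ b)]
  -- `W_n` does not translate the fibre; it is treated as the zero translation
  have hzero : ∀ n g, ∀ᵐ b ∂ν, ∀ᵐ b' ∂ν, 0 < Υ n g b b' → |(fun _ : B => (0 : ℝ)) b'| ≤ C := by
    intro n g
    filter_upwards with b
    filter_upwards with b' _
    simpa using hC0.le
  have hFbar : ∀ F : B × ℝ → ℝ≥0∞, Measurable F → Measurable fun b => ∫⁻ t, F (b, t) ∂θ :=
    fun F hF => hF.lintegral_prod_right'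
  have hmass' : ∀ n, ∑' g, ∫⁻ q, ENNReal.ofReal (w n g q) ∂((ν.prod θ).prod ν) ≤ 1 := by
    intro n
    simp_rw [fun g => lintegral_prod (μ := ν.prod θ) (ν := ν) _
      (hwm n g).ennreal_ofReal.aemeasurable]
    rw [← lintegral_tsum fun g => ((hwm n g).ennreal_ofReal.lintegral_prod_right').aemeasurable]
    simp [w, hmass]
  have H0 : ∀ n, ∀ F : B × ℝ → ℝ≥0∞, Measurable F →
      ∑' g, ∫⁻ q, F q.1 * ENNReal.ofReal (w n g q) ∂((ν.prod θ).prod ν) ≤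
        1 * ∫⁻ x, F x ∂(ν.prod θ) := by
    intro n F hF
    have hm : ∀ g, Measurable fun q : (B × ℝ) × B => F q.1 * ENNReal.ofReal (w n g q) :=
      fun g => (hF.comp measurable_fst).mul (hwm n g).ennreal_ofReal
    simp_rw [fun g => lintegral_prod (μ := ν.prod θ) (ν := ν) _ (hm g).aemeasurable]
    rw [← lintegral_tsum fun g => (hm g).lintegral_prod_right'.aemeasurable, one_mul]
    apply le_of_eq
    refine lintegral_congr fun p => ?_
    have : ∀ g, ∫⁻ y, F p * ENNReal.ofReal (Υ n g p.1 y) ∂ν =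
        F p * ∫⁻ y, ENNReal.ofReal (Υ n g p.1 y) ∂ν := fun g =>
      lintegral_const_mul _ ((hΥe n g).comp measurable_prodMk_left)
    simp only [w, this, ENNReal.tsum_mul_left, hmass, mul_one]
  have HW : ∀ n, ∀ F : B × ℝ → ℝ≥0∞, Measurable F →
      ∑' g, ∫⁻ q, F (q.2, q.1.2) * ENNReal.ofReal (w n g q) ∂((ν.prod θ).prod ν) ≤
        (ENNReal.ofReal C' * ENNReal.ofReal C₄) * ∫⁻ x, F x ∂(ν.prod θ) := by
    intro n F hF
    have h1 : ∀ g, _ := fun g => lintegral_fiber_le ν θ hθeq C C' hθshift (Υ n g) (hΥm n g)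
      (hΥ0 n g) (fun _ b' => b') measurable_snd (fun _ => 0) measurable_const (hzero n g) F hF
    simp only [add_zero] at h1
    refine (ENNReal.tsum_le_tsum h1).trans ?_
    rw [ENNReal.tsum_mul_left, mul_assoc]
    gcongr
    have hm : ∀ g, Measurable fun p : B × B =>
        (∫⁻ t, F (p.2, t) ∂θ) * ENNReal.ofReal (Υ n g p.1 p.2) := fun g =>
      ((hFbar F hF).comp measurable_snd).mul (hΥe n g)
    calc ∑' g, ∫⁻ b, ∫⁻ b', (∫⁻ t, F (b', t) ∂θ) * ENNReal.ofReal (Υ n g b b') ∂ν ∂ν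
        = ∑' g, ∫⁻ b', ∫⁻ b, (∫⁻ t, F (b', t) ∂θ) * ENNReal.ofReal (Υ n g b b') ∂ν ∂ν :=
          tsum_congr fun g => lintegral_lintegral_swap (hm g).aemeasurable
      _ = ∑' g, ∫⁻ b', (∫⁻ t, F (b', t) ∂θ) * ∫⁻ b, ENNReal.ofReal (Υ n g b b') ∂ν ∂ν :=
          tsum_congr fun g => lintegral_congr fun b' =>
            lintegral_const_mul _ ((hΥe n g).comp measurable_prodMk_right)
      _ ≤ ENNReal.ofReal C₄ * ∫⁻ b', ∫⁻ t, F (b', t) ∂θ ∂ν :=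
          tsum_lintegral_mul_le ν ν _ _ (hFbar F hF) (fun g b' b => ENNReal.ofReal (Υ n g b b'))
            (fun g => (hΥe n g).comp measurable_swap) (h4a n)
      _ = _ := by rw [lintegral_prod _ hF.aemeasurable]
  have hrnm : ∀ g, Measurable (rnD a ν g) := fun g => Measure.measurable_rnDeriv _ _
  have hcancel : ∀ g b, a g⁻¹ (a g b) = b := fun g b => by rw [← hamul, inv_mul_cancel, ha1]
  have HX : ∀ n, ∀ F : B × ℝ → ℝ≥0∞, Measurable F →
      ∑' g, ∫⁻ q, F (a g⁻¹ q.2, q.1.2 + R g⁻¹ q.2) * ENNReal.ofReal (w n g q)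
          ∂((ν.prod θ).prod ν) ≤
        (ENNReal.ofReal C' * ENNReal.ofReal C₄) * ∫⁻ x, F x ∂(ν.prod θ) := by
    intro n F hF
    have h1 : ∀ g, _ := fun g => lintegral_fiber_le ν θ hθeq C C' hθshift (Υ n g) (hΥm n g)
      (hΥ0 n g) (fun _ b' => a g⁻¹ b') ((ham g⁻¹).comp measurable_snd) (R g⁻¹) (hRmeas _)
      (hRb n g) F hF
    refine (ENNReal.tsum_le_tsum h1).trans ?_
    rw [ENNReal.tsum_mul_left, mul_assoc]
    gcongr
    have hm : ∀ g, Measurable fun p : B × B =>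
        (∫⁻ t, F (a g⁻¹ p.2, t) ∂θ) * ENNReal.ofReal (Υ n g p.1 p.2) := fun g =>
      ((hFbar F hF).comp ((ham _).comp measurable_snd)).mul (hΥe n g)
    have hm2 : ∀ g, Measurable fun p : B × B =>
        ENNReal.ofReal (Υ n g p.1 (a g p.2)) * rnD a ν g p.2 := fun g =>
      ((hΥe n g).comp (measurable_fst.prodMk ((ham g).comp measurable_snd))).mul
        ((hrnm g).comp measurable_snd)
    calc ∑' g, ∫⁻ b, ∫⁻ b', (∫⁻ t, F (a g⁻¹ b', t) ∂θ) * ENNReal.ofReal (Υ n g b b') ∂ν ∂ν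
        = ∑' g, ∫⁻ b, ∫⁻ b', (∫⁻ t, F (b', t) ∂θ) *
            (ENNReal.ofReal (Υ n g b (a g b')) * rnD a ν g b') ∂ν ∂ν := by
          refine tsum_congr fun g => lintegral_congr fun b => ?_
          rw [← lintegral_smul_mul_rnD ν a hact g (fun b' =>
            (∫⁻ t, F (a g⁻¹ b', t) ∂θ) * ENNReal.ofReal (Υ n g b b'))
            ((hm g).comp measurable_prodMk_left)]
          simp_rw [hcancel, mul_assoc]
      _ = ∑' g, ∫⁻ b', (∫⁻ t, F (b', t) ∂θ) *
            ∫⁻ b, ENNReal.ofReal (Υ n g b (a g b')) * rnD a ν g b' ∂ν ∂ν := by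
          refine tsum_congr fun g => ?_
          rw [lintegral_lintegral_swap
            (((hFbar F hF).comp measurable_snd).mul (hm2 g)).aemeasurable]
          exact lintegral_congr fun b' =>
            lintegral_const_mul _ ((hm2 g).comp measurable_prodMk_right)
      _ ≤ ENNReal.ofReal C₄ * ∫⁻ b', ∫⁻ t, F (b', t) ∂θ ∂ν :=
          tsum_lintegral_mul_le ν ν _ _ (hFbar F hF)
            (fun g b' b => ENNReal.ofReal (Υ n g b (a g b')) * rnD a ν g b')
            (fun g => (hm2 g).comp measurable_swap) (h4b n)
      _ = _ := by rw [lintegral_prod _ hF.aemeasurable]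
  have HY : ∀ n, ∀ F : B × ℝ → ℝ≥0∞, Measurable F →
      ∑' g, ∫⁻ q, F (a g⁻¹ q.1.1, q.1.2 + R g⁻¹ q.2) * ENNReal.ofReal (w n g q)
          ∂((ν.prod θ).prod ν) ≤
        (ENNReal.ofReal C' * ENNReal.ofReal C₄) * ∫⁻ x, F x ∂(ν.prod θ) := by
    intro n F hF
    have h1 : ∀ g, _ := fun g => lintegral_fiber_le ν θ hθeq C C' hθshift (Υ n g) (hΥm n g)
      (hΥ0 n g) (fun b _ => a g⁻¹ b) ((ham g⁻¹).comp measurable_fst) (R g⁻¹) (hRmeas _)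
      (hRb n g) F hF
    refine (ENNReal.tsum_le_tsum h1).trans ?_
    rw [ENNReal.tsum_mul_left, mul_assoc]
    gcongr
    have hm : ∀ g, Measurable fun p : B × B =>
        (∫⁻ t, F (a g⁻¹ p.1, t) ∂θ) * ENNReal.ofReal (Υ n g p.1 p.2) := fun g =>
      ((hFbar F hF).comp ((ham _).comp measurable_fst)).mul (hΥe n g)
    have hm2 : ∀ g, Measurable fun p : B × B =>
        ENNReal.ofReal (Υ n g (a g p.1) p.2) * rnD a ν g p.1 := fun g =>
      ((hΥe n g).comp (((ham g).comp measurable_fst).prodMk measurable_snd)).mul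
        ((hrnm g).comp measurable_fst)
    calc ∑' g, ∫⁻ b, ∫⁻ b', (∫⁻ t, F (a g⁻¹ b, t) ∂θ) * ENNReal.ofReal (Υ n g b b') ∂ν ∂ν
        = ∑' g, ∫⁻ b, (∫⁻ t, F (b, t) ∂θ) *
            ∫⁻ b', ENNReal.ofReal (Υ n g (a g b) b') * rnD a ν g b ∂ν ∂ν := by
          refine tsum_congr fun g => ?_
          rw [← lintegral_smul_mul_rnD ν a hact g (fun b => ∫⁻ b',
            (∫⁻ t, F (a g⁻¹ b, t) ∂θ) * ENNReal.ofReal (Υ n g b b') ∂ν)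
            (hm g).lintegral_prod_right']
          refine lintegral_congr fun b => ?_
          have hm' : Measurable fun b' => ENNReal.ofReal (Υ n g (a g b) b') :=
            (hΥe n g).comp measurable_prodMk_left
          rw [hcancel, lintegral_const_mul _ hm', lintegral_mul_const _ hm', mul_assoc]
      _ ≤ ENNReal.ofReal C₄ * ∫⁻ b, ∫⁻ t, F (b, t) ∂θ ∂ν :=
          tsum_lintegral_mul_le ν ν _ _ (hFbar F hF)
            (fun g b b' => ENNReal.ofReal (Υ n g (a g b) b') * rnD a ν g b) hm2 (h4c n)
      _ = _ := by rw [lintegral_prod _ hF.aemeasurable]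
  have hK : ENNReal.ofReal C' * ENNReal.ofReal C₄ ≠ ∞ := by finiteness
  constructor
  · have key := tendsto_kernelOp_sub (ν.prod θ) ν w hwm hw0 hmass' (fun _ q => q.1)
      (fun _ q => (q.2, q.1.2)) (fun _ => measurable_fst) (fun _ => hsndm.prodMk htm)
      1 _ ENNReal.one_ne_top hK H0 HW β hβ (fun n g q hq => by
        rw [Prod.dist_eq, dist_self]
        exact max_le (hdist n g _ _ hq).1 (dist_nonneg.trans (hdist n g _ _ hq).1)) f hf
    refine key.congr fun n => congrArg (fun h => eLpNorm h 1 (ν.prod θ)) (funext fun p => ?_)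
    -- `f` itself is the operator with placement map `q.1`, the kernel having total mass one
    refine congrArg (· - Wop ν Υ n f p) ?_
    have hint : ∀ g, ∫ y, Υ n g p.1 y ∂ν = (∫⁻ y, ENNReal.ofReal (Υ n g p.1 y) ∂ν).toReal :=
      fun g => integral_eq_lintegral_of_nonneg_ae (ae_of_all _ fun y => hΥ0 n g p.1 y)
        ((hΥm n g).comp (measurable_prodMk_left (x := p.1))).aestronglyMeasurable
    have hne : ∀ g, ∫⁻ y, ENNReal.ofReal (Υ n g p.1 y) ∂ν ≠ ∞ := fun g =>
      ENNReal.ne_top_of_tsum_ne_top (by rw [hmass n p.1]; exact ENNReal.one_ne_top) g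
    simp only [w, integral_const_mul, tsum_mul_left, hint]
    rw [← ENNReal.tsum_toReal_eq hne, hmass]
    simp
  · exact tendsto_kernelOp_sub (ν.prod θ) ν w hwm hw0 hmass'
      (fun g q => (a g⁻¹ q.2, q.1.2 + R g⁻¹ q.2)) (fun g q => (a g⁻¹ q.1.1, q.1.2 + R g⁻¹ q.2))
      (fun g => ((ham _).comp hsndm).prodMk (htm.add ((hRmeas _).comp hsndm)))
      (fun g => ((ham _).comp hfstm).prodMk (htm.add ((hRmeas _).comp hsndm)))
      _ _ hK hK HX HY β hβ (fun n g q hq => by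
        rw [Prod.dist_eq, dist_self, dist_comm]
        exact max_le (hdist n g _ _ hq).2 (dist_nonneg.trans (hdist n g _ _ hq).2)) f hf
end
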